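/- arXiv:1708.01968 — 8 statements merged into one kernel-verified Lean document; each statement's English description precedes it below -/
import Mathlib

section
/- Let R be a countable commutative unital ring in which 2 is invertible, and let m be a positive integer such that every proper ideal of R has index at least m. Let G be a group generated by the images of four maps x_α, x_β, x_{α+β}, x_{α+2β} : R → G, each additive (x_γ(r+s) = x_γ(r)·x_γ(s) for all r, s ∈ R), satisfying for all r, s ∈ R the relations [x_α(r), x_β(s)] = x_{α+β}(rs)·x_{α+2β}(rs²) and [x_{α+β}(r), x_β(s)] = x_{α+2β}(2rs), and such that each of the pairs of families (x_α, x_{α+β}), (x_α, x_{α+2β}), (x_β, x_{α+2β}), (x_{α+β}, x_{α+2β}) commutes elementwise (so that H = x_{α+2β}(R) is central in G). Set X = x_α(R) and Y = x_β(R). Then every irreducible unitary representation V of G such that V^X ≠ 0, V^Y ≠ 0 and H acts nontrivially on V has complex dimension at least m (i.e., contains m linearly independent vectors). -/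
/-- Lemma 4.2(b), case B₂. -/
theorem stmt_2 (R : Type) [CommRing R] [Countable R]
    (h2 : IsUnit (2 : R))
    (m : ℕ) (hm : 0 < m)
    (hIdeals : ∀ I : Ideal R, I ≠ ⊤ → (m : Cardinal) ≤ Cardinal.mk (R ⧸ I))
    (G : Type) [Group G]
    (xa xb xab xa2b : R → G)
    (haddA : ∀ r s : R, xa (r + s) = xa r * xa s)
    (haddB : ∀ r s : R, xb (r + s) = xb r * xb s)
    (haddAB : ∀ r s : R, xab (r + s) = xab r * xab s)
    (haddA2B : ∀ r s : R, xa2b (r + s) = xa2b r * xa2b s)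
    (hgen : Subgroup.closure
      (Set.range xa ∪ Set.range xb ∪ Set.range xab ∪ Set.range xa2b) = ⊤)
    -- [x_α(r), x_β(s)] = x_{α+β}(rs)·x_{α+2β}(rs²)
    (hrel1 : ∀ r s : R,
      (xa r)⁻¹ * (xb s)⁻¹ * xa r * xb s = xab (r * s) * xa2b (r * s ^ 2))
    -- [x_{α+β}(r), x_β(s)] = x_{α+2β}(2rs)
    (hrel2 : ∀ r s : R,
      (xab r)⁻¹ * (xb s)⁻¹ * xab r * xb s = xa2b (2 * r * s))
    -- the pairs (x_α, x_{α+β}), (x_α, x_{α+2β}), (x_β, x_{α+2β}), (x_{α+β}, x_{α+2β})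
    -- commute elementwise
    (hc1 : ∀ r s : R, xa r * xab s = xab s * xa r)
    (hc2 : ∀ r s : R, xa r * xa2b s = xa2b s * xa r)
    (hc3 : ∀ r s : R, xb r * xa2b s = xa2b s * xb r)
    (hc4 : ∀ r s : R, xab r * xa2b s = xa2b s * xab r)
    (V : Type) [NormedAddCommGroup V] [InnerProductSpace ℂ V] [CompleteSpace V]
    (π : G →* (V ≃ₗᵢ[ℂ] V))
    (hnt : Nontrivial V)
    (hirr : ∀ U : Submodule ℂ V, IsClosed (U : Set V) →
      (∀ g : G, ∀ u ∈ U, π g u ∈ U) → U = ⊥ ∨ U = ⊤)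
    -- V^X ≠ 0 with X = x_α(R)
    (hX : ∃ v : V, v ≠ 0 ∧ ∀ r : R, π (xa r) v = v)
    -- V^Y ≠ 0 with Y = x_β(R)
    (hY : ∃ w : V, w ≠ 0 ∧ ∀ r : R, π (xb r) w = w)
    -- H = x_{α+2β}(R) acts nontrivially on V
    (hH : ∃ (r : R) (v : V), π (xa2b r) v ≠ v) :
    ∃ f : Fin m → V, LinearIndependent ℂ f := by
  by_cases hfd : FiniteDimensional ℂ V
  swap
  · have hle : (m : Cardinal) ≤ Module.rank ℂ V := by
      have h1 : Cardinal.aleph0 ≤ Module.rank ℂ V := by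
        by_contra h
        exact hfd (Module.rank_lt_aleph0_iff.mp (not_le.mp h))
      exact le_trans (Cardinal.natCast_le_aleph0) h1
    exact exists_linearIndependent_of_le_rank hle
  obtain ⟨w, hw0, hw⟩ := hY
  have hcent : ∀ (t : R) (g : G), g * xa2b t = xa2b t * g := by
    intro t g
    have hg : g ∈ Subgroup.closure
      (Set.range xa ∪ Set.range xb ∪ Set.range xab ∪ Set.range xa2b) := by
      rw [hgen]; trivial
    have hle : Subgroup.closure
      (Set.range xa ∪ Set.range xb ∪ Set.range xab ∪ Set.range xa2b)
        ≤ Subgroup.centralizer {xa2b t} := by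
      rw [Subgroup.closure_le]
      rintro x (((⟨r, rfl⟩ | ⟨r, rfl⟩) | ⟨r, rfl⟩) | ⟨r, rfl⟩) <;>
        simp only [SetLike.mem_coe, Subgroup.mem_centralizer_singleton_iff]
      · exact hc2 r t
      · exact hc3 r t
      · exact hc4 r t
      · rw [← haddA2B, ← haddA2B, add_comm]
    exact Subgroup.mem_centralizer_singleton_iff.mp (hle hg)
  -- Schur's lemma
  have hsc : ∀ t : R, ∃ c : ℂ, ∀ v : V, π (xa2b t) v = c • v := by
    intro t
    let T : Module.End ℂ V := (π (xa2b t)).toLinearEquiv.toLinearMap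
    have hT : ∀ v, T v = π (xa2b t) v := fun v => rfl
    obtain ⟨c, hc⟩ := Module.End.exists_eigenvalue T
    refine ⟨c, ?_⟩
    have hor := hirr (Module.End.eigenspace T c) (Submodule.closed_of_finiteDimensional _) (by
      intro g u hu
      rw [Module.End.mem_eigenspace_iff, hT] at hu ⊢
      have h1 : π (xa2b t) (π g u) = π g (π (xa2b t) u) := by
        have := congrArg (fun x => π x u) (hcent t g)
        simpa using this.symm
      rw [h1, hu, map_smul])
    rcases hor with h | h
    · exact absurd h hc
    · intro v
      have hv : v ∈ Module.End.eigenspace T c := by rw [h]; trivial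
      rwa [Module.End.mem_eigenspace_iff, hT] at hv
  choose ψ hψ using hsc
  have hz0 : xa2b 0 = 1 := by
    have := haddA2B 0 0
    simpa using this
  let I : Ideal R :=
    { carrier := {r | ∀ s, π (xa2b (2 * r * s)) = 1}
      add_mem' := by
        intro a b ha hb s
        have : 2 * (a + b) * s = 2 * a * s + 2 * b * s := by ring
        rw [this, haddA2B, map_mul, ha, hb, one_mul]
      zero_mem' := by
        intro s
        simp [hz0]
      smul_mem' := by
        intro c a ha s
        have : 2 * (c • a) * s = 2 * a * (c * s) := by rw [smul_eq_mul]; ring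
        rw [this]; exact ha _ }
  have hI : I ≠ ⊤ := by
    intro h
    have h1 : (1 : R) ∈ I := by rw [h]; trivial
    obtain ⟨r, v, hrv⟩ := hH
    obtain ⟨u, hu⟩ := h2
    have h3 : π (xa2b (2 * 1 * (↑u⁻¹ * r))) = 1 := h1 _
    apply hrv
    have h4 : (2 : R) * 1 * (↑u⁻¹ * r) = r := by
      rw [← hu, mul_one, ← mul_assoc, Units.mul_inv, one_mul]
    rw [h4] at h3
    rw [h3]; rfl
  have hcard := hIdeals I hI
  rw [← Cardinal.mk_fin m] at hcard
  obtain ⟨e⟩ := Cardinal.le_def _ _ |>.mp hcard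
  choose q hq using fun i : Fin m => Ideal.Quotient.mk_surjective (I := I) (e i)
  have heig : ∀ r s : R, ψ (2 * r * s) • π (xb s) (π (xab r) w) = π (xab r) w := by
    intro r s
    have h1 : xb s * xab r * xa2b (2 * r * s) = xab r * xb s := by
      rw [← hrel2]; group
    have h3 := congrArg (fun x => π x w) h1
    simp only [map_mul, LinearIsometryEquiv.coe_mul, Function.comp_apply, hψ, hw, map_smul] at h3
    exact h3
  refine ⟨fun i => π (xab (q i)) w, linearIndependent_of_ne_zero_of_inner_eq_zero (𝕜 := ℂ) ?_ ?_⟩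
  · intro i h
    exact hw0 ((LinearIsometryEquiv.map_eq_zero_iff _).mp h)
  · intro i j hij
    by_contra hne
    apply hij
    apply e.injective
    rw [← hq, ← hq, Ideal.Quotient.eq]
    intro s
    have key : ∀ a b : R, inner ℂ (π (xab a) w) (π (xab b) w)
        = (starRingEnd ℂ (ψ (2 * a * s)) * ψ (2 * b * s)) *
          inner ℂ (π (xab a) w) (π (xab b) w) := by
      intro a b
      conv_lhs => rw [← heig a s, ← heig b s]
      rw [inner_smul_left, inner_smul_right, LinearIsometryEquiv.inner_map_map]
      ring
    have k1 := key (q i) (q j)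
    have k2 := key (q i) (q i)
    have hne2 : inner ℂ (π (xab (q i)) w) (π (xab (q i)) w) ≠ 0 := by
      rw [inner_self_ne_zero]
      intro h
      exact hw0 ((LinearIsometryEquiv.map_eq_zero_iff _).mp h)
    have e1 := (right_eq_mul₀ hne).mp k1
    have e2 := (right_eq_mul₀ hne2).mp k2
    have hs : starRingEnd ℂ (ψ (2 * q i * s)) ≠ 0 := left_ne_zero_of_mul_eq_one e1
    have e3 : ψ (2 * q i * s) = ψ (2 * q j * s) := mul_left_cancel₀ hs (e2.trans e1.symm)
    have e4 : π (xa2b (2 * q i * s)) = π (xa2b (2 * q j * s)) := by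
      ext v; rw [hψ, hψ, e3]
    have e5 : xa2b (2 * q i * s) = xa2b (2 * (q i - q j) * s) * xa2b (2 * q j * s) := by
      rw [← haddA2B]; congr 1; ring
    rw [e5, map_mul] at e4
    exact mul_eq_right.mp e4
end

section
/- Let R be a countable commutative unital ring in which 3 is invertible, and let m be a positive integer such that every proper ideal of R has index at least m. Let G be a group generated by the images of six additive maps x_α, x_β, x_{α+β}, x_{α+2β}, x_{α+3β}, x_{2α+3β} : R → G (x_γ(r+s) = x_γ(r)·x_γ(s) for all r, s ∈ R), satisfying for all r, s ∈ R the relations: [x_α(r), x_β(s)] = x_{α+β}(rs)·x_{α+2β}(rs²)·x_{α+3β}(rs³)·x_{2α+3β}(r²s³); [x_{α+β}(r), x_β(s)] = x_{α+2β}(2rs)·x_{α+3β}(3rs²)·x_{2α+3β}(3r²s); [x_{α+2β}(r), x_β(s)] = x_{α+3β}(3rs); [x_{α+2β}(r), x_{α+β}(s)] = x_{2α+3β}(3rs); [x_{α+3β}(r), x_α(s)] = x_{2α+3β}(−rs); and such that all other pairs of the six families commute elementwise (in particular x_{2α+3β}(R) is central in G, and x_{α+3β}(R) and x_{2α+3β}(R)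 commute, so H = x_{α+3β}(R)·x_{2α+3β}(R) is a subgroup). Set X = x_α(R) and Y = x_β(R). Then every irreducible unitary representation V of G such that V^X ≠ 0, V^Y ≠ 0 and H acts nontrivially on V has complex dimension at least m (i.e., contains m linearly independent vectors). -/
theorem key_indep (R : Type) [CommRing R] (m : ℕ)
    (hIdeals : ∀ I : Ideal R, I ≠ ⊤ → (m : Cardinal) ≤ Cardinal.mk (R ⧸ I))
    (V : Type) [NormedAddCommGroup V] [InnerProductSpace ℂ V]
    (A B : R → (V ≃ₗᵢ[ℂ] V)) (χ : R → ℂ) (hχ0 : χ 0 = 1)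
    (hχ : ∀ r s, χ (r + s) = χ r * χ s) (hne : ∃ r, χ r ≠ 1)
    (u : R) (hu : IsUnit u) (v : V) (hv : v ≠ 0) (hB : ∀ s, B s v = v)
    (hAB : ∀ r s, B s (A r v) = χ (u * r * s) • A r (B s v)) :
    ∃ f : Fin m → V, LinearIndependent ℂ f := by
  let I : Ideal R :=
    { carrier := {r | ∀ s, χ (u * r * s) = 1}
      zero_mem' := by intro s; simp [hχ0]
      add_mem' := by
        intro a b ha hb s
        have : u * (a + b) * s = u * a * s + u * b * s := by ring
        rw [this, hχ, ha s, hb s, one_mul]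
      smul_mem' := by
        intro c a ha s
        have : u * (c • a) * s = u * a * (c * s) := by rw [smul_eq_mul]; ring
        rw [this]; exact ha _ }
  have hI : I ≠ ⊤ := by
    intro h
    obtain ⟨r, hr⟩ := hne
    obtain ⟨w, hw⟩ := hu.exists_right_inv
    have h1 : (1 : R) ∈ I := by rw [h]; trivial
    have := h1 (w * r)
    apply hr
    rwa [mul_one, ← mul_assoc, hw, one_mul] at this
  have hc := hIdeals I hI
  have hc' : Cardinal.mk (Fin m) ≤ Cardinal.mk (R ⧸ I) := by simpa using hc
  obtain ⟨e⟩ := hc'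
  choose ρ hρ using fun i => Ideal.Quotient.mk_surjective (I := I) (e i)
  let c : Fin m → (Multiplicative R →* ℂ) := fun i =>
    { toFun := fun s => χ (u * ρ i * s.toAdd)
      map_one' := by simp [hχ0]
      map_mul' := by intro a b; simp [mul_add, hχ] }
  have hcinj : Function.Injective c := by
    intro i j hij
    apply e.injective
    rw [← hρ i, ← hρ j, Ideal.Quotient.eq]
    intro s
    have h1 : χ (u * ρ i * s) = χ (u * ρ j * s) := DFunLike.congr_fun hij (Multiplicative.ofAdd s)
    have : u * (ρ i - ρ j) * s = u * ρ i * s + -(u * ρ j * s) := by ring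
    rw [this, hχ, h1, ← hχ, add_neg_cancel, hχ0]
  have hlin := (linearIndependent_monoidHom (Multiplicative R) ℂ).comp c hcinj
  refine ⟨fun i => A (ρ i) v, ?_⟩
  rw [Fintype.linearIndependent_iff] at hlin ⊢
  intro g hg i
  have hs : ∀ s, ∑ j, (g j * χ (u * ρ j * s)) • A (ρ j) v = 0 := by
    intro s
    have := congrArg (B s) hg
    rw [map_sum, map_zero] at this
    rw [← this]
    refine Finset.sum_congr rfl fun j _ => ?_
    rw [map_smul, hAB, hB, smul_smul]
  have hA : A (ρ i) v ≠ 0 := by simpa using hv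
  have h2 := hlin (fun j => g j * inner ℂ (A (ρ i) v) (A (ρ j) v)) (by
    funext s
    have := congrArg (fun x => inner ℂ (A (ρ i) v) x) (hs s.toAdd)
    simp only [inner_sum, inner_smul_right, inner_zero_right] at this
    simp only [Finset.sum_apply, Pi.smul_apply, Function.comp, smul_eq_mul, Pi.zero_apply]
    rw [← this]
    refine Finset.sum_congr rfl fun j _ => ?_
    change _ * χ (u * ρ j * s.toAdd) = _
    ring) i
  have h3 : inner ℂ (A (ρ i) v) (A (ρ i) v) ≠ 0 := inner_self_ne_zero.2 hA
  exact (mul_eq_zero.1 h2).resolve_right h3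

theorem schur_fd (G : Type) [Group G] (V : Type) [NormedAddCommGroup V] [InnerProductSpace ℂ V]
    [FiniteDimensional ℂ V] (π : G →* (V ≃ₗᵢ[ℂ] V)) (hnt : Nontrivial V)
    (hirr : ∀ U : Submodule ℂ V, IsClosed (U : Set V) →
      (∀ g : G, ∀ u ∈ U, π g u ∈ U) → U = ⊥ ∨ U = ⊤)
    (S : Set G) (hS : Subgroup.closure S = ⊤)
    (T : V ≃ₗᵢ[ℂ] V) (hT : ∀ g ∈ S, π g * T = T * π g) :
    ∃ c : ℂ, ∀ v, T v = c • v := by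
  have hall : ∀ g, π g * T = T * π g := by
    intro g
    have hle : Subgroup.closure S ≤ (Subgroup.centralizer {T}).comap π := by
      rw [Subgroup.closure_le]
      intro g hg
      simp only [SetLike.mem_coe, Subgroup.mem_comap, Subgroup.mem_centralizer_singleton_iff]
      first
        | exact hT g hg
        | exact (hT g hg).symm
    rw [hS] at hle
    have := hle (Subgroup.mem_top g)
    simp only [Subgroup.mem_comap, Subgroup.mem_centralizer_singleton_iff] at this
    first
      | exact this
      | exact this.symm
  let L : Module.End ℂ V := (T.toLinearEquiv : V →ₗ[ℂ] V)
  have hL : ∀ v, L v = T v := fun v => rfl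
  obtain ⟨c, hc⟩ := Module.End.exists_eigenvalue L
  refine ⟨c, fun v => ?_⟩
  rcases hirr (L.eigenspace c) (Submodule.closed_of_finiteDimensional _) (by
    intro g u hu
    rw [Module.End.mem_eigenspace_iff] at hu ⊢
    rw [hL] at hu ⊢
    have := DFunLike.congr_fun (hall g) u
    change π g (T u) = T (π g u) at this
    rw [← this, hu, map_smul]) with h | h
  · exact absurd h hc
  · have : v ∈ L.eigenspace c := by rw [h]; trivial
    exact Module.End.mem_eigenspace_iff.1 this

theorem char_of_central (R : Type) [CommRing R] (V : Type) [NormedAddCommGroup V]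
    [InnerProductSpace ℂ V] (hnt : Nontrivial V) (T : R → (V ≃ₗᵢ[ℂ] V))
    (hadd : ∀ r s, T (r + s) = T r * T s) (h : ∀ r, ∃ c : ℂ, ∀ v, T r v = c • v) :
    ∃ χ : R → ℂ, (∀ r v, T r v = χ r • v) ∧ χ 0 = 1 ∧ ∀ r s, χ (r + s) = χ r * χ s := by
  choose χ hχ using h
  obtain ⟨v, hv⟩ := exists_ne (0 : V)
  refine ⟨χ, hχ, ?_, ?_⟩
  · have h0 : T 0 = 1 := by
      have := hadd 0 0
      rw [add_zero] at this
      exact left_eq_mul.1 this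
    have := hχ 0 v
    rw [h0] at this
    change v = _ at this
    have h1 : (1 : ℂ) • v = χ 0 • v := by rw [one_smul]; exact this
    exact (smul_left_injective ℂ hv h1).symm
  · intro r s
    have h1 : χ (r + s) • v = (χ r * χ s) • v := by
      rw [← hχ, hadd]
      change T r (T s v) = _
      rw [hχ, hχ, smul_smul]
    exact smul_left_injective ℂ hv h1


/-- Lemma 4.2(c), case G₂. -/
theorem stmt_3 (R : Type) [CommRing R] [Countable R]
    (h3 : IsUnit (3 : R))
    (m : ℕ) (hm : 0 < m)
    (hIdeals : ∀ I : Ideal R, I ≠ ⊤ → (m : Cardinal) ≤ Cardinal.mk (R ⧸ I))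
    (G : Type) [Group G]
    (xa xb xab xa2b xa3b x2a3b : R → G)
    (haddA : ∀ r s : R, xa (r + s) = xa r * xa s)
    (haddB : ∀ r s : R, xb (r + s) = xb r * xb s)
    (haddAB : ∀ r s : R, xab (r + s) = xab r * xab s)
    (haddA2B : ∀ r s : R, xa2b (r + s) = xa2b r * xa2b s)
    (haddA3B : ∀ r s : R, xa3b (r + s) = xa3b r * xa3b s)
    (hadd2A3B : ∀ r s : R, x2a3b (r + s) = x2a3b r * x2a3b s)
    (hgen : Subgroup.closure
      (Set.range xa ∪ Set.range xb ∪ Set.range xab ∪ Set.range xa2b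
        ∪ Set.range xa3b ∪ Set.range x2a3b) = ⊤)
    -- [x_α(r), x_β(s)] = x_{α+β}(rs)·x_{α+2β}(rs²)·x_{α+3β}(rs³)·x_{2α+3β}(r²s³)
    (hrel1 : ∀ r s : R, (xa r)⁻¹ * (xb s)⁻¹ * xa r * xb s
      = xab (r * s) * xa2b (r * s ^ 2) * xa3b (r * s ^ 3) * x2a3b (r ^ 2 * s ^ 3))
    -- [x_{α+β}(r), x_β(s)] = x_{α+2β}(2rs)·x_{α+3β}(3rs²)·x_{2α+3β}(3r²s)
    (hrel2 : ∀ r s : R, (xab r)⁻¹ * (xb s)⁻¹ * xab r * xb s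
      = xa2b (2 * r * s) * xa3b (3 * r * s ^ 2) * x2a3b (3 * r ^ 2 * s))
    -- [x_{α+2β}(r), x_β(s)] = x_{α+3β}(3rs)
    (hrel3 : ∀ r s : R, (xa2b r)⁻¹ * (xb s)⁻¹ * xa2b r * xb s = xa3b (3 * r * s))
    -- [x_{α+2β}(r), x_{α+β}(s)] = x_{2α+3β}(3rs)
    (hrel4 : ∀ r s : R, (xa2b r)⁻¹ * (xab s)⁻¹ * xa2b r * xab s = x2a3b (3 * r * s))
    -- [x_{α+3β}(r), x_α(s)] = x_{2α+3β}(−rs)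
    (hrel5 : ∀ r s : R, (xa3b r)⁻¹ * (xa s)⁻¹ * xa3b r * xa s = x2a3b (-(r * s)))
    -- all other pairs of the six families commute elementwise
    (hc1 : ∀ r s : R, xa r * xab s = xab s * xa r)
    (hc2 : ∀ r s : R, xa r * xa2b s = xa2b s * xa r)
    (hc3 : ∀ r s : R, xa r * x2a3b s = x2a3b s * xa r)
    (hc4 : ∀ r s : R, xb r * xa3b s = xa3b s * xb r)
    (hc5 : ∀ r s : R, xb r * x2a3b s = x2a3b s * xb r)
    (hc6 : ∀ r s : R, xab r * xa3b s = xa3b s * xab r)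
    (hc7 : ∀ r s : R, xab r * x2a3b s = x2a3b s * xab r)
    (hc8 : ∀ r s : R, xa2b r * xa3b s = xa3b s * xa2b r)
    (hc9 : ∀ r s : R, xa2b r * x2a3b s = x2a3b s * xa2b r)
    (hc10 : ∀ r s : R, xa3b r * x2a3b s = x2a3b s * xa3b r)
    (V : Type) [NormedAddCommGroup V] [InnerProductSpace ℂ V] [CompleteSpace V]
    (π : G →* (V ≃ₗᵢ[ℂ] V))
    (hnt : Nontrivial V)
    (hirr : ∀ U : Submodule ℂ V, IsClosed (U : Set V) →
      (∀ g : G, ∀ u ∈ U, π g u ∈ U) → U = ⊥ ∨ U = ⊤)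
    -- V^X ≠ 0 with X = x_α(R)
    (hX : ∃ v : V, v ≠ 0 ∧ ∀ r : R, π (xa r) v = v)
    -- V^Y ≠ 0 with Y = x_β(R)
    (hY : ∃ w : V, w ≠ 0 ∧ ∀ r : R, π (xb r) w = w)
    -- H = x_{α+3β}(R)·x_{2α+3β}(R) acts nontrivially on V
    (hH : ∃ (r s : R) (v : V), π (xa3b r * x2a3b s) v ≠ v) :
    ∃ f : Fin m → V, LinearIndependent ℂ f := by
  by_cases hfd : FiniteDimensional ℂ V
  swap
  · have hr : Cardinal.aleph0 ≤ Module.rank ℂ V := by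
      by_contra h
      exact hfd (Module.rank_lt_aleph0_iff.1 (not_le.1 h))
    have h1 : (m : Cardinal) ≤ Module.rank ℂ V := (Cardinal.natCast_lt_aleph0).le.trans hr
    exact Module.le_rank_iff.1 h1
  have hsch := schur_fd G V π hnt hirr _ hgen
  have com : ∀ g h : G, g * h = h * g → π g * π h = π h * π g := by
    intro g h hgh
    rw [← map_mul, hgh, map_mul]
  obtain ⟨χ, hχ, hχ0, hχadd⟩ := char_of_central R V hnt (fun r => π (x2a3b r))
    (fun r s => by simp only [hadd2A3B, map_mul]) (by
      intro r
      apply hsch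
      rintro g (((((⟨s, rfl⟩ | ⟨s, rfl⟩) | ⟨s, rfl⟩) | ⟨s, rfl⟩) | ⟨s, rfl⟩) | ⟨s, rfl⟩) <;> apply com
      · exact hc3 _ _
      · exact hc5 _ _
      · exact hc7 _ _
      · exact hc9 _ _
      · exact hc10 _ _
      · rw [← hadd2A3B, ← hadd2A3B, add_comm])
  by_cases hne : ∃ r, χ r ≠ 1
  · obtain ⟨v, hv, hXv⟩ := hX
    refine key_indep R m hIdeals V (fun r => π (xa3b r)) (fun s => π (xa s)) χ hχ0 hχadd hne 1
      isUnit_one v hv hXv ?_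
    intro r s
    have hg : xa s * xa3b r = x2a3b (r * s) * (xa3b r * xa s) := by
      have h1 := hrel5 r s
      have h2 : x2a3b (r * s) * x2a3b (-(r * s)) = 1 := by
        rw [← hadd2A3B, add_neg_cancel]
        have := hadd2A3B 0 0
        rw [add_zero] at this
        exact left_eq_mul.1 this
      have h3 : xa3b r * xa s = xa s * xa3b r * x2a3b (-(r * s)) := by rw [← h1]; group
      have h4 : x2a3b (-(r * s)) = (x2a3b (r * s))⁻¹ := (inv_eq_of_mul_eq_one_right h2).symm
      rw [h4] at h3
      have h5 : xa s * xa3b r = (xa3b r * xa s) * x2a3b (r * s) := by rw [h3]; group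
      rw [h5, mul_assoc, hc3, ← mul_assoc, hc10, mul_assoc]
    have := DFunLike.congr_fun (congrArg π hg) v
    simp only [map_mul] at this
    change π (xa s) (π (xa3b r) v) = π (x2a3b (r * s)) (π (xa3b r) (π (xa s) v)) at this
    rw [one_mul]
    exact this.trans (hχ _ _)
  · push Not at hne
    have htriv : ∀ r, π (x2a3b r) = 1 := by
      intro r
      ext v
      have := hχ r v
      simp only [hne, one_smul] at this
      exact this
    obtain ⟨ψ, hψ, hψ0, hψadd⟩ := char_of_central R V hnt (fun r => π (xa3b r))
      (fun r s => by simp only [haddA3B, map_mul]) (by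
        intro r
        apply hsch
        rintro g (((((⟨s, rfl⟩ | ⟨s, rfl⟩) | ⟨s, rfl⟩) | ⟨s, rfl⟩) | ⟨s, rfl⟩) | ⟨s, rfl⟩)
        · have h1 := congrArg π (hrel5 r s)
          rw [htriv] at h1
          have h3 : xa3b r * xa s =
            xa s * xa3b r * ((xa3b r)⁻¹ * (xa s)⁻¹ * xa3b r * xa s) := by group
          have h4 := congrArg π h3
          rw [map_mul π (xa s * xa3b r), h1, mul_one, map_mul, map_mul] at h4
          exact h4.symm
        · exact com _ _ (hc4 _ _)
        · exact com _ _ (hc6 _ _)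
        · exact com _ _ (hc8 _ _)
        · apply com; rw [← haddA3B, ← haddA3B, add_comm]
        · exact com _ _ (hc10 _ _).symm)
    have hneψ : ∃ r, ψ (-r) ≠ 1 := by
      by_contra hcon
      push Not at hcon
      obtain ⟨r, s, v, hv⟩ := hH
      apply hv
      rw [map_mul, htriv, mul_one]
      have := hψ r v
      rw [← neg_neg r, hcon, one_smul, neg_neg] at this
      exact this
    obtain ⟨w, hw, hYw⟩ := hY
    refine key_indep R m hIdeals V (fun r => π (xa2b r)) (fun s => π (xb s)) (fun r => ψ (-r))
      (by simpa using hψ0) (by intro r s; rw [neg_add, hψadd]) hneψ 3 h3 w hw hYw ?_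
    intro r s
    have hg : xb s * xa2b r = xa3b (-(3 * r * s)) * (xa2b r * xb s) := by
      have h1 := hrel3 r s
      have h2 : xa3b (3 * r * s) * xa3b (-(3 * r * s)) = 1 := by
        rw [← haddA3B, add_neg_cancel]
        have := haddA3B 0 0
        rw [add_zero] at this
        exact left_eq_mul.1 this
      have h3 : xa2b r * xb s = xb s * xa2b r * xa3b (3 * r * s) := by rw [← h1]; group
      rw [h3, mul_assoc (xb s), hc8, ← mul_assoc (xb s), hc4, ← mul_assoc, ← mul_assoc, ← haddA3B]
      have h0 : xa3b 0 = 1 := by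
        have := haddA3B 0 0
        rw [add_zero] at this
        exact left_eq_mul.1 this
      rw [neg_add_cancel, h0, one_mul]
    have := DFunLike.congr_fun (congrArg π hg) w
    simp only [map_mul] at this
    change π (xb s) (π (xa2b r) w) = π (xa3b (-(3 * r * s))) (π (xa2b r) (π (xb s) w)) at this
    exact this.trans (hψ _ _)
end

section
/- For every integer n ≥ 2, the subring ℤ[i, 1/n!] of ℂ (the smallest subring of ℂ containing the imaginary unit i and 1/n!) is dense in ℂ, and every proper ideal I of ℤ[i, 1/n!] satisfies card(ℤ[i, 1/n!]/I) > n; in particular, ℤ[i, 1/n!] is a finitely generated ring with no proper ideals of index at most n. -/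
theorem stmt_11_dense (N : ℕ) (hN : 2 ≤ N) :
    Dense ((Subring.closure {Complex.I, ((N : ℂ))⁻¹} : Subring ℂ) : Set ℂ) := by
  set R := (Subring.closure {Complex.I, ((N : ℂ))⁻¹} : Subring ℂ) with hR
  have hI : Complex.I ∈ R := Subring.subset_closure (by simp)
  have hi : (N : ℂ)⁻¹ ∈ R := Subring.subset_closure (by simp)
  rw [Metric.dense_iff]
  intro z ε hε
  have hN1 : (1 : ℝ) < N := by exact_mod_cast hN
  obtain ⟨k, hk⟩ := pow_unbounded_of_one_lt (2 / ε) hN1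
  have hM : (0 : ℝ) < (N : ℝ) ^ k := by positivity
  generalize hMd : (N : ℝ) ^ k = M at hk hM
  have key : ∀ x : ℝ, |(⌊x * M⌋ : ℝ) * M⁻¹ - x| ≤ M⁻¹ := by
    intro x
    have h1 := Int.floor_le (x * M)
    have h2 := Int.lt_floor_add_one (x * M)
    have : (⌊x * M⌋ : ℝ) * M⁻¹ - x = (⌊x * M⌋ - x * M) * M⁻¹ := by
      field_simp
    rw [this, abs_mul, abs_of_pos (inv_pos.2 hM)]
    have : |(⌊x * M⌋ : ℝ) - x * M| ≤ 1 := by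
      rw [abs_le]; constructor <;> linarith
    nlinarith [inv_pos.2 hM]
  refine ⟨((⌊z.re * M⌋ : ℂ) + (⌊z.im * M⌋ : ℂ) * Complex.I) * ((N : ℂ)⁻¹) ^ k, ?_, ?_⟩
  · rw [Metric.mem_ball, dist_eq_norm]
    have hc : ((N : ℂ)⁻¹) ^ k = ((M⁻¹ : ℝ) : ℂ) := by
      rw [← hMd]; push_cast; rw [inv_pow]
    rw [hc]
    refine lt_of_le_of_lt (Complex.norm_le_abs_re_add_abs_im _) ?_
    have h1 := key z.re
    have h2 := key z.im
    have h3 : M⁻¹ + M⁻¹ < ε := by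
      rw [div_lt_iff₀ hε] at hk
      rw [← two_mul, ← div_eq_mul_inv, div_lt_iff₀ hM]; linarith
    simp only [Complex.sub_re, Complex.sub_im, Complex.ofReal_re, Complex.ofReal_im,
      Complex.add_re, Complex.add_im, Complex.mul_re, Complex.mul_im, Complex.I_re, Complex.I_im,
      Complex.intCast_re, Complex.intCast_im, mul_zero, mul_one, sub_zero, add_zero, zero_add]
    linarith
  · exact R.mul_mem (R.add_mem (intCast_mem R _) (R.mul_mem (intCast_mem R _) hI)) (R.pow_mem hi k)

/-- `ℤ[i, 1/n!]` is dense in `ℂ`, has no proper ideals of index ≤ n,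
and is a finitely generated ring. -/
theorem stmt_11 (n : ℕ) (hn : 2 ≤ n) :
    Dense ((Subring.closure {Complex.I, ((n.factorial : ℂ))⁻¹} : Subring ℂ) : Set ℂ) ∧
    (∀ I : Ideal ↥(Subring.closure {Complex.I, ((n.factorial : ℂ))⁻¹}), I ≠ ⊤ →
      (n : Cardinal) <
        Cardinal.mk (↥(Subring.closure {Complex.I, ((n.factorial : ℂ))⁻¹}) ⧸ I)) ∧
    Algebra.FiniteType ℤ ↥(Subring.closure {Complex.I, ((n.factorial : ℂ))⁻¹}) := by
  refine ⟨stmt_11_dense _ (hn.trans n.self_le_factorial), ?_, ?_⟩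
  · intro I hI
    by_contra hcon
    rw [not_lt] at hcon
    have hfin : Finite (↥(Subring.closure {Complex.I, ((n.factorial : ℂ))⁻¹}) ⧸ I) :=
      Cardinal.lt_aleph0_iff_finite.1 (hcon.trans_lt Cardinal.natCast_lt_aleph0)
    rw [← Nat.cast_card, Nat.cast_le] at hcon
    have hdvd := Nat.dvd_factorial Nat.card_pos hcon
    have h0 : ((n.factorial : ℕ) : ↥(Subring.closure {Complex.I, ((n.factorial : ℂ))⁻¹}) ⧸ I) = 0 := by
      obtain ⟨c, hc⟩ := hdvd
      have h1 := card_nsmul_eq_zero'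
        (x := (1 : ↥(Subring.closure {Complex.I, ((n.factorial : ℂ))⁻¹}) ⧸ I))
      rw [nsmul_one] at h1
      have h2 := congrArg
        (Nat.cast (R := ↥(Subring.closure {Complex.I, ((n.factorial : ℂ))⁻¹}) ⧸ I)) hc
      rw [Nat.cast_mul, h1, zero_mul] at h2
      exact h2
    have h2 : ((n.factorial : ℕ) : ↥(Subring.closure {Complex.I, ((n.factorial : ℂ))⁻¹})) ∈ I := by
      rw [← Ideal.Quotient.eq_zero_iff_mem, map_natCast]; exact h0
    apply hI
    rw [Ideal.eq_top_iff_one]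
    have h3 := I.mul_mem_left ⟨((n.factorial : ℂ))⁻¹, Subring.subset_closure (by simp)⟩ h2
    convert h3
    apply Subtype.ext
    have : (n.factorial : ℂ) ≠ 0 := by exact_mod_cast n.factorial_ne_zero
    simp [this]
  · have h : Algebra.FiniteType ℤ
        ↥(Algebra.adjoin ℤ {Complex.I, ((n.factorial : ℂ))⁻¹}) :=
      (Subalgebra.fg_iff_finiteType _).1
        (Subalgebra.fg_def.2 ⟨_, by simp, rfl⟩)
    rw [Algebra.adjoin_int] at h
    let f : ↥(subalgebraOfSubring (Subring.closure {Complex.I, ((n.factorial : ℂ))⁻¹})) →+*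
        ↥(Subring.closure {Complex.I, ((n.factorial : ℂ))⁻¹}) :=
      { toFun := fun x => ⟨x.1, x.2⟩
        map_one' := rfl
        map_mul' := fun _ _ => rfl
        map_zero' := rfl
        map_add' := fun _ _ => rfl }
    have hf : Function.Surjective f := fun x => ⟨⟨x.1, x.2⟩, rfl⟩
    exact Algebra.FiniteType.of_surjective { f with commutes' := fun r => by simp } hf
end

section
/- Let k be a finite field with q elements, let n ≥ 2 be an integer, and let f_n ∈ k[t] be the product of all monic irreducible polynomials in k[t] of degree at most log_q(n) (equivalently, of degree e with q^e ≤ n). Then the subring R = k[t][1/(t·f_n)] of the field of formal Laurent series k((t)) is dense in k((t)) with respect to the t-adic topology, and every proper ideal I of R satisfies card(R/I) > n; in particular, R is a finitely generated ring with no proper ideals of index at most n. -/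
open Polynomial in
theorem aeval_single_eq (k : Type) [Field k] (p : Polynomial k) :
    Polynomial.aeval (HahnSeries.single (1 : ℤ) (1 : k)) p
      = HahnSeries.ofPowerSeries ℤ k (p : PowerSeries k) := by
  induction p using Polynomial.induction_on' with
  | add p q hp hq => simp only [map_add, hp, hq, Polynomial.coe_add]
  | monomial n a =>
    rw [← Polynomial.C_mul_X_pow_eq_monomial, map_mul, map_pow, aeval_X, aeval_C,
      Polynomial.coe_mul, Polynomial.coe_pow, Polynomial.coe_C, Polynomial.coe_X, map_mul, map_pow,
      HahnSeries.ofPowerSeries_X, HahnSeries.ofPowerSeries_C, LaurentSeries.algebraMap_apply]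

theorem aeval_single_ne_zero (k : Type) [Field k] (p : Polynomial k) (hp : p ≠ 0) :
    Polynomial.aeval (HahnSeries.single (1 : ℤ) (1 : k)) p ≠ 0 := by
  rw [aeval_single_eq]
  intro h
  apply hp
  apply Polynomial.coe_injective k
  apply HahnSeries.ofPowerSeries_injective (Γ := ℤ)
  simpa using h

theorem dense_of_mem (k : Type) [Field k] (R : Subring (LaurentSeries k))
    (h1 : ∀ p : Polynomial k, Polynomial.aeval (HahnSeries.single (1 : ℤ) (1 : k)) p ∈ R)
    (h2 : (HahnSeries.single (1 : ℤ) (1 : k))⁻¹ ∈ R) :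
    Dense (↑R : Set (LaurentSeries k)) := by
  have h3 : HahnSeries.single (1 : ℤ) (1 : k) ∈ R := by simpa using h1 Polynomial.X
  have hz : ∀ m : ℤ, HahnSeries.single m (1 : k) ∈ R := by
    intro m
    rw [RatFunc.single_zpow]
    cases m with
    | ofNat m => simpa using R.pow_mem h3 m
    | negSucc m =>
      rw [zpow_negSucc, ← inv_pow]
      exact R.pow_mem h2 _
  intro x
  rw [mem_closure_iff_nhds]
  intro U hU
  obtain ⟨γ, hγ⟩ := Valued.mem_nhds.1 hU
  set γ' : (WithZero (Multiplicative ℤ))ˣ := γ.map (MonoidWithZeroHom.ValueGroup₀.embedding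
    (f := .ofClass (LaurentSeries.valued k).v)) with hγ'
  have hne : Valued.v (HahnSeries.single x.order (1 : k)) ≠ 0 := by
    simp
  obtain ⟨P, hP⟩ := LaurentSeries.exists_Polynomial_intValuation_lt x.powerSeriesPart
    ((Units.mk0 _ hne)⁻¹ * γ')
  refine ⟨HahnSeries.single x.order (1 : k) *
    Polynomial.aeval (HahnSeries.single (1 : ℤ) (1 : k)) P, hγ ?_, R.mul_mem (hz _) (h1 P)⟩
  have key : Valued.v (HahnSeries.single x.order (1 : k) *
    Polynomial.aeval (HahnSeries.single (1 : ℤ) (1 : k)) P - x) < (γ' : WithZero (Multiplicative ℤ)) := by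
    conv_lhs => rw [← LaurentSeries.single_order_mul_powerSeriesPart x]
    rw [Valuation.map_sub_swap, LaurentSeries.single_order_mul_powerSeriesPart x]
    nth_rewrite 1 [← LaurentSeries.single_order_mul_powerSeriesPart x]
    rw [← mul_sub, map_mul, aeval_single_eq, ← PowerSeries.coe_sub, ← LaurentSeries.coe_algebraMap,
      LaurentSeries.valuation_def, IsDedekindDomain.HeightOneSpectrum.valuation_of_algebraMap]
    rw [Units.val_mul, Units.val_inv_eq_inv_val, Units.val_mk0] at hP
    rwa [lt_inv_mul_iff₀ (zero_lt_iff.2 hne)] at hP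
  rw [Set.mem_ofPred_eq, Valuation.restrict_lt_iff_lt_embedding]
  exact key

theorem field_case (k : Type) [Field k] [Fintype k] (n : ℕ) (L : Type) [Field L] [Finite L]
    (hL : Nat.card L ≤ n) (φ : Polynomial k →+* L) :
    ∃ p : Polynomial k, p.Monic ∧ Irreducible p ∧ Fintype.card k ^ p.natDegree ≤ n ∧ φ p = 0 := by
  let : Algebra k L := (φ.comp Polynomial.C).toAlgebra
  have : Module.Finite k L := Module.Finite.of_finite
  have hi : IsIntegral k (φ Polynomial.X) := IsIntegral.of_finite k _
  refine ⟨minpoly k (φ Polynomial.X), minpoly.monic hi, minpoly.irreducible hi, ?_, ?_⟩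
  · refine le_trans ?_ hL
    rw [Module.natCard_eq_pow_finrank (K := k) (V := L), Nat.card_eq_fintype_card]
    exact Nat.pow_le_pow_right Fintype.card_pos (minpoly.natDegree_le _)
  · have h := minpoly.aeval k (φ Polynomial.X)
    rw [Polynomial.aeval_def] at h
    have : Polynomial.eval₂RingHom (algebraMap k L) (φ Polynomial.X) = φ := by
      apply Polynomial.ringHom_ext
      · intro a
        simp [RingHom.algebraMap_toAlgebra]
      · simp
    exact (DFunLike.congr_fun this (minpoly k (φ Polynomial.X))).symm.trans h


/-- `k[t][1/(t·f_n)]` is dense in `k((t))` and has no proper ideals of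
index ≤ n, where `f_n` is the product of all monic irreducible polynomials of degree
`e` with `q^e ≤ n` (`q` the cardinality of the finite field `k`). -/
theorem stmt_12 (k : Type) [Field k] [Fintype k] (n : ℕ) (hn : 2 ≤ n)
    (F : Finset (Polynomial k))
    (hF : ∀ p : Polynomial k,
      p ∈ F ↔ p.Monic ∧ Irreducible p ∧ Fintype.card k ^ p.natDegree ≤ n)
    (f : Polynomial k) (hf : f = ∏ p ∈ F, p)
    (R : Subring (LaurentSeries k))
    (hR : R = Subring.closure
      ({x | ∃ p : Polynomial k, x = Polynomial.aeval (HahnSeries.single (1 : ℤ) (1 : k)) p}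
        ∪ {(Polynomial.aeval (HahnSeries.single (1 : ℤ) (1 : k)) (Polynomial.X * f))⁻¹})) :
    Dense (↑R : Set (LaurentSeries k)) ∧
    (∀ I : Ideal ↥R, I ≠ ⊤ → (n : Cardinal) < Cardinal.mk (↥R ⧸ I)) ∧
    Algebra.FiniteType ℤ ↥R := by
  set s : LaurentSeries k := HahnSeries.single (1 : ℤ) (1 : k) with hs
  have hf0 : f ≠ 0 := by
    rw [hf, Finset.prod_ne_zero_iff]
    intro p hp
    exact ((hF p).1 hp).1.ne_zero
  have hXf : Polynomial.aeval s (Polynomial.X * f) ≠ 0 :=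
    aeval_single_ne_zero k _ (mul_ne_zero Polynomial.X_ne_zero hf0)
  have h1 : ∀ p : Polynomial k, Polynomial.aeval s p ∈ R := by
    intro p
    rw [hR]
    exact Subring.subset_closure (Or.inl ⟨p, rfl⟩)
  have hinv : (Polynomial.aeval s (Polynomial.X * f))⁻¹ ∈ R := by
    rw [hR]
    exact Subring.subset_closure (Or.inr rfl)
  refine ⟨?_, ?_, ?_⟩
  · apply dense_of_mem k R h1
    have : s⁻¹ = Polynomial.aeval s f * (Polynomial.aeval s (Polynomial.X * f))⁻¹ := by
      rw [map_mul, Polynomial.aeval_X] at hXf ⊢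
      have ha := left_ne_zero_of_mul hXf
      have hb := right_ne_zero_of_mul hXf
      field_simp
    rw [← hs, this]
    exact R.mul_mem (h1 f) hinv
  · intro I hI
    by_contra hcon
    rw [not_lt] at hcon
    obtain ⟨M, hM, hIM⟩ := Ideal.exists_le_maximal I hI
    have hle : Cardinal.mk (↥R ⧸ M) ≤ n :=
      (Cardinal.mk_le_of_surjective (Ideal.Quotient.factor_surjective hIM)).trans hcon
    let : Field (↥R ⧸ M) := Ideal.Quotient.field M
    have : Finite (↥R ⧸ M) :=
      Cardinal.lt_aleph0_iff_finite.1 (hle.trans_lt Cardinal.natCast_lt_aleph0)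
    have hcard : Nat.card (↥R ⧸ M) ≤ n := by
      exact Cardinal.toNat_le_toNat hle Cardinal.natCast_lt_aleph0 |>.trans_eq (Cardinal.toNat_natCast n)
    let ψ : Polynomial k →+* ↥R := (Polynomial.aeval s).toRingHom.codRestrict R h1
    obtain ⟨p, hpm, hpi, hpn, hp0⟩ :=
      field_case k n (↥R ⧸ M) hcard ((Ideal.Quotient.mk M).comp ψ)
    have hpF : p ∈ F := (hF p).2 ⟨hpm, hpi, hpn⟩
    have hdvd : p ∣ Polynomial.X * f := by
      rw [hf]
      exact (Finset.dvd_prod_of_mem _ hpF).mul_left _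
    have hpM : ψ p ∈ M := Ideal.Quotient.eq_zero_iff_mem.1 hp0
    have hM' : ψ (Polynomial.X * f) ∈ M := M.mem_of_dvd (map_dvd ψ hdvd) hpM
    apply hM.ne_top
    rw [Ideal.eq_top_iff_one]
    have : (1 : ↥R) = ⟨_, hinv⟩ * ψ (Polynomial.X * f) := by
      apply Subtype.ext
      exact (inv_mul_cancel₀ hXf).symm
    rw [this]
    exact M.mul_mem_left _ hM'
  · let ψ : Polynomial k →+* ↥R := (Polynomial.aeval s).toRingHom.codRestrict R h1
    let Φ : Polynomial (Polynomial k) →+* ↥R := Polynomial.eval₂RingHom ψ ⟨_, hinv⟩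
    have : Module.Finite ℤ k := Module.Finite.of_finite
    have i0 : Algebra.FiniteType ℤ k := inferInstance
    have i1 : Algebra.FiniteType ℤ (Polynomial k) :=
      Algebra.FiniteType.trans (S := k) i0 inferInstance
    have i2 : Algebra.FiniteType ℤ (Polynomial (Polynomial k)) :=
      Algebra.FiniteType.trans (S := Polynomial k) i1 inferInstance
    let Φ' : Polynomial (Polynomial k) →ₐ[ℤ] ↥R :=
      { Φ with commutes' := fun r => by simp }
    refine Algebra.FiniteType.of_surjective Φ' ?_
    have hle : R ≤ (R.subtype.comp Φ).range := by
      conv_lhs => rw [hR]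
      rw [Subring.closure_le]
      rintro x (⟨p, rfl⟩ | hx)
      · exact ⟨Polynomial.C p, by simp [Φ, ψ]⟩
      · rw [Set.mem_singleton_iff] at hx
        subst hx
        exact ⟨Polynomial.X, by simp [Φ]⟩
    intro y
    obtain ⟨z, hz⟩ := hle y.2
    exact ⟨z, Subtype.ext hz⟩
end

section
/- Let n ≥ 2 be an integer and let R_n = (ℤ[1/n!])[t] be the polynomial ring in one variable over the subring ℤ[1/n!] of ℚ. Then every proper ideal I of R_n satisfies card(R_n/I) > n, and for every finite field F whose characteristic is greater than n there exists a surjective ring homomorphism R_n → F. -/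
theorem closure_inv_isLocalization (N : ℕ) (hN : N ≠ 0) :
    IsLocalization.Away (N : ℤ) ↥(Subring.closure {((N : ℚ))⁻¹}) := by
  have hQ : (N : ℚ) ≠ 0 := by exact_mod_cast hN
  have key : ∀ x ∈ Subring.closure {((N : ℚ))⁻¹}, ∃ (m : ℤ) (k : ℕ), x * (N : ℚ) ^ k = m := by
    intro x hx
    induction hx using Subring.closure_induction with
    | mem x hx =>
      rw [Set.mem_singleton_iff] at hx
      exact ⟨1, 1, by rw [hx]; simp [hQ]⟩
    | zero => exact ⟨0, 0, by simp⟩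
    | one => exact ⟨1, 0, by simp⟩
    | add x y _ _ hx hy =>
      obtain ⟨a, k, h⟩ := hx
      obtain ⟨b, l, h'⟩ := hy
      refine ⟨a * N ^ l + b * N ^ k, k + l, ?_⟩
      push_cast
      rw [← h, ← h']; ring
    | neg x _ hx =>
      obtain ⟨a, k, h⟩ := hx
      exact ⟨-a, k, by push_cast; rw [← h]; ring⟩
    | mul x y _ _ hx hy =>
      obtain ⟨a, k, h⟩ := hx
      obtain ⟨b, l, h'⟩ := hy
      refine ⟨a * b, k + l, ?_⟩
      push_cast
      rw [← h, ← h']; ring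
  refine IsLocalization.Away.mk (N : ℤ) ?_ ?_ ?_
  · refine IsUnit.of_mul_eq_one ⟨(N : ℚ)⁻¹, Subring.subset_closure rfl⟩ ?_
    apply Subtype.ext
    simp [hQ]
  · rintro ⟨x, hx⟩
    obtain ⟨m, k, h⟩ := key x hx
    refine ⟨k, m, ?_⟩
    apply Subtype.ext
    simp [h]
  · intro a b h
    refine ⟨0, ?_⟩
    have := congrArg Subtype.val h
    simp at this
    simp [this]

/-- the ring `R_n = ℤ[1/n!][t]` has no proper ideals of index ≤ n and
surjects onto every finite field of characteristic greater than n. -/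
theorem stmt_13 (n : ℕ) (hn : 2 ≤ n) :
    (∀ I : Ideal (Polynomial ↥(Subring.closure {((n.factorial : ℚ))⁻¹})), I ≠ ⊤ →
      (n : Cardinal) <
        Cardinal.mk (Polynomial ↥(Subring.closure {((n.factorial : ℚ))⁻¹}) ⧸ I)) ∧
    (∀ (F : Type) [Field F] [Finite F], n < ringChar F →
      ∃ φ : Polynomial ↥(Subring.closure {((n.factorial : ℚ))⁻¹}) →+* F,
        Function.Surjective φ) := by
  have hloc := closure_inv_isLocalization n.factorial n.factorial_ne_zero
  have hu := IsLocalization.Away.algebraMap_isUnit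
    (S := ↥(Subring.closure {((n.factorial : ℚ))⁻¹})) (n.factorial : ℤ)
  constructor
  · intro I hI
    by_contra hlt
    rw [not_lt] at hlt
    have hfin : Finite (Polynomial ↥(Subring.closure {((n.factorial : ℚ))⁻¹}) ⧸ I) :=
      Cardinal.lt_aleph0_iff_finite.mp (hlt.trans_lt Cardinal.natCast_lt_aleph0)
    have : Nontrivial (Polynomial ↥(Subring.closure {((n.factorial : ℚ))⁻¹}) ⧸ I) :=
      Ideal.Quotient.nontrivial_iff.mpr hI
    set Q := Polynomial ↥(Subring.closure {((n.factorial : ℚ))⁻¹}) ⧸ I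
    have hle : Nat.card Q ≤ n := by
      rw [← Nat.cast_card] at hlt
      exact_mod_cast hlt
    have h0 : ((Nat.card Q : ℕ) : Q) = 0 := by
      have := card_nsmul_eq_zero' (x := (1 : Q))
      simpa using this
    have h1 : ((n.factorial : ℕ) : Q) = 0 := by
      obtain ⟨c, hc⟩ := Nat.dvd_factorial Nat.card_pos hle
      exact (congrArg (Nat.cast : ℕ → Q) hc).trans (by rw [Nat.cast_mul, h0, zero_mul])
    have h2 := (hu.map Polynomial.C).map (Ideal.Quotient.mk I)
    simp only [map_natCast] at h2
    have h3 : IsUnit ((n.factorial : ℕ) : Q) := h2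
    rw [h1] at h3
    exact not_isUnit_zero h3
  · intro F _ _ hF
    have hp : (ringChar F).Prime := by
      rcases CharP.char_is_prime_or_zero F (ringChar F) with h | h
      · exact h
      · omega
    have hFu : IsUnit (Int.castRingHom F (n.factorial : ℤ)) := by
      rw [isUnit_iff_ne_zero]
      simp only [map_natCast]
      intro h
      rw [ringChar.spec, hp.dvd_factorial] at h
      omega
    let f : ↥(Subring.closure {((n.factorial : ℚ))⁻¹}) →+* F :=
      IsLocalization.Away.lift (n.factorial : ℤ) hFu
    obtain ⟨a, ha⟩ := IsCyclic.exists_monoid_generator (α := Fˣ)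
    refine ⟨Polynomial.eval₂RingHom f (a : F), fun y => ?_⟩
    by_cases hy : y = 0
    · exact ⟨0, by simp [hy]⟩
    · obtain ⟨k, hk⟩ := Submonoid.mem_powers_iff _ _ |>.mp (ha (Units.mk0 y hy))
      refine ⟨Polynomial.X ^ k, ?_⟩
      have := congrArg Units.val hk
      simpa using this
end

section
/- Let p be a prime, let n ≥ 2 be an integer, let F be a finite field extension of ℚ_p, and let α ∈ F be an element such that the ℚ_p-subalgebra of F generated by α equals F. Then the subring R = ℤ[α, 1/(p·n!)] of F (the smallest subring of F containing α and 1/(p·n!)) is dense in F, and every proper ideal I of R satisfies card(R/I) > n; in particular, R is a finitely generated ring with no proper ideals of index at most n. -/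
/-- for a finite extension `F = ℚ_p[α]` of `ℚ_p`, the subring
`ℤ[α, 1/(p·n!)]` is dense in `F` and has no proper ideals of index ≤ n; in particular
it is a finitely generated ring. -/
theorem stmt_14 (p : ℕ) [Fact p.Prime] (n : ℕ) (hn : 2 ≤ n)
    (F : Type) [NormedField F] [NormedAlgebra ℚ_[p] F] [FiniteDimensional ℚ_[p] F]
    (α : F) (hα : Algebra.adjoin ℚ_[p] {α} = ⊤) :
    Dense ((Subring.closure {α, ((p : F) * (n.factorial : F))⁻¹} : Subring F) : Set F) ∧
    (∀ I : Ideal ↥(Subring.closure {α, ((p : F) * (n.factorial : F))⁻¹}), I ≠ ⊤ →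
      (n : Cardinal) <
        Cardinal.mk (↥(Subring.closure {α, ((p : F) * (n.factorial : F))⁻¹}) ⧸ I)) ∧
    Algebra.FiniteType ℤ ↥(Subring.closure {α, ((p : F) * (n.factorial : F))⁻¹}) := by
  have hchar : CharZero F := charZero_of_injective_algebraMap (algebraMap ℚ_[p] F).injective
  have hp0 : (p : F) ≠ 0 := Nat.cast_ne_zero.mpr (Fact.out : p.Prime).ne_zero
  have hf0 : (n.factorial : F) ≠ 0 := Nat.cast_ne_zero.mpr n.factorial_ne_zero
  set R := Subring.closure {α, ((p : F) * (n.factorial : F))⁻¹} with hR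
  have hαR : α ∈ R := Subring.subset_closure (by simp)
  have hcR : ((p : F) * (n.factorial : F))⁻¹ ∈ R := Subring.subset_closure (by simp)
  refine ⟨?_, ?_, ?_⟩
  · let S : Subring ℚ_[p] := R.topologicalClosure.comap (algebraMap ℚ_[p] F)
    have hSc : IsClosed (S : Set ℚ_[p]) :=
      R.isClosed_topologicalClosure.preimage (continuous_algebraMap ℚ_[p] F)
    have hint : ∀ z : ℤ_[p], (z : ℚ_[p]) ∈ S := by
      intro z
      have hc : IsClosed {z : ℤ_[p] | (z : ℚ_[p]) ∈ S} :=
        hSc.preimage continuous_subtype_val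
      refine PadicInt.denseRange_intCast.induction_on (p := fun z : ℤ_[p] => (z : ℚ_[p]) ∈ S)
        z hc ?_
      intro a
      simp
    have hpinv : ((p : ℚ_[p]))⁻¹ ∈ S := by
      change algebraMap ℚ_[p] F _ ∈ R.topologicalClosure
      apply R.le_topologicalClosure
      have : algebraMap ℚ_[p] F ((p : ℚ_[p]))⁻¹ =
          (n.factorial : F) * ((p : F) * (n.factorial : F))⁻¹ := by
        rw [map_inv₀, map_natCast]
        field_simp
      rw [this]
      exact R.mul_mem (natCast_mem R _) hcR
    have hpp : (p : ℚ_[p]) ≠ 0 := Nat.cast_ne_zero.mpr (Fact.out : p.Prime).ne_zero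
    have hall : ∀ x : ℚ_[p], x ∈ S := by
      intro x
      obtain ⟨k, hk⟩ : ∃ k : ℕ, ‖x * (p : ℚ_[p]) ^ k‖ ≤ 1 := by
        have h1 : Filter.Tendsto (fun k : ℕ => x * (p : ℚ_[p]) ^ k) Filter.atTop (nhds (x * 0)) :=
          (tendsto_pow_atTop_nhds_zero_of_norm_lt_one Padic.norm_p_lt_one).const_mul x
        have h2 := h1.norm
        rw [mul_zero, norm_zero] at h2
        exact (h2.eventually_le_const one_pos).exists
      have := S.mul_mem (hint ⟨_, hk⟩) (S.pow_mem hpinv k)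
      convert this using 1
      change x = x * (p : ℚ_[p]) ^ k * (p : ℚ_[p])⁻¹ ^ k
      rw [mul_assoc, ← mul_pow, mul_inv_cancel₀ hpp, one_pow, mul_one]
    have htop : ∀ y : F, y ∈ R.topologicalClosure := by
      intro y
      have hy : y ∈ Algebra.adjoin ℚ_[p] {α} := hα ▸ Algebra.mem_top
      induction hy using Algebra.adjoin_induction with
      | mem x hx =>
        rw [Set.mem_singleton_iff] at hx
        exact R.le_topologicalClosure (hx ▸ hαR)
      | algebraMap r => exact hall r
      | add x y _ _ hx hy => exact add_mem hx hy
      | mul x y _ _ hx hy => exact mul_mem hx hy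
    exact fun y => htop y
  · intro I hI
    by_contra hle
    rw [not_lt] at hle
    have hfin : Finite (R ⧸ I) :=
      Cardinal.lt_aleph0_iff_finite.mp (hle.trans_lt (Cardinal.natCast_lt_aleph0))
    have hcard : Nat.card (R ⧸ I) ≤ n := by
      rw [← Nat.cast_card] at hle
      exact_mod_cast hle
    have hdvd : Nat.card (R ⧸ I) ∣ n.factorial := Nat.dvd_factorial Nat.card_pos hcard
    have hz : (n.factorial : R ⧸ I) = 0 := by
      obtain ⟨c, hc⟩ := hdvd
      have h0 : (Nat.card (R ⧸ I) : R ⧸ I) = 0 := by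
        rw [← nsmul_one]; exact card_nsmul_eq_zero'
      rw [hc, Nat.cast_mul, h0, zero_mul]
    have hmem : (n.factorial : R) ∈ I := by
      rw [← Ideal.Quotient.eq_zero_iff_mem, map_natCast, hz]
    apply hI
    rw [Ideal.eq_top_iff_one]
    have h1 : (1 : R) = ((p : R) * ⟨_, hcR⟩) * (n.factorial : R) := by
      apply Subtype.ext
      push_cast
      field_simp
    rw [h1]
    exact I.mul_mem_left _ hmem
  · have hfg : Algebra.FiniteType ℤ (Algebra.adjoin ℤ
        ({α, ((p : F) * (n.factorial : F))⁻¹} : Set F)) :=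
      (Subalgebra.fg_iff_finiteType _).mp
        (Subalgebra.fg_def.mpr ⟨_, Set.toFinite _, rfl⟩)
    have hEq : ∀ x, x ∈ Algebra.adjoin ℤ ({α, ((p : F) * (n.factorial : F))⁻¹} : Set F) → x ∈ R := by
      intro x hx
      rwa [Algebra.adjoin_int] at hx
    let f : Algebra.adjoin ℤ ({α, ((p : F) * (n.factorial : F))⁻¹} : Set F) →+* R :=
      (Subring.inclusion (S := (Algebra.adjoin ℤ
        ({α, ((p : F) * (n.factorial : F))⁻¹} : Set F)).toSubring) (T := R) hEq)
    refine Algebra.FiniteType.of_surjective f.toIntAlgHom ?_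
    rintro ⟨x, hx⟩
    refine ⟨⟨x, ?_⟩, rfl⟩
    rw [Algebra.adjoin_int]
    exact hx
end

section
/- For every integer n ≥ 2, the pair (SL_2(ℤ) ⋉ V_n(ℤ), V_n(ℤ)) has relative property (T), where V_n(ℤ) is identified with the normal subgroup {1} ⋉ V_n(ℤ) of the semidirect product. -/
/-- `V_n(ℤ)`: the module of homogeneous polynomials of degree `n - 1` in two variables
over `ℤ`. -/
noncomputable abbrev VnZ (n : ℕ) : Submodule ℤ (MvPolynomial (Fin 2) ℤ) :=
  MvPolynomial.homogeneousSubmodule (Fin 2) ℤ (n - 1)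

open MeasureTheory

namespace RelT

section spectral

/-- monomial character on the torus -/
noncomputable def chi {ι : Type} [Fintype ι] (c : ι → ℤ) : C(ι → Circle, ℂ) where
  toFun z := ((∏ j, z j ^ c j : Circle) : ℂ)
  continuous_toFun := by
    have h : Continuous fun z : ι → Circle => ∏ j, z j ^ c j :=
      continuous_finsetProd _ fun j _ => (continuous_apply j).zpow (c j)
    exact continuous_subtype_val.comp h

theorem gelfand_part {ι : Type} [Fintype ι] {B : Type} [CommCStarAlgebra B]
    {Γ : Type} [CommGroup Γ] (r : Γ →* unitary B) (x : ι → Γ) :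
    ∃ Ψ : C(ι → Circle, ℂ) →⋆ₐ[ℂ] B, ∀ c : ι → ℤ, Ψ (chi c) = (r (∏ j, x j ^ c j) : B) := by
  classical
  have hmem : ∀ (ψ : WeakDual.characterSpace ℂ B) (u : unitary B),
      ψ (u : B) ∈ Submonoid.unitSphere ℂ := by
    intro ψ u
    have h1 : ψ (u : B) ∈ unitary ℂ := Unitary.map_mem ψ u.2
    have h2 : ‖ψ (u : B)‖ = 1 := CStarRing.norm_of_mem_unitary h1
    simpa [Submonoid.unitSphere] using h2
  let e : WeakDual.characterSpace ℂ B → Γ →* Circle := fun ψ =>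
    { toFun := fun γ => (⟨ψ (r γ : B), hmem ψ (r γ)⟩ : Circle)
      map_one' := by apply Circle.ext; simp
      map_mul' := by intro a b; apply Circle.ext; simp; rfl }
  have he : ∀ ψ γ, ((e ψ γ : Circle) : ℂ) = ψ (r γ : B) := fun _ _ => rfl
  let Φ : C(WeakDual.characterSpace ℂ B, ι → Circle) :=
    { toFun := fun ψ i => e ψ (x i)
      continuous_toFun := by
        refine continuous_pi fun i => ?_
        refine Continuous.subtype_mk ?_ _
        exact (WeakDual.eval_continuous (r (x i) : B)).comp continuous_subtype_val }
  refine ⟨((gelfandStarTransform B).symm : C(WeakDual.characterSpace ℂ B, ℂ) →⋆ₐ[ℂ] B).comp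
    (ContinuousMap.compStarAlgHom' ℂ ℂ Φ), fun c => ?_⟩
  change (gelfandStarTransform B).symm ((chi c).comp Φ) = _
  have : (chi c).comp Φ = gelfandStarTransform B (r (∏ j, x j ^ c j) : B) := by
    ext ψ
    change ((∏ j, (e ψ (x j)) ^ c j : Circle) : ℂ) = ψ (r (∏ j, x j ^ c j) : B)
    rw [← he, map_prod]
    simp only [map_zpow]
  rw [this]
  exact (gelfandStarTransform B).symm_apply_apply _

theorem spectral {ι : Type} [Fintype ι] {H : Type} [NormedAddCommGroup H] [InnerProductSpace ℂ H]
    [CompleteSpace H] {Γ : Type} [CommGroup Γ] (ρ : Γ →* (H ≃ₗᵢ[ℂ] H)) (x : ι → Γ) :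
    ∃ Ψ : C(ι → Circle, ℂ) →⋆ₐ[ℂ] (H →L[ℂ] H), ∀ (c : ι → ℤ) (v : H),
      Ψ (chi c) v = ρ (∏ j, x j ^ c j) v := by
  let r0 : Γ →* unitary (H →L[ℂ] H) :=
    (Unitary.linearIsometryEquiv (𝕜 := ℂ) (H := H)).symm.toMonoidHom.comp ρ
  let s : Set (H →L[ℂ] H) := Set.range fun γ => (r0 γ : H →L[ℂ] H)
  have h1 : ∀ a ∈ s, ∀ b ∈ s, a * b = b * a := by
    rintro _ ⟨a, rfl⟩ _ ⟨b, rfl⟩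
    have := congrArg (fun u : unitary (H →L[ℂ] H) => (u : H →L[ℂ] H))
      (show r0 a * r0 b = r0 b * r0 a by rw [← map_mul, ← map_mul, mul_comm])
    exact this
  have h2 : ∀ a ∈ s, ∀ b ∈ s, a * star b = star b * a := by
    rintro _ ⟨a, rfl⟩ _ ⟨b, rfl⟩
    refine h1 _ ⟨a, rfl⟩ _ ⟨b⁻¹, ?_⟩
    simp only [map_inv]
    rfl
  let A := (StarAlgebra.adjoin ℂ s).topologicalClosure
  have hcl : IsClosed (A : Set (H →L[ℂ] H)) := StarSubalgebra.isClosed_topologicalClosure _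
  have := StarAlgebra.isMulCommutative_adjoin ℂ h1 h2
  have hc : ∀ a b : A, a * b = b * a :=
    (StarSubalgebra.commRingTopologicalClosure (StarAlgebra.adjoin ℂ s)
      (fun a b => mul_comm' a b)).mul_comm
  let _ : CommCStarAlgebra A := { (inferInstance : CStarAlgebra A) with mul_comm := hc }
  have hs : ∀ γ, (r0 γ : H →L[ℂ] H) ∈ A := fun γ =>
    StarSubalgebra.le_topologicalClosure _ (StarAlgebra.subset_adjoin ℂ s ⟨γ, rfl⟩)
  let r : Γ →* unitary A :=
    { toFun := fun γ => ⟨⟨r0 γ, hs γ⟩, by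
        constructor
        · apply Subtype.ext; exact (r0 γ).2.1
        · apply Subtype.ext; exact (r0 γ).2.2⟩
      map_one' := by
        apply Subtype.ext; apply Subtype.ext
        change ((r0 1 : unitary (H →L[ℂ] H)) : H →L[ℂ] H) = 1
        rw [map_one]; rfl
      map_mul' := by
        intro a b
        apply Subtype.ext; apply Subtype.ext
        change ((r0 (a * b) : unitary (H →L[ℂ] H)) : H →L[ℂ] H) = _
        rw [map_mul]; rfl }
  obtain ⟨Ψ, hΨ⟩ := gelfand_part r x
  refine ⟨(StarSubalgebra.subtype A).comp Ψ, fun c v => ?_⟩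
  change ((Ψ (chi c) : A) : H →L[ℂ] H) v = _
  rw [hΨ]
  rfl

end spectral

section rmk
variable {X : Type} [TopologicalSpace X] [CompactSpace X] [T2Space X] [MeasurableSpace X]
  [BorelSpace X]

theorem exists_measure (L : C(X, ℝ) →ₗ[ℝ] ℝ) (hL : ∀ f : C(X, ℝ), 0 ≤ f → 0 ≤ L f) :
    ∃ μ : Measure X, IsFiniteMeasure μ ∧ ∀ f : C(X, ℝ), ∫ z, f z ∂μ = L f := by
  let Λ0 : CompactlySupportedContinuousMap X ℝ →ₗ[ℝ] ℝ :=
    { toFun := fun f => L f.toContinuousMap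
      map_add' := fun f g => L.map_add f.toContinuousMap g.toContinuousMap
      map_smul' := fun a f => L.map_smul a f.toContinuousMap }
  let Λ := PositiveLinearMap.mk₀ Λ0 (fun f hf => hL _ fun z => CompactlySupportedContinuousMap.le_def.mp hf z)
  refine ⟨RealRMK.rieszMeasure Λ, ?_, fun f => ?_⟩
  · have : IsFiniteMeasureOnCompacts (RealRMK.rieszMeasure Λ) := by
      unfold RealRMK.rieszMeasure; infer_instance
    infer_instance
  · exact RealRMK.integral_rieszMeasure Λ (CompactlySupportedContinuousMap.continuousMapEquiv f)
end rmk
end RelT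

namespace RelT

section meas
open scoped InnerProductSpace
variable {X : Type} [MetricSpace X] [CompactSpace X] [MeasurableSpace X] [BorelSpace X]
  {H : Type} [NormedAddCommGroup H] [InnerProductSpace ℂ H] [CompleteSpace H]

/-- complexification of a real continuous function -/
def cplx (f : C(X, ℝ)) : C(X, ℂ) := ⟨fun z => (f z : ℂ), by fun_prop⟩

theorem inner_self_eq (Ψ : C(X, ℂ) →⋆ₐ[ℂ] (H →L[ℂ] H)) (v : H) (f : C(X, ℂ)) :
    ⟪v, Ψ (star f * f) v⟫_ℂ = (‖Ψ f v‖ : ℂ) ^ 2 := by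
  rw [map_mul, map_star, mul_apply_eq_comp, ContinuousLinearMap.star_eq_adjoint,
    ContinuousLinearMap.adjoint_inner_right, inner_self_eq_norm_sq_to_K]
  rfl

theorem spec_measure (Ψ : C(X, ℂ) →⋆ₐ[ℂ] (H →L[ℂ] H)) (v : H) :
    ∃ μ : Measure X, IsFiniteMeasure μ ∧
      (∀ f : C(X, ℝ), ∫ z, f z ∂μ = (⟪v, Ψ (cplx f) v⟫_ℂ).re) ∧
      (∀ f : C(X, ℂ), ‖Ψ f v‖ ^ 2 = ∫ z, ‖f z‖ ^ 2 ∂μ) := by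
  let L : C(X, ℝ) →ₗ[ℝ] ℝ :=
    { toFun := fun f => (⟪v, Ψ (cplx f) v⟫_ℂ).re
      map_add' := by
        intro f g
        have : cplx (f + g) = cplx f + cplx g := by ext z; simp [cplx]
        rw [this, map_add, add_apply, inner_add_right, Complex.add_re]
      map_smul' := by
        intro a f
        have : cplx (a • f) = (a : ℂ) • cplx f := by ext z; simp [cplx]
        rw [this, map_smul, smul_apply, inner_smul_right]
        simp }
  have key : ∀ (f : C(X, ℂ)) (g : C(X, ℝ)), (∀ z, g z = ‖f z‖ ^ 2) → L g = ‖Ψ f v‖ ^ 2 := by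
    intro f g h
    have h1 : cplx g = star f * f := by
      ext z
      simp only [cplx, ContinuousMap.coe_mk, h, ContinuousMap.mul_apply, ContinuousMap.star_apply]
      rw [RCLike.star_def, Complex.conj_mul']
      push_cast; rfl
    change (⟪v, Ψ (cplx g) v⟫_ℂ).re = _
    rw [h1, inner_self_eq]
    norm_cast
  obtain ⟨μ, hμ, h⟩ := exists_measure L (by
    intro f hf
    let g : C(X, ℂ) := ⟨fun z => ((Real.sqrt (f z) : ℝ) : ℂ), by fun_prop⟩
    rw [key g f]
    · positivity
    · intro z
      have : 0 ≤ f z := hf z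
      simp [g, Real.sq_sqrt this])
  refine ⟨μ, hμ, h, fun f => ?_⟩
  let g : C(X, ℝ) := ⟨fun z => ‖f z‖ ^ 2, by fun_prop⟩
  rw [← key f g (fun _ => rfl), ← h]
  rfl

theorem quasi_inv (Ψ : C(X, ℂ) →⋆ₐ[ℂ] (H →L[ℂ] H)) (v : H) (hv : ‖v‖ = 1)
    (μ : Measure X) [IsFiniteMeasure μ]
    (hμ : ∀ f : C(X, ℝ), ∫ z, f z ∂μ = (⟪v, Ψ (cplx f) v⟫_ℂ).re)
    (a : C(X, X)) (W : H ≃ₗᵢ[ℂ] H)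
    (hW : ∀ (f : C(X, ℂ)) (w : H), Ψ (f.comp a) (W w) = W (Ψ f w))
    (F : Set X) (hF : IsClosed F) :
    |μ.real (a ⁻¹' F) - μ.real F| ≤ 2 * ‖W v - v‖ := by
  have step : ∀ f : C(X, ℝ), (∀ z, ‖f z‖ ≤ 1) →
      |∫ z, f (a z) ∂μ - ∫ z, f z ∂μ| ≤ 2 * ‖W v - v‖ := by
    intro f hf
    have h1 : ∫ z, f (a z) ∂μ = (⟪W.symm v, Ψ (cplx f) (W.symm v)⟫_ℂ).re := by
      have := hμ (f.comp a)
      simp only [ContinuousMap.comp_apply] at this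
      rw [this, show cplx (f.comp a) = (cplx f).comp a from rfl]
      have h2 := hW (cplx f) (W.symm v)
      rw [W.apply_symm_apply] at h2
      rw [h2, ← W.inner_map_map (W.symm v), W.apply_symm_apply]
    rw [h1, hμ f, ← Complex.sub_re]
    set w := W.symm v
    have hw : ‖w‖ = 1 := by simp [w, hv]
    have hwv : ‖w - v‖ = ‖W v - v‖ := by
      rw [← W.norm_map (w - v), map_sub, norm_sub_rev]
      simp [w]
    have hn : ‖Ψ (cplx f)‖ ≤ 1 := by
      refine (NonUnitalStarAlgHom.norm_apply_le Ψ _).trans ?_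
      rw [ContinuousMap.norm_le _ zero_le_one]
      intro z
      simpa [cplx] using hf z
    have h3 : ⟪w, Ψ (cplx f) w⟫_ℂ - ⟪v, Ψ (cplx f) v⟫_ℂ
        = ⟪w - v, Ψ (cplx f) w⟫_ℂ + ⟪v, Ψ (cplx f) (w - v)⟫_ℂ := by
      rw [map_sub, inner_sub_left, inner_sub_right]; ring
    have hop : ∀ y : H, ‖Ψ (cplx f) y‖ ≤ ‖y‖ := fun y =>
      ((Ψ (cplx f)).le_opNorm y).trans (by nlinarith [norm_nonneg y])
    refine (Complex.abs_re_le_norm _).trans ?_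
    rw [h3]
    refine (norm_add_le _ _).trans ?_
    have e1 : ‖⟪w - v, Ψ (cplx f) w⟫_ℂ‖ ≤ ‖w - v‖ := by
      refine (norm_inner_le_norm _ _).trans ?_
      have := hop w
      rw [hw] at this
      nlinarith [norm_nonneg (w - v)]
    have e2 : ‖⟪v, Ψ (cplx f) (w - v)⟫_ℂ‖ ≤ ‖w - v‖ := by
      refine (norm_inner_le_norm _ _).trans ?_
      rw [hv, one_mul]
      exact hop _
    rw [← hwv]; linarith
  have hδ : ∀ n : ℕ, (0 : ℝ) < 1 / ((n : ℝ) + 1) := fun n => by positivity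
  have t1 := tendsto_integral_thickenedIndicator_of_isClosed μ hF hδ
    tendsto_one_div_add_atTop_nhds_zero_nat
  have t2 := tendsto_integral_thickenedIndicator_of_isClosed (μ.map a) hF hδ
    tendsto_one_div_add_atTop_nhds_zero_nat
  rw [map_measureReal_apply a.continuous.measurable hF.measurableSet] at t2
  refine le_of_tendsto (t2.sub t1).abs (Filter.Eventually.of_forall fun n => ?_)
  rw [integral_map a.continuous.aemeasurable (by
    apply Continuous.aestronglyMeasurable
    exact NNReal.continuous_coe.comp (thickenedIndicator (hδ n) F).continuous)]
  let f : C(X, ℝ) := ⟨fun z => ((thickenedIndicator (hδ n) F z : NNReal) : ℝ),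
    NNReal.continuous_coe.comp (thickenedIndicator (hδ n) F).continuous⟩
  refine step f fun z => ?_
  have := thickenedIndicator_le_one (hδ n) F z
  simpa [f] using this

theorem atom (Ψ : C(X, ℂ) →⋆ₐ[ℂ] (H →L[ℂ] H)) (v : H)
    (μ : Measure X) [IsFiniteMeasure μ]
    (hμ : ∀ f : C(X, ℂ), ‖Ψ f v‖ ^ 2 = ∫ z, ‖f z‖ ^ 2 ∂μ) (x0 : X) (h0 : μ.real {x0} ≠ 0) :
    ∃ w : H, w ≠ 0 ∧ ∀ f : C(X, ℂ), Ψ f w = f x0 • w := by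
  classical
  let q : X → ℝ := fun x => (1 + dist x x0)⁻¹
  have hqpos : ∀ x, 0 < q x := fun x => by positivity
  have hqle : ∀ x, q x ≤ 1 := fun x => inv_le_one_of_one_le₀ (by linarith [dist_nonneg (x := x) (y := x0)])
  have hqlt : ∀ x, x ≠ x0 → q x < 1 := fun x hx =>
    inv_lt_one_of_one_lt₀ (by linarith [dist_pos.mpr hx])
  have hq0 : q x0 = 1 := by simp [q]
  have hqc : Continuous q := Continuous.inv₀ (by fun_prop) (fun x => by positivity)
  let h : ℕ → C(X, ℂ) := fun k => ⟨fun x => ((q x ^ k : ℝ) : ℂ), by fun_prop⟩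
  let g : ℕ → X → ℝ := fun k x => ({x0}ᶜ : Set X).indicator (fun x => q x ^ k) x
  have hms : MeasurableSet ({x0}ᶜ : Set X) := (measurableSet_singleton x0).compl
  have hgm : ∀ k, AEStronglyMeasurable (g k) μ := fun k =>
    (Continuous.stronglyMeasurable (hqc.pow k)).aestronglyMeasurable.indicator hms
  have hg01 : ∀ k x, 0 ≤ g k x ∧ g k x ≤ 1 := by
    intro k x
    simp only [g, Set.indicator]
    split_ifs
    · exact ⟨(pow_pos (hqpos x) k).le, pow_le_one₀ (hqpos x).le (hqle x)⟩
    · simp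
  have hgi : ∀ k, Integrable (g k) μ := fun k =>
    Integrable.of_bound (hgm k) 1 (Filter.Eventually.of_forall fun x => by
      rw [Real.norm_eq_abs, abs_of_nonneg (hg01 k x).1]; exact (hg01 k x).2)
  have hgt : Filter.Tendsto (fun k => ∫ x, g k x ∂μ) Filter.atTop (nhds 0) := by
    have := tendsto_integral_of_dominated_convergence (μ := μ) (F := g) (f := fun _ => (0 : ℝ))
      (fun _ => (1 : ℝ)) hgm (integrable_const _)
      (fun k => Filter.Eventually.of_forall fun x => by
        rw [Real.norm_eq_abs, abs_of_nonneg (hg01 k x).1]; exact (hg01 k x).2)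
      (Filter.Eventually.of_forall fun x => by
        by_cases hx : x = x0
        · simp [g, hx]
        · have : ∀ k, g k x = q x ^ k := fun k => by simp [g, hx]
          simp only [this]
          exact tendsto_pow_atTop_nhds_zero_of_lt_one (hqpos x).le (hqlt x hx))
    simpa using this
  have hcont : ∀ f : C(X, ℂ), Integrable (fun z => ‖f z‖ ^ 2) μ := fun f => by
    have : Continuous fun z => ‖f z‖ ^ 2 := by fun_prop
    exact this.integrable_of_hasCompactSupport (HasCompactSupport.of_compactSpace _)
  have hbound : ∀ (f : C(X, ℂ)) (C : ℝ) (k : ℕ), (∀ z, ‖f z‖ ^ 2 ≤ C * g k z) →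
      ‖Ψ f v‖ ^ 2 ≤ C * ∫ x, g k x ∂μ := by
    intro f C k hf
    rw [hμ f, ← integral_const_mul]
    exact integral_mono (hcont f) ((hgi k).const_mul C) hf
  have hcau : CauchySeq fun k => Ψ (h k) v := by
    refine cauchySeq_of_le_tendsto_0 (fun N => Real.sqrt (∫ x, g N x ∂μ)) ?_ ?_
    · intro n m N hn hm
      apply Real.le_sqrt_of_sq_le
      rw [dist_eq_norm, ← sub_apply, ← map_sub]
      have := hbound (h n - h m) 1 N ?_
      · simpa using this
      · intro z
        have e : (h n - h m) z = ((q z ^ n - q z ^ m : ℝ) : ℂ) := by simp [h]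
        rw [e, Complex.norm_real, Real.norm_eq_abs, sq_abs, one_mul]
        by_cases hz : z = x0
        · simp [g, hz, hq0]
        · have e2 : g N z = q z ^ N := by simp [g, hz]
          rw [e2]
          have b1 := pow_le_pow_of_le_one (hqpos z).le (hqle z) hn
          have b2 := pow_le_pow_of_le_one (hqpos z).le (hqle z) hm
          have b3 := pow_pos (hqpos z) n
          have b4 := pow_pos (hqpos z) m
          have b5 := pow_le_one₀ (n := N) (hqpos z).le (hqle z)
          have b6 := pow_pos (hqpos z) N
          have : |q z ^ n - q z ^ m| ≤ q z ^ N := by rw [abs_le]; constructor <;> linarith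
          rw [← sq_abs]
          nlinarith [abs_nonneg (q z ^ n - q z ^ m)]
    · simpa using hgt.sqrt
  obtain ⟨w, hw⟩ := cauchySeq_tendsto_of_complete hcau
  refine ⟨w, ?_, fun f => ?_⟩
  · rintro rfl
    apply h0
    have h1 : Filter.Tendsto (fun k => ‖Ψ (h k) v‖ ^ 2) Filter.atTop (nhds 0) := by
      simpa using hw.norm.pow 2
    refine le_antisymm (ge_of_tendsto' h1 fun k => ?_) measureReal_nonneg
    rw [hμ, ← integral_indicator_one (measurableSet_singleton x0)]
    refine integral_mono ?_ (hcont _) fun z => ?_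
    · exact (integrable_const (1 : ℝ)).indicator (measurableSet_singleton x0)
    · by_cases hz : z = x0
      · simp [hz, h, hq0]
      · simp [hz]
  · let f' : C(X, ℂ) := f - ContinuousMap.const X (f x0)
    have hf' : Ψ f' = Ψ f - f x0 • 1 := by
      have : f' = f - f x0 • 1 := by ext z; simp [f']
      rw [this, map_sub, map_smul, map_one]
    suffices Ψ f' w = 0 by
      rw [hf'] at this
      simpa [sub_eq_zero] using this
    have h1 : Filter.Tendsto (fun k => ‖Ψ f' (Ψ (h k) v)‖ ^ 2) Filter.atTop
        (nhds (‖Ψ f' w‖ ^ 2)) := (((Ψ f').continuous.tendsto w).comp hw).norm.pow 2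
    have h2 : Filter.Tendsto (fun k => ‖f'‖ ^ 2 * ∫ x, g k x ∂μ) Filter.atTop (nhds 0) := by
      simpa using hgt.const_mul (‖f'‖ ^ 2)
    have h3 : ‖Ψ f' w‖ ^ 2 ≤ 0 := by
      refine le_of_tendsto_of_tendsto' h1 h2 fun k => ?_
      rw [← mul_apply_eq_comp, ← map_mul]
      refine hbound _ _ _ fun z => ?_
      by_cases hz : z = x0
      · simp [hz, f', g]
      · have e2 : g k z = q z ^ k := by simp [g, hz]
        have e3 : ‖(h k) z‖ = q z ^ k := by
          simp only [h, ContinuousMap.coe_mk, Complex.norm_real, Real.norm_eq_abs]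
          exact abs_of_pos (pow_pos (hqpos z) k)
        rw [e2, ContinuousMap.mul_apply, norm_mul, e3, mul_pow]
        have b5 := pow_le_one₀ (n := k) (hqpos z).le (hqle z)
        have b6 := pow_pos (hqpos z) k
        have b7 : ‖f' z‖ ^ 2 ≤ ‖f'‖ ^ 2 := by
          gcongr; exact f'.norm_coe_le_norm z
        have b8 : (q z ^ k) ^ 2 ≤ q z ^ k := by nlinarith
        gcongr
    have h4 : ‖Ψ f' w‖ = 0 := by
      have := sq_nonneg ‖Ψ f' w‖
      exact pow_eq_zero_iff (two_ne_zero) |>.mp (le_antisymm h3 this)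
    exact norm_eq_zero.mp h4

end meas
end RelT
namespace RelT
section poly
open Polynomial

theorem coeff_prod_bound (s : Multiset ℂ) (hs : ∀ r ∈ s, 2 ≤ ‖r‖) (i : ℕ) :
    ‖((s.map fun r => X - C r).prod).coeff i‖ * 2 ^ i ≤
      (s.card.choose i : ℝ) * ‖((s.map fun r => X - C r).prod).coeff 0‖ := by
  induction s using Multiset.induction_on generalizing i with
  | empty =>
    rcases i with _ | i
    · simp
    · simp [coeff_one]
  | cons r s ih =>
    have ih' := ih (fun r hr => hs r (Multiset.mem_cons_of_mem hr))
    have hr := hs r (Multiset.mem_cons_self r s)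
    set Q := (s.map fun r => X - C r).prod with hQ
    rw [Multiset.map_cons, Multiset.prod_cons, ← hQ, Multiset.card_cons]
    have h0 : ((X - C r) * Q).coeff 0 = - (r * Q.coeff 0) := by
      simp [mul_coeff_zero]
    rcases i with _ | i
    · simp
    · have h1 : ((X - C r) * Q).coeff (i + 1) = Q.coeff i - r * Q.coeff (i + 1) := by
        rw [sub_mul, coeff_sub, coeff_X_mul, coeff_C_mul]
      rw [h0, h1, norm_neg, norm_mul, Nat.choose_succ_succ]
      have e1 := ih' i
      have e2 := ih' (i + 1)
      have e3 : ‖Q.coeff i - r * Q.coeff (i + 1)‖ ≤ ‖Q.coeff i‖ + ‖r‖ * ‖Q.coeff (i + 1)‖ := by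
        rw [← norm_mul]; exact norm_sub_le _ _
      push_cast
      have hp : (0 : ℝ) < 2 ^ i := by positivity
      have hc : 0 ≤ (s.card.choose i : ℝ) * ‖Q.coeff 0‖ := by positivity
      calc ‖Q.coeff i - r * Q.coeff (i + 1)‖ * 2 ^ (i + 1)
          ≤ (‖Q.coeff i‖ + ‖r‖ * ‖Q.coeff (i + 1)‖) * 2 ^ (i + 1) := by gcongr
        _ = 2 * (‖Q.coeff i‖ * 2 ^ i) + ‖r‖ * (‖Q.coeff (i + 1)‖ * 2 ^ (i + 1)) := by ring
        _ ≤ ‖r‖ * ((s.card.choose i : ℝ) * ‖Q.coeff 0‖) +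
            ‖r‖ * ((s.card.choose (i + 1) : ℝ) * ‖Q.coeff 0‖) := by
          refine add_le_add ?_ (mul_le_mul_of_nonneg_left e2 (norm_nonneg r))
          nlinarith
        _ = _ := by ring

theorem coeff_bound (d : ℕ) (q : ℂ[X]) (hq : q ≠ 0) (hd : q.natDegree ≤ d)
    (hr : ∀ r : ℂ, q.IsRoot r → 2 ≤ ‖r‖) (i : ℕ) (hi : i ≠ 0) (hid : i ≤ d) :
    ‖q.coeff i‖ < (d.choose i : ℝ) * ‖q.coeff 0‖ := by
  have hs : q.Splits := IsAlgClosed.splits q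
  have hprod := hs.eq_prod_roots
  have hcard : q.roots.card = q.natDegree := hs.natDegree_eq_card_roots.symm
  have hb := coeff_prod_bound q.roots (fun r h => hr r (isRoot_of_mem_roots h)) i
  have h0 : q.coeff 0 ≠ 0 := by
    intro h
    have := hr 0 (by rw [IsRoot.def, ← coeff_zero_eq_eval_zero, h])
    simp at this
    linarith
  have hpos : 0 < ‖q.coeff 0‖ := norm_pos_iff.mpr h0
  have hl : 0 ≤ ‖q.leadingCoeff‖ := norm_nonneg _
  have hq' : ‖q.coeff i‖ * 2 ^ i ≤ (q.natDegree.choose i : ℝ) * ‖q.coeff 0‖ := by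
    have c1 : ∀ j, ‖q.coeff j‖ = ‖q.leadingCoeff‖ *
        ‖((q.roots.map fun r => X - C r).prod).coeff j‖ := by
      intro j
      conv_lhs => rw [hprod]
      rw [coeff_C_mul, norm_mul]
    rw [c1, c1, ← hcard]
    nlinarith
  have hch : (q.natDegree.choose i : ℝ) ≤ d.choose i := by
    exact_mod_cast Nat.choose_le_choose i hd
  have hch0 : (0 : ℝ) < d.choose i := by exact_mod_cast Nat.choose_pos hid
  have h2 : (2 : ℝ) ≤ 2 ^ i := by
    calc (2 : ℝ) = 2 ^ 1 := by norm_num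
      _ ≤ 2 ^ i := pow_le_pow_right₀ (by norm_num) (Nat.one_le_iff_ne_zero.mpr hi)
  have : ‖q.coeff i‖ * 2 ^ i ≤ d.choose i * ‖q.coeff 0‖ := hq'.trans (by gcongr)
  have h3 : 0 < (d.choose i : ℝ) * ‖q.coeff 0‖ := by positivity
  nlinarith [norm_nonneg (q.coeff i)]

/-- matrix of the unipotent element -/
def aU (d m : ℕ) (i j : Fin (d + 1)) : ℤ :=
  if i ≤ j then ((d - i : ℕ).choose (j - i : ℕ) : ℤ) * (m : ℤ) ^ (j - i : ℕ) else 0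

/-- real linear action -/
noncomputable def lin {d : ℕ} (a : Fin (d + 1) → Fin (d + 1) → ℤ) (θ : Fin (d + 1) → ℝ) :
    Fin (d + 1) → ℝ := fun i => ∑ j, (a i j : ℝ) * θ j

theorem taylor_lin (d m : ℕ) (θ : Fin (d + 1) → ℝ) (i : Fin (d + 1)) :
    (taylor (m : ℂ) (∑ j : Fin (d + 1), monomial (j : ℕ) ((d.choose j : ℂ) * (θ j : ℂ)))).coeff i
      = (d.choose i : ℂ) * (lin (aU d m) θ i : ℂ) := by
  rw [taylor_coeff, map_sum, eval_finsetSum, lin]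
  push_cast
  rw [Finset.mul_sum]
  refine Finset.sum_congr rfl fun j _ => ?_
  rw [hasseDeriv_monomial, eval_monomial]
  by_cases h : i ≤ j
  · have h' : (i : ℕ) ≤ j := h
    have := Nat.choose_mul (n := d) h'
    have hc : (d.choose j : ℂ) * ((j : ℕ).choose i : ℂ)
      = (d.choose i : ℂ) * ((d - i : ℕ).choose (j - i : ℕ) : ℂ) := by exact_mod_cast this
    simp only [aU, h, if_true]
    push_cast
    linear_combination (θ j : ℂ) * (m : ℂ) ^ (j - i : ℕ) * hc
  · have h' : (j : ℕ) < i := by simpa using h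
    simp [aU, h, Nat.choose_eq_zero_of_lt h']

open Classical in
theorem count (d : ℕ) (θ : Fin (d + 1) → ℝ) (hθ : θ ≠ 0) (M : ℕ) :
    ((Finset.range M).filter fun m => ∃ i : Fin (d + 1), i ≠ 0 ∧
      |lin (aU d m) θ 0| ≤ |lin (aU d m) θ i|).card ≤ d * 6 := by
  set p : ℂ[X] := ∑ j : Fin (d + 1), monomial (j : ℕ) ((d.choose j : ℂ) * (θ j : ℂ)) with hp
  have hcoe : ∀ i : Fin (d + 1), p.coeff i = (d.choose i : ℂ) * (θ i : ℂ) := by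
    intro i
    rw [hp, finsetSum_coeff, Finset.sum_eq_single i]
    · simp
    · intro j _ hj
      rw [coeff_monomial, if_neg]
      exact fun h => hj (Fin.ext h)
    · simp
  have hp0 : p ≠ 0 := by
    intro h
    apply hθ
    ext i
    have := hcoe i
    rw [h, coeff_zero, eq_comm, mul_eq_zero] at this
    rcases this with h1 | h1
    · exfalso
      have := Nat.choose_pos (n := d) (k := i) (Nat.lt_succ_iff.mp i.2)
      rw [Nat.cast_eq_zero] at h1
      omega
    · simpa using h1
  have hdeg : p.natDegree ≤ d := by
    refine natDegree_sum_le_of_forall_le _ _ fun j _ => ?_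
    exact (natDegree_monomial_le _).trans (Nat.lt_succ_iff.mp j.2)
  have hsub : ((Finset.range M).filter fun m => ∃ i : Fin (d + 1), i ≠ 0 ∧
      |lin (aU d m) θ 0| ≤ |lin (aU d m) θ i|) ⊆
      p.roots.toFinset.biUnion fun r => Finset.Icc (⌊r.re⌋₊ - 2) (⌊r.re⌋₊ + 3) := by
    intro m hm
    rw [Finset.mem_filter] at hm
    obtain ⟨-, i, hi, hle⟩ := hm
    by_contra hcon
    simp only [Finset.mem_biUnion, Multiset.mem_toFinset, Finset.mem_Icc, not_exists,
      not_and] at hcon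
    set q := taylor (m : ℂ) p with hq
    have hq0 : q ≠ 0 := by
      rw [hq]; intro h; exact hp0 (taylor_injective (m : ℂ) (by rw [h, map_zero]))
    have hlt := coeff_bound d q hq0 (by rw [hq, natDegree_taylor]; exact hdeg) (by
      intro r hr
      rw [IsRoot.def, hq, taylor_eval] at hr
      by_contra h2
      push Not at h2
      refine absurd ?_ (hcon (r + m) ((mem_roots hp0).mpr hr) ?_)
      · have h3 := Complex.abs_re_le_norm r
        rw [abs_le] at h3
        have h4 := Nat.lt_floor_add_one (r + m : ℂ).re
        have h5 : (r + m : ℂ).re = r.re + m := by simp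
        rw [h5] at h4 ⊢
        have : (m : ℝ) < (⌊r.re + m⌋₊ : ℝ) + 3 := by linarith
        exact_mod_cast this.le
      · have h3 := Complex.abs_re_le_norm r
        rw [abs_le] at h3
        have h5 : (r + m : ℂ).re = r.re + m := by simp
        rw [h5]
        by_cases hneg : 0 ≤ r.re + m
        · have h4 := Nat.floor_le hneg
          have : (⌊r.re + m⌋₊ : ℝ) < m + 2 := by linarith
          have : ⌊r.re + m⌋₊ < m + 2 := by exact_mod_cast this
          omega
        · rw [Nat.floor_of_nonpos (by linarith)]; simp) i
      (fun h => hi (Fin.ext h)) (Nat.lt_succ_iff.mp i.2)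
    have t0 := taylor_lin d m θ 0
    have ti := taylor_lin d m θ i
    rw [← hp, ← hq] at t0 ti
    rw [Fin.val_zero] at t0
    rw [t0, ti] at hlt
    simp only [norm_mul, Complex.norm_real, Complex.norm_natCast, Real.norm_eq_abs,
      Nat.choose_zero_right, Nat.cast_one, one_mul] at hlt
    have : (d.choose i : ℝ) * |lin (aU d m) θ 0| ≤ d.choose i * |lin (aU d m) θ i| := by gcongr
    linarith
  refine (Finset.card_le_card hsub).trans ?_
  refine (Finset.card_biUnion_le_card_mul _ _ 6 ?_).trans ?_
  · intro r _
    rw [Nat.card_Icc]; omega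
  · gcongr
    exact (Multiset.toFinset_card_le _).trans ((card_roots' p).trans hdeg)

end poly
end RelT

namespace RelT
section torus

/-- torus endomorphism of an integer matrix -/
noncomputable def tor {ι : Type} [Fintype ι] (a : ι → ι → ℤ) : C(ι → Circle, ι → Circle) where
  toFun z i := ∏ j, z j ^ a i j
  continuous_toFun := continuous_pi fun i =>
    continuous_finsetProd _ fun j _ => (continuous_apply j).zpow (a i j)

/-- exponential map -/
noncomputable def ex {ι : Type} (θ : ι → ℝ) : ι → Circle := fun i => Circle.exp (θ i)

theorem ex_continuous {ι : Type} : Continuous (ex (ι := ι)) :=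
  continuous_pi fun i => Circle.exp.continuous.comp (continuous_apply i)

theorem ex_arg {ι : Type} (z : ι → Circle) : ex (fun i => Complex.arg (z i)) = z := by
  ext i; simp [ex]

theorem exp_lin {ι : Type} (s : Finset ι) (c : ι → ℤ) (θ : ι → ℝ) :
    Circle.exp (∑ j ∈ s, (c j : ℝ) * θ j) = ∏ j ∈ s, Circle.exp (θ j) ^ c j := by
  classical
  induction s using Finset.induction_on with
  | empty => simp
  | insert j s hj ih =>
    rw [Finset.sum_insert hj, Finset.prod_insert hj, Circle.exp_add, ih]
    congr 1
    rw [← zsmul_eq_mul, Circle.exp_zsmul]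

theorem tor_ex {d : ℕ} (a : Fin (d + 1) → Fin (d + 1) → ℤ) (θ : Fin (d + 1) → ℝ) :
    tor a (ex θ) = ex (lin a θ) := by
  funext i
  exact (exp_lin Finset.univ (a i) θ).symm

theorem ex_inj {ι : Type} {θ θ' : ι → ℝ} (h : ∀ i, |θ i| ≤ 1) (h' : ∀ i, |θ' i| ≤ 1)
    (he : ex θ = ex θ') : θ = θ' := by
  funext i
  have hi := congrFun he i
  have hpi := Real.pi_gt_three
  have a1 := abs_le.mp (h i)
  have a2 := abs_le.mp (h' i)
  have e1 := Circle.arg_exp (x := θ i) (by linarith) (by linarith)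
  have e2 := Circle.arg_exp (x := θ' i) (by linarith) (by linarith)
  rw [← e1, ← e2]
  simp only [ex] at hi
  rw [hi]

open Polynomial in
theorem lin_lin (d m m' : ℕ) (θ : Fin (d + 1) → ℝ) :
    lin (aU d m) (lin (aU d m') θ) = lin (aU d (m + m')) θ := by
  have hdeg : ∀ θ : Fin (d + 1) → ℝ,
      (∑ j : Fin (d + 1), monomial (j : ℕ) ((d.choose j : ℂ) * (θ j : ℂ))).natDegree ≤ d :=
    fun θ => natDegree_sum_le_of_forall_le _ _ fun j _ =>
      (natDegree_monomial_le _).trans (Nat.lt_succ_iff.mp j.2)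
  have key : (∑ j : Fin (d + 1), monomial (j : ℕ)
      ((d.choose j : ℂ) * ((lin (aU d m') θ) j : ℂ))) =
      taylor (m' : ℂ) (∑ j : Fin (d + 1), monomial (j : ℕ) ((d.choose j : ℂ) * (θ j : ℂ))) := by
    ext k
    by_cases hk : k < d + 1
    · have := taylor_lin d m' θ ⟨k, hk⟩
      simp only at this
      rw [this, finsetSum_coeff, Finset.sum_eq_single ⟨k, hk⟩]
      · simp
      · intro j _ hj
        rw [coeff_monomial, if_neg]
        exact fun h => hj (Fin.ext h)
      · simp
    · rw [coeff_eq_zero_of_natDegree_lt, coeff_eq_zero_of_natDegree_lt]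
      · rw [natDegree_taylor]; exact (hdeg θ).trans_lt (by omega)
      · exact (hdeg _).trans_lt (by omega)
  funext i
  have h1 := taylor_lin d m (lin (aU d m') θ) i
  have h2 := taylor_lin d (m + m') θ i
  rw [key, taylor_taylor] at h1
  push_cast at h2
  rw [show (m : ℂ) + m' = m' + m from add_comm _ _] at h2
  first
    | rw [h2] at h1
    | (rw [add_comm (m' : ℂ) (m : ℂ)] at h2; rw [h2] at h1)
  have hc : (d.choose i : ℂ) ≠ 0 := by
    have := Nat.choose_pos (n := d) (k := i) (Nat.lt_succ_iff.mp i.2)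
    exact_mod_cast this.ne'
  have := mul_left_cancel₀ hc h1
  exact_mod_cast this.symm

theorem tor_tor (d m m' : ℕ) (z : Fin (d + 1) → Circle) :
    tor (aU d m) (tor (aU d m') z) = tor (aU d (m + m')) z := by
  rw [← ex_arg z, tor_ex, tor_ex, tor_ex, lin_lin]

/-- box -/
def boxB (d : ℕ) (r : ℝ) : Set (Fin (d + 1) → Circle) := ex '' {θ | ∀ i, |θ i| ≤ r}

/-- the part of the box away from the attracting line -/
def boxK (d : ℕ) (r : ℝ) : Set (Fin (d + 1) → Circle) :=
  ex '' {θ | (∀ i, |θ i| ≤ r) ∧ ∃ i : Fin (d + 1), i ≠ 0 ∧ |θ 0| ≤ |θ i|}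

theorem isClosed_boxK (d : ℕ) (r : ℝ) : IsClosed (boxK d r) := by
  apply IsCompact.isClosed
  apply IsCompact.image _ ex_continuous
  have h1 : IsCompact (Set.pi Set.univ fun _ : Fin (d + 1) => Set.Icc (-r) r) :=
    isCompact_univ_pi fun _ => isCompact_Icc
  have h2 : IsClosed {θ : Fin (d + 1) → ℝ | ∃ i : Fin (d + 1), i ≠ 0 ∧ |θ 0| ≤ |θ i|} := by
    have : {θ : Fin (d + 1) → ℝ | ∃ i : Fin (d + 1), i ≠ 0 ∧ |θ 0| ≤ |θ i|} =
        ⋃ i : {i : Fin (d + 1) // i ≠ 0}, {θ | |θ 0| ≤ |θ i|} := by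
      ext θ; simp
    rw [this]
    refine isClosed_iUnion_of_finite fun i => ?_
    exact isClosed_le (by fun_prop) (by fun_prop)
  convert h1.inter_right h2 using 1
  ext θ
  constructor
  · rintro ⟨h, h'⟩
    exact ⟨fun i _ => abs_le.mp (h i), h'⟩
  · rintro ⟨h, h'⟩
    exact ⟨fun i => abs_le.mpr (h i trivial), h'⟩

open Classical in
theorem count_torus (d M : ℕ) (r : ℝ) (hr1 : r ≤ 1)
    (hr : ∀ m < M, ∀ θ : Fin (d + 1) → ℝ, (∀ i, |θ i| ≤ r) → ∀ i, |lin (aU d m) θ i| ≤ 1)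
    (z : Fin (d + 1) → Circle) :
    ((Finset.range M).filter fun m => tor (aU d m) z ∈ boxK d r \ {1}).card ≤ d * 6 := by
  set S := (Finset.range M).filter fun m => tor (aU d m) z ∈ boxK d r \ {1} with hS
  rcases S.eq_empty_or_nonempty with h | hne
  · simp [h]
  · set m1 := S.min' hne
    have hm1 : m1 ∈ S := S.min'_mem hne
    obtain ⟨-, ⟨θ, ⟨hθ, -⟩, hθz⟩, hne1⟩ := Finset.mem_filter.mp hm1
    have hθ0 : θ ≠ 0 := by
      rintro rfl
      apply hne1
      rw [Set.mem_singleton_iff, ← hθz]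
      funext i; simp [ex]
    refine le_trans ?_ (count d θ hθ0 M)
    refine Finset.card_le_card_of_injOn (fun m => m - m1) ?_ ?_
    · intro m hm
      have hle : m1 ≤ m := S.min'_le m hm
      rw [Finset.mem_coe, hS, Finset.mem_filter, Finset.mem_range] at hm
      obtain ⟨hmM, ⟨θ', ⟨hθ', hi⟩, hθ'z⟩, -⟩ := hm
      rw [Finset.mem_coe, Finset.mem_filter, Finset.mem_range]
      refine ⟨(Nat.sub_le m m1).trans_lt hmM, ?_⟩
      have e1 : tor (aU d m) z = ex (lin (aU d (m - m1)) θ) := by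
        rw [← tor_ex, hθz, tor_tor, Nat.sub_add_cancel hle]
      rw [← hθ'z] at e1
      have := ex_inj (fun i => (hθ' i).trans hr1) (hr (m - m1) (by omega) θ hθ) e1
      rw [← this]
      exact hi
    · intro a ha b hb hab
      have h1 : m1 ≤ a := S.min'_le a ha
      have h2 : m1 ≤ b := S.min'_le b hb
      simp only at hab
      omega

/-- matrix of the Weyl element -/
def aW (d : ℕ) (i j : Fin (d + 1)) : ℤ := if j = i.rev then (-1) ^ (d - i : ℕ) else 0

theorem lin_aW (d : ℕ) (θ : Fin (d + 1) → ℝ) (i : Fin (d + 1)) :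
    |lin (aW d) θ i| = |θ i.rev| := by
  rw [lin, Finset.sum_eq_single i.rev]
  · simp [aW, abs_mul, abs_pow]
  · intro j _ hj; simp [aW, hj]
  · simp

theorem boxB_sub (d : ℕ) (hd : 1 ≤ d) (r : ℝ) :
    boxB d r ⊆ boxK d r ∪ tor (aW d) ⁻¹' boxK d r := by
  rintro _ ⟨θ, hθ, rfl⟩
  by_cases h : ∃ i : Fin (d + 1), i ≠ 0 ∧ |θ 0| ≤ |θ i|
  · exact Or.inl ⟨θ, ⟨hθ, h⟩, rfl⟩
  · right
    push Not at h
    rw [Set.mem_preimage, tor_ex]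
    have hl : Fin.last d ≠ 0 := by
      intro h; have := congrArg Fin.val h; simp at this; omega
    refine ⟨_, ⟨fun i => ?_, Fin.last d, hl, ?_⟩, rfl⟩
    · rw [lin_aW]; exact hθ _
    · rw [lin_aW, lin_aW, Fin.rev_last, Fin.rev_zero]
      exact (h _ hl).le

theorem chi_single {ι : Type} [Fintype ι] [DecidableEq ι] (i : ι) (z : ι → Circle) :
    chi (Pi.single i 1) z = (z i : ℂ) := by
  simp only [chi, ContinuousMap.coe_mk]
  congr 1
  rw [Finset.prod_eq_single i]
  · simp only [Pi.single_eq_same, zpow_one]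
    rfl
  · intro j _ hj; simp [hj]
  · simp

theorem prod_single {ι Γ : Type} [Fintype ι] [DecidableEq ι] [CommGroup Γ] (x : ι → Γ) (i : ι) :
    ∏ j, x j ^ (Pi.single i (1 : ℤ) : ι → ℤ) j = x i := by
  rw [Finset.prod_eq_single i]
  · simp
  · intro j _ hj; simp [hj]
  · simp

variable {H : Type} [NormedAddCommGroup H] [InnerProductSpace ℂ H] [CompleteSpace H]

theorem intertwine {ι : Type} [Fintype ι] {Γ : Type} [CommGroup Γ] (ρ : Γ →* (H ≃ₗᵢ[ℂ] H))
    (x : ι → Γ) (Ψ : C(ι → Circle, ℂ) →⋆ₐ[ℂ] (H →L[ℂ] H))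
    (hΨ : ∀ (c : ι → ℤ) (v : H), Ψ (chi c) v = ρ (∏ j, x j ^ c j) v)
    (a : ι → ι → ℤ) (W : H ≃ₗᵢ[ℂ] H)
    (hW : ∀ i w, W (ρ (x i) w) = ρ (∏ j, x j ^ a i j) (W w))
    (f : C(ι → Circle, ℂ)) (w : H) : Ψ (f.comp (tor a)) (W w) = W (Ψ f w) := by
  classical
  let F1 : C(ι → Circle, ℂ) →⋆ₐ[ℂ] (H →L[ℂ] H) :=
    Ψ.comp (ContinuousMap.compStarAlgHom' ℂ ℂ (tor a))
  let F2 : C(ι → Circle, ℂ) →⋆ₐ[ℂ] (H →L[ℂ] H) :=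
    (W.conjStarAlgEquiv : (H →L[ℂ] H) →⋆ₐ[ℂ] (H →L[ℂ] H)).comp Ψ
  have hc : ∀ F : C(ι → Circle, ℂ) →⋆ₐ[ℂ] (H →L[ℂ] H), Continuous F := fun F =>
    AddMonoidHomClass.continuous_of_bound F 1 fun g => by
      rw [one_mul]; exact NonUnitalStarAlgHom.norm_apply_le F g
  have hcl : IsClosed ((StarAlgHom.equalizer F1 F2 : StarSubalgebra ℂ C(ι → Circle, ℂ)) :
      Set C(ι → Circle, ℂ)) := isClosed_eq (hc F1) (hc F2)
  have hmem : ∀ i, chi (Pi.single i 1) ∈ StarAlgHom.equalizer F1 F2 := by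
    intro i
    change Ψ ((chi (Pi.single i 1)).comp (tor a)) = W.conjStarAlgEquiv (Ψ (chi (Pi.single i 1)))
    ext u
    have e : (chi (Pi.single i 1)).comp (tor a) = chi (a i) := by
      ext z
      rw [ContinuousMap.comp_apply, chi_single]
      rfl
    rw [e, hΨ, LinearIsometryEquiv.conjStarAlgEquiv_apply_apply, hΨ, prod_single, hW,
      W.apply_symm_apply]
  have hsep : (StarAlgHom.equalizer F1 F2).SeparatesPoints := by
    intro z z' hz
    obtain ⟨i, hi⟩ := Function.ne_iff.mp hz
    refine ⟨_, ⟨chi (Pi.single i 1), hmem i, rfl⟩, ?_⟩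
    change chi (Pi.single i 1) z ≠ chi (Pi.single i 1) z'
    rw [chi_single, chi_single]
    exact fun h => hi (Circle.ext h)
  have htop := ContinuousMap.starSubalgebra_topologicalClosure_eq_top_of_separatesPoints _ hsep
  have hf : f ∈ (StarAlgHom.equalizer F1 F2).topologicalClosure := by rw [htop]; trivial
  have hf' : f ∈ closure ((StarAlgHom.equalizer F1 F2 : StarSubalgebra ℂ C(ι → Circle, ℂ)) :
      Set C(ι → Circle, ℂ)) := hf
  rw [hcl.closure_eq] at hf'
  have h1 : F1 f = F2 f := hf'
  have h2 := congrArg (fun T : H →L[ℂ] H => T (W w)) h1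
  change Ψ (f.comp (tor a)) (W w) = W (Ψ f (W.symm (W w))) at h2
  rwa [W.symm_apply_apply] at h2

end torus
end RelT

namespace RelT
section main

theorem exists_r (d M : ℕ) : ∃ r : ℝ, 0 < r ∧ r ≤ 1 ∧
    ∀ m < M, ∀ θ : Fin (d + 1) → ℝ, (∀ i, |θ i| ≤ r) → ∀ i, |lin (aU d m) θ i| ≤ 1 := by
  set R : ℝ := 1 + ∑ m ∈ Finset.range M, ∑ i, ∑ j, |(aU d m i j : ℝ)| with hR
  have h0 : 0 ≤ ∑ m ∈ Finset.range M, ∑ i, ∑ j, |(aU d m i j : ℝ)| := by positivity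
  have hRpos : 0 < R := by linarith
  refine ⟨R⁻¹, by positivity, inv_le_one_of_one_le₀ (by linarith), fun m hm θ hθ i => ?_⟩
  have h1 : ∑ j, |(aU d m i j : ℝ)| ≤ R := by
    have e1 : ∑ j, |(aU d m i j : ℝ)| ≤ ∑ i, ∑ j, |(aU d m i j : ℝ)| :=
      Finset.single_le_sum (f := fun i => ∑ j, |(aU d m i j : ℝ)|)
        (fun _ _ => by positivity) (Finset.mem_univ i)
    have e2 : ∑ i, ∑ j, |(aU d m i j : ℝ)| ≤
        ∑ m ∈ Finset.range M, ∑ i, ∑ j, |(aU d m i j : ℝ)| :=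
      Finset.single_le_sum (f := fun m => ∑ i, ∑ j, |(aU d m i j : ℝ)|)
        (fun _ _ => by positivity) (Finset.mem_range.mpr hm)
    linarith
  calc |lin (aU d m) θ i| ≤ ∑ j, |(aU d m i j : ℝ) * θ j| := Finset.abs_sum_le_sum_abs _ _
    _ ≤ ∑ j, |(aU d m i j : ℝ)| * R⁻¹ := by
      refine Finset.sum_le_sum fun j _ => ?_
      rw [abs_mul]
      exact mul_le_mul_of_nonneg_left (hθ j) (abs_nonneg _)
    _ = (∑ j, |(aU d m i j : ℝ)|) * R⁻¹ := by rw [Finset.sum_mul]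
    _ ≤ R * R⁻¹ := by gcongr
    _ = 1 := mul_inv_cancel₀ hRpos.ne'

theorem exists_delta (r : ℝ) (hr : 0 < r) : ∃ δ : ℝ, 0 < δ ∧
    ∀ z : Circle, ‖(z : ℂ) - 1‖ < δ → |Complex.arg z| ≤ r := by
  have hc : ContinuousAt Complex.arg 1 := Complex.continuousAt_arg (by simp)
  obtain ⟨δ, hδ, h⟩ := Metric.continuousAt_iff.mp hc r hr
  refine ⟨δ, hδ, fun z hz => ?_⟩
  have := h (x := (z : ℂ)) (by rwa [dist_eq_norm])
  rw [Complex.arg_one, Real.dist_eq, sub_zero] at this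
  exact this.le

open scoped InnerProductSpace

theorem main_abs (d : ℕ) (hd : 1 ≤ d) : ∃ (M : ℕ) (ε : ℝ), 0 < ε ∧
    ∀ (H : Type) [NormedAddCommGroup H] [InnerProductSpace ℂ H] [CompleteSpace H]
      (Γ : Type) [CommGroup Γ] (ρ : Γ →* (H ≃ₗᵢ[ℂ] H)) (x : Fin (d + 1) → Γ)
      (Wu : ℕ → (H ≃ₗᵢ[ℂ] H)) (Ww : H ≃ₗᵢ[ℂ] H),
      (∀ m i w, Wu m (ρ (x i) w) = ρ (∏ j, x j ^ aU d m i j) (Wu m w)) →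
      (∀ i w, Ww (ρ (x i) w) = ρ (∏ j, x j ^ aW d i j) (Ww w)) →
      ∀ v : H, ‖v‖ = 1 → (∀ i, ‖ρ (x i) v - v‖ < ε) → (∀ m < M, ‖Wu m v - v‖ < ε) →
      ‖Ww v - v‖ < ε → ∃ w : H, w ≠ 0 ∧ ∀ i, ρ (x i) w = w := by
  classical
  set M := 48 * d with hM
  obtain ⟨r, hr0, hr1, hr⟩ := exists_r d M
  obtain ⟨δ, hδ, hδr⟩ := exists_delta r hr0
  set ε := min (1 / 40 : ℝ) (δ / (2 * (d + 1))) with hε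
  have hε0 : 0 < ε := by positivity
  refine ⟨M, ε, hε0, ?_⟩
  intro H _ _ _ Γ _ ρ x Wu Ww hWu hWw v hv hxv huv hwv
  by_contra hno
  obtain ⟨Ψ, hΨ⟩ := spectral ρ x
  let _ : MeasurableSpace (Fin (d + 1) → Circle) := borel _
  have _ : BorelSpace (Fin (d + 1) → Circle) := ⟨rfl⟩
  obtain ⟨μ, hfin, hμ, hμ2⟩ := spec_measure Ψ v
  have hatom : μ.real {1} = 0 := by
    by_contra h
    obtain ⟨w, hw0, hw⟩ := atom Ψ v μ hμ2 1 h
    apply hno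
    refine ⟨w, hw0, fun i => ?_⟩
    have := hw (chi (Pi.single i 1))
    rw [hΨ, prod_single, chi_single] at this
    simpa using this
  have huniv : μ.real Set.univ = 1 := by
    have := hμ2 1
    simp [hv] at this
    exact this.symm
  have hqu : ∀ m < M, ∀ F, IsClosed F → |μ.real (tor (aU d m) ⁻¹' F) - μ.real F| ≤ 2 * ε := by
    intro m hm F hF
    refine (quasi_inv Ψ v hv μ hμ (tor (aU d m)) (Wu m)
      (intertwine ρ x Ψ hΨ _ (Wu m) (hWu m)) F hF).trans ?_
    linarith [huv m hm]
  have hqw : ∀ F, IsClosed F → |μ.real (tor (aW d) ⁻¹' F) - μ.real F| ≤ 2 * ε := by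
    intro F hF
    refine (quasi_inv Ψ v hv μ hμ (tor (aW d)) Ww
      (intertwine ρ x Ψ hΨ _ Ww hWw) F hF).trans ?_
    linarith
  have hKc := isClosed_boxK d r
  -- measure of K
  have hK : (M : ℝ) * μ.real (boxK d r) ≤ d * 6 + M * (4 * ε) := by
    have hmeas : ∀ m, MeasurableSet (tor (aU d m) ⁻¹' (boxK d r \ {1})) := fun m =>
      (tor (aU d m)).continuous.measurable (hKc.measurableSet.diff (measurableSet_singleton 1))
    have h1 : ∑ m ∈ Finset.range M, μ.real (tor (aU d m) ⁻¹' (boxK d r \ {1})) ≤ d * 6 := by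
      have e : ∀ m, μ.real (tor (aU d m) ⁻¹' (boxK d r \ {1})) =
          ∫ z, (tor (aU d m) ⁻¹' (boxK d r \ {1})).indicator (1 : (Fin (d + 1) → Circle) → ℝ) z ∂μ := fun m =>
        (integral_indicator_one (hmeas m)).symm
      have hint : ∀ m, Integrable
          ((tor (aU d m) ⁻¹' (boxK d r \ {1})).indicator (1 : (Fin (d + 1) → Circle) → ℝ)) μ := fun m =>
        (integrable_const (1 : ℝ)).indicator (hmeas m)
      simp only [e]
      rw [← integral_finsetSum _ fun m _ => hint m]
      have : ∫ z, ∑ m ∈ Finset.range M,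
          (tor (aU d m) ⁻¹' (boxK d r \ {1})).indicator (1 : (Fin (d + 1) → Circle) → ℝ) z ∂μ
          ≤ ∫ z, ((d * 6 : ℕ) : ℝ) ∂μ := by
        refine integral_mono (integrable_finsetSum _ fun m _ => hint m) (integrable_const _) ?_
        intro z
        have hc := count_torus d M r hr1 hr z
        have hs : ∑ m ∈ Finset.range M,
          (tor (aU d m) ⁻¹' (boxK d r \ {1})).indicator (1 : (Fin (d + 1) → Circle) → ℝ) z =
          (((Finset.range M).filter fun m => tor (aU d m) z ∈ boxK d r \ {1}).card : ℝ) := by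
          rw [Finset.card_filter]
          push_cast
          refine Finset.sum_congr rfl fun m _ => ?_
          by_cases h : tor (aU d m) z ∈ boxK d r \ {1}
          · rw [if_pos h, Set.indicator_of_mem (show z ∈ tor (aU d m) ⁻¹' (boxK d r \ {1}) from h)]
            rfl
          · rw [if_neg h,
              Set.indicator_of_notMem (show z ∉ tor (aU d m) ⁻¹' (boxK d r \ {1}) from h)]
        change ∑ m ∈ Finset.range M,
          (tor (aU d m) ⁻¹' (boxK d r \ {1})).indicator (1 : (Fin (d + 1) → Circle) → ℝ) z ≤ _
        rw [hs]
        exact Nat.cast_le.mpr hc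
      refine this.trans ?_
      rw [integral_const, huniv]
      simp
    have h2 : ∀ m ∈ Finset.range M, μ.real (boxK d r) - 4 * ε ≤
        μ.real (tor (aU d m) ⁻¹' (boxK d r \ {1})) := by
      intro m hm
      rw [Finset.mem_range] at hm
      have a1 := abs_le.mp (hqu m hm _ hKc)
      have a2 := abs_le.mp (hqu m hm {1} isClosed_singleton)
      rw [hatom] at a2
      have a3 : μ.real (tor (aU d m) ⁻¹' boxK d r) ≤
          μ.real (tor (aU d m) ⁻¹' (boxK d r \ {1})) + μ.real (tor (aU d m) ⁻¹' {1}) := by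
        refine (measureReal_mono ?_).trans (measureReal_union_le _ _)
        intro z hz
        by_cases h : tor (aU d m) z = 1
        · exact Or.inr h
        · exact Or.inl ⟨hz, h⟩
      linarith [a1.1, a2.2]
    have h3 := Finset.sum_le_sum h2
    rw [Finset.sum_const, Finset.card_range, nsmul_eq_mul] at h3
    linarith
  have hB : μ.real (boxB d r) ≤ 2 * μ.real (boxK d r) + 2 * ε := by
    have a1 := abs_le.mp (hqw _ hKc)
    have a2 := (measureReal_mono (μ := μ) (boxB_sub d hd r)).trans (measureReal_union_le _ _)
    linarith [a1.2]
  have hBc : μ.real (boxB d r)ᶜ ≤ (d + 1) * (ε ^ 2 / δ ^ 2) := by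
    have hsub : (boxB d r)ᶜ ⊆ ⋃ i : Fin (d + 1), {z | δ ^ 2 ≤ ‖(z i : ℂ) - 1‖ ^ 2} := by
      intro z hz
      by_contra hcon
      simp only [Set.mem_iUnion, Set.mem_ofPred_eq, not_exists, not_le] at hcon
      apply hz
      refine ⟨fun i => Complex.arg (z i), fun i => ?_, ex_arg z⟩
      exact hδr _ (lt_of_pow_lt_pow_left₀ 2 hδ.le (hcon i))
    have hi : ∀ i : Fin (d + 1), μ.real {z | δ ^ 2 ≤ ‖(z i : ℂ) - 1‖ ^ 2} ≤ ε ^ 2 / δ ^ 2 := by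
      intro i
      let f : C(Fin (d + 1) → Circle, ℂ) := chi (Pi.single i 1) - 1
      have hf : ∀ z, f z = (z i : ℂ) - 1 := fun z => by
        change chi (Pi.single i 1) z - 1 = _
        rw [chi_single]
      have e1 : Ψ f v = ρ (x i) v - v := by
        change Ψ (chi (Pi.single i 1) - 1) v = _
        rw [map_sub, map_one, sub_apply, hΨ, prod_single]
        rfl
      have e2 := hμ2 f
      rw [e1] at e2
      have hint : Integrable (fun z => ‖f z‖ ^ 2) μ := by
        have : Continuous fun z => ‖f z‖ ^ 2 := by fun_prop
        exact this.integrable_of_hasCompactSupport (HasCompactSupport.of_compactSpace _)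
      have e3 := mul_meas_ge_le_integral_of_nonneg (μ := μ) (f := fun z => ‖f z‖ ^ 2)
        (Filter.Eventually.of_forall fun z => by positivity) hint (δ ^ 2)
      rw [← e2] at e3
      simp only [hf] at e3
      rw [le_div_iff₀ (by positivity), mul_comm]
      refine e3.trans ?_
      have := hxv i
      gcongr
    calc μ.real (boxB d r)ᶜ ≤ μ.real (⋃ i : Fin (d + 1), {z | δ ^ 2 ≤ ‖(z i : ℂ) - 1‖ ^ 2}) :=
          measureReal_mono hsub
      _ ≤ ∑ i : Fin (d + 1), μ.real {z | δ ^ 2 ≤ ‖(z i : ℂ) - 1‖ ^ 2} :=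
          measureReal_iUnion_fintype_le _
      _ ≤ ∑ i : Fin (d + 1), ε ^ 2 / δ ^ 2 := Finset.sum_le_sum fun i _ => hi i
      _ = _ := by simp
  have htot : 1 ≤ μ.real (boxB d r) + μ.real (boxB d r)ᶜ := by
    rw [← huniv, ← Set.union_compl_self (boxB d r)]
    exact measureReal_union_le _ _
  have hε1 : ε ≤ 1 / 40 := min_le_left _ _
  have hε2 : ε ≤ δ / (2 * (d + 1)) := min_le_right _ _
  have hd' : (1 : ℝ) ≤ d := by exact_mod_cast hd
  have hsm : (d + 1) * (ε ^ 2 / δ ^ 2) ≤ 1 / 4 := by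
    have h1 : ε * (2 * (d + 1)) ≤ δ := by rwa [le_div_iff₀ (by positivity)] at hε2
    rw [← mul_div_assoc, div_le_iff₀ (by positivity)]
    have h2 : (ε * (2 * (d + 1))) ^ 2 ≤ δ ^ 2 := by gcongr
    nlinarith [sq_nonneg ε, mul_nonneg (sq_nonneg ε) (by linarith : (0 : ℝ) ≤ d)]
  have hKs : μ.real (boxK d r) ≤ 1 / 8 + 4 * ε := by
    rw [hM] at hK
    push_cast at hK
    have : (d : ℝ) * (48 * μ.real (boxK d r)) ≤ d * (6 + 48 * (4 * ε)) := by linarith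
    have := le_of_mul_le_mul_left this (by linarith)
    linarith
  linarith

end main
end RelT

namespace RelT
section concrete
open MvPolynomial

theorem mono_homog (d i : ℕ) (hi : i ≤ d) :
    (X 0 ^ i * X 1 ^ (d - i) : MvPolynomial (Fin 2) ℤ) ∈ homogeneousSubmodule (Fin 2) ℤ d := by
  rw [mem_homogeneousSubmodule]
  have h := ((isHomogeneous_X ℤ (0 : Fin 2)).pow i).mul ((isHomogeneous_X ℤ (1 : Fin 2)).pow (d - i))
  have e : 1 * i + 1 * (d - i) = d := by omega
  rwa [e] at h

/-- monomial basis -/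
noncomputable def xm (d : ℕ) (i : Fin (d + 1)) : ↥(VnZ (d + 1)) :=
  ⟨X 0 ^ (i : ℕ) * X 1 ^ (d - i : ℕ), mono_homog d i (Nat.lt_succ_iff.mp i.2)⟩

theorem u_expand (d m : ℕ) (i : Fin (d + 1)) :
    (X 0 ^ (i : ℕ) * (C (m : ℤ) * X 0 + X 1) ^ (d - i : ℕ) : MvPolynomial (Fin 2) ℤ) =
      ∑ j : Fin (d + 1), aU d m i j • (X 0 ^ (j : ℕ) * X 1 ^ (d - j : ℕ)) := by
  let F : ℕ → MvPolynomial (Fin 2) ℤ := fun j =>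
    (if (i : ℕ) ≤ j then ((d - i : ℕ).choose (j - i : ℕ) : ℤ) * (m : ℤ) ^ (j - i : ℕ) else 0) •
      (X 0 ^ j * X 1 ^ (d - j : ℕ))
  have h1 : ∑ j : Fin (d + 1), aU d m i j • (X 0 ^ (j : ℕ) * X 1 ^ (d - j : ℕ) :
      MvPolynomial (Fin 2) ℤ) = ∑ j ∈ Finset.range (d + 1), F j :=
    Fin.sum_univ_eq_sum_range F (d + 1)
  have hi : (i : ℕ) ≤ d := Nat.lt_succ_iff.mp i.2
  have h2 : ∑ j ∈ Finset.range (d + 1), F j =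
      ∑ j ∈ Finset.range ((i : ℕ) + (d - i + 1)), F j := by
    congr 2
    omega
  rw [h1, h2, Finset.sum_range_add,
    Finset.sum_eq_zero, zero_add, add_pow, Finset.mul_sum]
  · refine Finset.sum_congr rfl fun k hk => ?_
    have hk' : k ≤ d - i := Nat.lt_succ_iff.mp (Finset.mem_range.mp hk)
    simp only [F, le_add_iff_nonneg_right, zero_le, if_true, Nat.add_sub_cancel_left,
      zsmul_eq_mul]
    rw [show d - (i + k) = d - i - k by omega]
    push_cast
    simp only [map_natCast]
    ring
  · intro j hj
    have : ¬ (i : ℕ) ≤ j := not_le.mpr (Finset.mem_range.mp hj)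
    simp [F, this]

theorem w_expand (d : ℕ) (i : Fin (d + 1)) :
    (X 1 ^ (i : ℕ) * (-X 0) ^ (d - i : ℕ) : MvPolynomial (Fin 2) ℤ) =
      ∑ j : Fin (d + 1), aW d i j • (X 0 ^ (j : ℕ) * X 1 ^ (d - j : ℕ)) := by
  have hi : (i : ℕ) ≤ d := Nat.lt_succ_iff.mp i.2
  rw [Finset.sum_eq_single i.rev]
  · simp only [aW, if_true, Fin.val_rev, zsmul_eq_mul]
    rw [show d + 1 - (i + 1) = d - i by omega, show d - (d - i : ℕ) = i by omega, neg_pow]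
    push_cast
    ring
  · intro j _ hj; simp [aW, hj]
  · simp

/-- unipotent element -/
def uM (m : ℕ) : Matrix.SpecialLinearGroup (Fin 2) ℤ := ⟨!![1, (m : ℤ); 0, 1], by simp⟩

/-- Weyl element -/
def wM : Matrix.SpecialLinearGroup (Fin 2) ℤ := ⟨!![0, -1; 1, 0], by simp⟩

theorem span_induct (d : ℕ) (K : AddSubgroup ↥(VnZ (d + 1))) (hK : ∀ i, xm d i ∈ K)
    (P : ↥(VnZ (d + 1))) : P ∈ K := by
  have key : ∀ s ∈ (P : MvPolynomial (Fin 2) ℤ).support, ∃ i : Fin (d + 1),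
      monomial s (coeff s (P : MvPolynomial (Fin 2) ℤ)) =
        (coeff s (P : MvPolynomial (Fin 2) ℤ)) • (xm d i : MvPolynomial (Fin 2) ℤ) := by
    intro s hs
    have hP : (P : MvPolynomial (Fin 2) ℤ).IsHomogeneous d := P.2
    have hdeg := hP (mem_support_iff.mp hs)
    rw [Finsupp.weight_apply, Finsupp.sum_fintype _ _ (by simp)] at hdeg
    simp only [Fin.sum_univ_two, Pi.one_apply, smul_eq_mul, mul_one] at hdeg
    refine ⟨⟨s 0, by omega⟩, ?_⟩
    simp only [xm]
    rw [show d - s 0 = s 1 by omega, monomial_eq, Finsupp.prod_fintype _ _ (by simp),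
      Fin.prod_univ_two, smul_eq_C_mul]
  choose! f hf using key
  have hP : P = ∑ s ∈ (P : MvPolynomial (Fin 2) ℤ).support,
      (coeff s (P : MvPolynomial (Fin 2) ℤ)) • xm d (f s) := by
    apply Subtype.ext
    conv_lhs => rw [(P : MvPolynomial (Fin 2) ℤ).as_sum]
    rw [AddSubmonoidClass.coe_finsetSum]
    exact Finset.sum_congr rfl fun s hs => hf s hs
  rw [hP]
  exact AddSubgroup.sum_mem _ fun s _ => AddSubgroup.zsmul_mem _ (hK _) _

theorem coe_prod (d : ℕ) (c : Fin (d + 1) → ℤ) :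
    ((Multiplicative.toAdd (∏ j, Multiplicative.ofAdd (xm d j) ^ c j) : ↥(VnZ (d + 1))) :
      MvPolynomial (Fin 2) ℤ) = ∑ j, c j • (X 0 ^ (j : ℕ) * X 1 ^ (d - j : ℕ)) := by
  rw [toAdd_prod, AddSubmonoidClass.coe_finsetSum]
  rfl

end concrete
end RelT

/-- relative property (T) for (SL₂(ℤ) ⋉ V_n(ℤ), V_n(ℤ)), n ≥ 2
(Lemma A.3). -/
theorem stmt_16 (n : ℕ) (hn : 2 ≤ n)
    (φ : Matrix.SpecialLinearGroup (Fin 2) ℤ →* MulAut (Multiplicative ↥(VnZ n)))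
    -- φ is the action of SL₂(ℤ) on V_n(ℤ) by linear substitution
    (hφ : ∀ (g : Matrix.SpecialLinearGroup (Fin 2) ℤ) (P : ↥(VnZ n)),
      ((Multiplicative.toAdd (φ g (Multiplicative.ofAdd P)) : ↥(VnZ n))
          : MvPolynomial (Fin 2) ℤ)
        = MvPolynomial.aeval
            (fun i : Fin 2 => ∑ j : Fin 2,
              MvPolynomial.C ((g : Matrix (Fin 2) (Fin 2) ℤ) j i) * MvPolynomial.X j)
            (P : MvPolynomial (Fin 2) ℤ)) :
    -- the pair (SL₂(ℤ) ⋉ V_n(ℤ), V_n(ℤ)) has relative property (T)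
    ∃ (S : Finset (Multiplicative ↥(VnZ n) ⋊[φ] Matrix.SpecialLinearGroup (Fin 2) ℤ))
      (ε : ℝ), 0 < ε ∧
      ∀ (V : Type) [NormedAddCommGroup V] [InnerProductSpace ℂ V] [CompleteSpace V],
        ∀ (π : (Multiplicative ↥(VnZ n) ⋊[φ] Matrix.SpecialLinearGroup (Fin 2) ℤ) →*
            (V ≃ₗᵢ[ℂ] V)),
          (∃ v : V, ‖v‖ = 1 ∧ ∀ s ∈ S, ‖π s v - v‖ < ε) →
          ∃ v : V, v ≠ 0 ∧
            ∀ x : Multiplicative ↥(VnZ n), π (SemidirectProduct.inl x) v = v := by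
  classical
  obtain ⟨d, rfl⟩ : ∃ d, n = d + 1 := ⟨n - 1, by omega⟩
  have hd : 1 ≤ d := by omega
  obtain ⟨M, ε, hε, hmain⟩ := RelT.main_abs d hd
  have hu : ∀ m i, φ (RelT.uM m) (Multiplicative.ofAdd (RelT.xm d i)) =
      ∏ j, Multiplicative.ofAdd (RelT.xm d j) ^ RelT.aU d m i j := by
    intro m i
    apply Multiplicative.toAdd.injective
    apply Subtype.ext
    rw [hφ, RelT.coe_prod, ← RelT.u_expand]
    simp [RelT.xm, RelT.uM, Fin.sum_univ_two]
  have hw : ∀ i, φ RelT.wM (Multiplicative.ofAdd (RelT.xm d i)) =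
      ∏ j, Multiplicative.ofAdd (RelT.xm d j) ^ RelT.aW d i j := by
    intro i
    apply Multiplicative.toAdd.injective
    apply Subtype.ext
    rw [hφ, RelT.coe_prod, ← RelT.w_expand]
    simp [RelT.xm, RelT.wM, Fin.sum_univ_two]
  let S1 : Finset (Multiplicative ↥(VnZ (d + 1)) ⋊[φ] Matrix.SpecialLinearGroup (Fin 2) ℤ) :=
    Finset.univ.image fun i : Fin (d + 1) =>
      SemidirectProduct.inl (Multiplicative.ofAdd (RelT.xm d i))
  let S2 : Finset (Multiplicative ↥(VnZ (d + 1)) ⋊[φ] Matrix.SpecialLinearGroup (Fin 2) ℤ) :=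
    (Finset.range M).image fun m => SemidirectProduct.inr (RelT.uM m)
  refine ⟨S1 ∪ S2 ∪ {SemidirectProduct.inr RelT.wM}, ε, hε, ?_⟩
  intro V _ _ _ π ⟨v, hv, hS⟩
  have hconj : ∀ (g : Matrix.SpecialLinearGroup (Fin 2) ℤ) (y : Multiplicative ↥(VnZ (d + 1)))
      (w : V), π (SemidirectProduct.inr g) (π (SemidirectProduct.inl y) w) =
        π (SemidirectProduct.inl (φ g y)) (π (SemidirectProduct.inr g) w) := by
    intro g y w
    have e : (SemidirectProduct.inr g * SemidirectProduct.inl y :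
        Multiplicative ↥(VnZ (d + 1)) ⋊[φ] Matrix.SpecialLinearGroup (Fin 2) ℤ) =
        SemidirectProduct.inl (φ g y) * SemidirectProduct.inr g := by
      rw [SemidirectProduct.inl_aut, mul_assoc, ← map_mul, inv_mul_cancel, map_one, mul_one]
    have := congrArg (fun s => π s w) e
    simp only [map_mul] at this
    exact this
  obtain ⟨w, hw0, hwx⟩ := hmain V (Multiplicative ↥(VnZ (d + 1)))
    (π.comp SemidirectProduct.inl) (fun i => Multiplicative.ofAdd (RelT.xm d i))
    (fun m => π (SemidirectProduct.inr (RelT.uM m))) (π (SemidirectProduct.inr RelT.wM))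
    (fun m i w => by rw [← hu]; exact hconj _ _ _)
    (fun i w => by rw [← hw]; exact hconj _ _ _)
    v hv
    (fun i => hS _ (Finset.mem_union_left _ (Finset.mem_union_left _
      (Finset.mem_image_of_mem _ (Finset.mem_univ i)))))
    (fun m hm => hS _ (Finset.mem_union_left _ (Finset.mem_union_right _
      (Finset.mem_image_of_mem _ (Finset.mem_range.mpr hm)))))
    (hS _ (Finset.mem_union_right _ (Finset.mem_singleton_self _)))
  refine ⟨w, hw0, fun x => ?_⟩
  let K : AddSubgroup ↥(VnZ (d + 1)) :=
    { carrier := {P | π (SemidirectProduct.inl (Multiplicative.ofAdd P)) w = w}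
      zero_mem' := by simp
      add_mem' := by
        intro a b ha hb
        change π (SemidirectProduct.inl (Multiplicative.ofAdd (a + b))) w = w
        rw [ofAdd_add, map_mul, map_mul]
        have ha' : π (SemidirectProduct.inl (Multiplicative.ofAdd a)) w = w := ha
        have hb' : π (SemidirectProduct.inl (Multiplicative.ofAdd b)) w = w := hb
        change π (SemidirectProduct.inl (Multiplicative.ofAdd a))
          (π (SemidirectProduct.inl (Multiplicative.ofAdd b)) w) = w
        rw [hb', ha']
      neg_mem' := by
        intro a ha
        change π (SemidirectProduct.inl (Multiplicative.ofAdd (-a))) w = w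
        rw [ofAdd_neg, map_inv, map_inv]
        conv_lhs => rw [← ha.out]
        exact LinearIsometryEquiv.symm_apply_apply _ w }
  exact RelT.span_induct d K hwx (Multiplicative.toAdd x)
end

section
/- Let R = ℤ[x_1, …, x_l] be a polynomial ring in finitely many variables over ℤ, and suppose that the pair (EL_2(R) ⋉ V_4(R), V_4(R)) has relative property (T). Then the pair (EL_2(R[t]) ⋉ V_4(R[t]), V_4(R[t])), where R[t] is the polynomial ring in one further variable t over R, also has relative property (T). -/
/-- The elementary matrix E₁₂(s) in SL₂(R). -/
def elem12 (R : Type) [CommRing R] (s : R) : Matrix.SpecialLinearGroup (Fin 2) R :=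
  ⟨!![1, s; 0, 1], by simp [Matrix.det_fin_two_of]⟩

/-- The elementary matrix E₂₁(s) in SL₂(R). -/
def elem21 (R : Type) [CommRing R] (s : R) : Matrix.SpecialLinearGroup (Fin 2) R :=
  ⟨!![1, 0; s, 1], by simp [Matrix.det_fin_two_of]⟩

/-- EL₂(R): the subgroup of SL₂(R) generated by the elementary matrices. -/
def EL2 (R : Type) [CommRing R] : Subgroup (Matrix.SpecialLinearGroup (Fin 2) R) :=
  Subgroup.closure (Set.range (elem12 R) ∪ Set.range (elem21 R))

/-- `V₄(R)`: the `R`-module of homogeneous polynomials of degree 3 in two variables. -/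
noncomputable abbrev V4 (R : Type) [CommRing R] : Submodule R (MvPolynomial (Fin 2) R) :=
  MvPolynomial.homogeneousSubmodule (Fin 2) R 3

/-- The substitution action of a matrix on a polynomial. -/
noncomputable def substAction (R : Type) [CommRing R]
    (M : Matrix (Fin 2) (Fin 2) R) (P : MvPolynomial (Fin 2) R) : MvPolynomial (Fin 2) R :=
  MvPolynomial.aeval (fun i : Fin 2 => ∑ j : Fin 2, MvPolynomial.C (M j i) * MvPolynomial.X j) P

/-- Relative property (T) for the pair `(Vmult ⋊[φ] H, Vmult)`. -/
def RelPropertyT {H N : Type} [Group H] [Group N] (φ : H →* MulAut N) : Prop :=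
  ∃ (S : Finset (N ⋊[φ] H)) (ε : ℝ), 0 < ε ∧
    ∀ (V : Type) [NormedAddCommGroup V] [InnerProductSpace ℂ V] [CompleteSpace V],
      ∀ (π : (N ⋊[φ] H) →* (V ≃ₗᵢ[ℂ] V)),
        (∃ v : V, ‖v‖ = 1 ∧ ∀ s ∈ S, ‖π s v - v‖ < ε) →
        ∃ v : V, v ≠ 0 ∧ ∀ x : N, π (SemidirectProduct.inl x) v = v


section Hilb
open scoped InnerProductSpace

variable {Γ V : Type} [Group Γ] [NormedAddCommGroup V] [InnerProductSpace ℂ V]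

/-- Vectors fixed by a set of group elements. -/
def FixS (π : Γ →* (V ≃ₗᵢ[ℂ] V)) (A : Set Γ) : Submodule ℂ V where
  carrier := {v | ∀ a ∈ A, π a v = v}
  add_mem' := by
    intro x y hx hy a ha
    rw [map_add, hx a ha, hy a ha]
  zero_mem' := by
    intro a _
    simp
  smul_mem' := by
    intro c x hx a ha
    rw [map_smul, hx a ha]

theorem pi_mul_apply (π : Γ →* (V ≃ₗᵢ[ℂ] V)) (a b : Γ) (v : V) :
    π (a * b) v = π a (π b v) := by
  rw [map_mul]; rfl

theorem mem_FixS (π : Γ →* (V ≃ₗᵢ[ℂ] V)) (A : Set Γ) (v : V) :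
    v ∈ FixS π A ↔ ∀ a ∈ A, π a v = v := Iff.rfl

theorem FixS_closed (π : Γ →* (V ≃ₗᵢ[ℂ] V)) (A : Set Γ) :
    IsClosed (FixS π A : Set V) := by
  have : (FixS π A : Set V) = ⋂ a ∈ A, {v | π a v = v} := by
    ext v; simp [mem_FixS]
  rw [this]
  refine isClosed_biInter fun a _ => ?_
  exact isClosed_eq (π a).continuous continuous_id

instance FixS_proj [CompleteSpace V] (π : Γ →* (V ≃ₗᵢ[ℂ] V)) (A : Set Γ) :
    (FixS π A).HasOrthogonalProjection := by
  have : CompleteSpace (FixS π A) := (FixS_closed π A).completeSpace_coe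
  infer_instance

theorem FixS_anti (π : Γ →* (V ≃ₗᵢ[ℂ] V)) {A B : Set Γ} (h : A ⊆ B) :
    FixS π B ≤ FixS π A := fun _ hv a ha => hv a (h ha)

theorem FixS_closure (π : Γ →* (V ≃ₗᵢ[ℂ] V)) (A : Set Γ) (v : V) (hv : v ∈ FixS π A) :
    ∀ a ∈ Subgroup.closure A, π a v = v := by
  intro a ha
  induction ha using Subgroup.closure_induction with
  | mem x hx => exact hv x hx
  | one => simp
  | mul x y _ _ hx hy => rw [pi_mul_apply, hy, hx]
  | inv x _ hx =>
    have : π x⁻¹ (π x v) = v := by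
      rw [← pi_mul_apply]; simp
    rw [hx] at this
    exact this

theorem pi_inv_apply (π : Γ →* (V ≃ₗᵢ[ℂ] V)) (g : Γ) (v : V) : π g⁻¹ (π g v) = v := by
  rw [← pi_mul_apply]; simp

theorem pi_apply_inv (π : Γ →* (V ≃ₗᵢ[ℂ] V)) (g : Γ) (v : V) : π g (π g⁻¹ v) = v := by
  rw [← pi_mul_apply]; simp

theorem inner_pi (π : Γ →* (V ≃ₗᵢ[ℂ] V)) (g : Γ) (x y : V) :
    ⟪π g x, y⟫_ℂ = ⟪x, π g⁻¹ y⟫_ℂ := by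
  conv_lhs => rw [← pi_apply_inv π g y]
  rw [LinearIsometryEquiv.inner_map_map]

/-- A unitary preserving `W` (with its inverse) preserves the complement. -/
theorem pi_orth (π : Γ →* (V ≃ₗᵢ[ℂ] V)) (W : Submodule ℂ V) (g : Γ)
    (h : ∀ x ∈ W, π g⁻¹ x ∈ W) : ∀ x ∈ Wᗮ, π g x ∈ Wᗮ := by
  intro x hx
  rw [Submodule.mem_orthogonal'] at hx ⊢
  intro u hu
  rw [inner_pi]
  exact hx _ (h u hu)

theorem proj_comm (W : Submodule ℂ V) [W.HasOrthogonalProjection] (f : V →ₗ[ℂ] V)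
    (h1 : ∀ x ∈ W, f x ∈ W) (h2 : ∀ x ∈ Wᗮ, f x ∈ Wᗮ) (x : V) :
    W.starProjection (f x) = f (W.starProjection x) := by
  refine Submodule.eq_starProjection_of_mem_orthogonal (h1 _ (W.starProjection_apply_mem x)) ?_
  rw [← map_sub]
  exact h2 _ (W.sub_starProjection_mem_orthogonal x)

/-- Projections preserving `W` preserve the complement. -/
theorem pres_orth (U W : Submodule ℂ V) [U.HasOrthogonalProjection]
    (h : ∀ x ∈ W, U.starProjection x ∈ W) : ∀ x ∈ Wᗮ, U.starProjection x ∈ Wᗮ := by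
  intro x hx
  rw [Submodule.mem_orthogonal'] at hx ⊢
  intro u hu
  rw [Submodule.inner_starProjection_left_eq_right]
  exact hx _ (h u hu)

theorem pres_symm (U W : Submodule ℂ V) [U.HasOrthogonalProjection] [W.HasOrthogonalProjection]
    (h : ∀ x ∈ W, U.starProjection x ∈ W) : ∀ x ∈ U, W.starProjection x ∈ U := by
  intro x hx
  have h1 := proj_comm W (U.starProjection : V →ₗ[ℂ] V) h (pres_orth U W h) x
  simp only [ContinuousLinearMap.coe_coe] at h1
  rw [Submodule.starProjection_eq_self_iff.2 hx] at h1
  rw [h1]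
  exact U.starProjection_apply_mem _

theorem proj_FixS_pi [CompleteSpace V] (π : Γ →* (V ≃ₗᵢ[ℂ] V)) (A : Set Γ) (g : Γ)
    (h1 : ∀ x ∈ FixS π A, π g x ∈ FixS π A) (h2 : ∀ x ∈ FixS π A, π g⁻¹ x ∈ FixS π A) (x : V) :
    (FixS π A).starProjection (π g x) = π g ((FixS π A).starProjection x) :=
  proj_comm (FixS π A) ((π g).toLinearEquiv : V →ₗ[ℂ] V) h1 (pi_orth π _ g h2) x

/-- Projections onto fixed vectors of commuting sets preserve each other's images. -/
theorem FixS_pres [CompleteSpace V] (π : Γ →* (V ≃ₗᵢ[ℂ] V)) (A A' : Set Γ)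
    (hc : ∀ a ∈ A, ∀ b ∈ A', a * b = b * a) :
    ∀ x ∈ FixS π A', (FixS π A).starProjection x ∈ FixS π A' := by
  intro x hx b hb
  rw [← proj_FixS_pi, hx b hb]
  · intro y hy a ha
    rw [← pi_mul_apply, hc a ha b hb, pi_mul_apply, hy a ha]
  · intro y hy a ha
    have : a * b⁻¹ = b⁻¹ * a := by
      have := hc a ha b hb
      rw [eq_inv_mul_iff_mul_eq, ← mul_assoc, ← this]; simp
    rw [← pi_mul_apply, this, pi_mul_apply, hy a ha]

/-- The layer pieces. -/
noncomputable def BS (π : Γ →* (V ≃ₗᵢ[ℂ] V)) (N T : ℕ → Set Γ) (K k : ℕ) : Submodule ℂ V :=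
  FixS π (N (K + k)) ⊓ (FixS π (T (K + k + 1)))ᗮ

theorem ortho_aux [CompleteSpace V] (π : Γ →* (V ≃ₗᵢ[ℂ] V)) (𝒩 : Subgroup Γ) [𝒩.Normal]
    (hab : ∀ a ∈ 𝒩, ∀ b ∈ 𝒩, a * b = b * a)
    (N T : ℕ → Set Γ) (hN : ∀ k, N k ⊆ 𝒩) (hmono : Monotone N)
    (K : ℕ) (g : Γ)
    (hg : ∀ h, K ≤ h → ∀ x ∈ T (h + 1),
      x ∈ Subgroup.closure (N h ∪ (fun a => g * a * g⁻¹) '' N h))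
    (k h : ℕ) (hkh : h ≤ k) (x y : V) (hx : x ∈ BS π N T K k) (hy : y ∈ BS π N T K h) :
    ⟪π g x, y⟫_ℂ = 0 := by
  set W := FixS π (N (K + h)) with hW
  have e : ⟪π g x, y⟫_ℂ = ⟪W.starProjection (π g x), y⟫_ℂ := by
    rw [Submodule.inner_starProjection_left_eq_right, Submodule.starProjection_eq_self_iff.2 hy.1]
  rw [e]
  have h1 : π g x ∈ FixS π ((fun a => g * a * g⁻¹) '' N (K + h)) := by
    rintro _ ⟨a, ha, rfl⟩
    have ha' : a ∈ N (K + k) := hmono (by omega) ha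
    simp only [pi_mul_apply]
    rw [pi_inv_apply, hx.1 a ha']
  have h2 : W.starProjection (π g x) ∈ FixS π ((fun a => g * a * g⁻¹) '' N (K + h)) := by
    refine FixS_pres π _ _ ?_ _ h1
    rintro a ha _ ⟨b, hb, rfl⟩
    exact hab _ (hN _ ha) _ (Subgroup.Normal.conj_mem inferInstance b (hN _ hb) g)
  have h3 : W.starProjection (π g x) ∈ FixS π (N (K + h)) := W.starProjection_apply_mem _
  have h4 : W.starProjection (π g x) ∈ FixS π (T (K + h + 1)) := by
    intro a ha
    refine FixS_closure π _ _ ?_ a (hg (K + h) (by omega) a ha)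
    rintro b (hb | hb)
    · exact h3 b hb
    · exact h2 b hb
  exact (Submodule.mem_orthogonal _ _).1 hy.2 _ h4

theorem ortho_main [CompleteSpace V] (π : Γ →* (V ≃ₗᵢ[ℂ] V)) (𝒩 : Subgroup Γ) [𝒩.Normal]
    (hab : ∀ a ∈ 𝒩, ∀ b ∈ 𝒩, a * b = b * a)
    (N T : ℕ → Set Γ) (hN : ∀ k, N k ⊆ 𝒩) (hmono : Monotone N)
    (K : ℕ) (g : Γ)
    (hg : ∀ h, K ≤ h → ∀ x ∈ T (h + 1),
      x ∈ Subgroup.closure (N h ∪ (fun a => g * a * g⁻¹) '' N h))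
    (hg' : ∀ h, K ≤ h → ∀ x ∈ T (h + 1),
      x ∈ Subgroup.closure (N h ∪ (fun a => g⁻¹ * a * g⁻¹⁻¹) '' N h))
    (x y : V) (hx : x ∈ (⨆ k, BS π N T K k)ᗮᗮ) (hy : y ∈ (⨆ k, BS π N T K k)ᗮᗮ) :
    ⟪π g x, y⟫_ℂ = 0 := by
  have key : ∀ k h : ℕ, ∀ x ∈ BS π N T K k, ∀ y ∈ BS π N T K h, ⟪π g x, y⟫_ℂ = 0 := by
    intro k h x hx y hy
    rcases le_total h k with hkh | hkh
    · exact ortho_aux π 𝒩 hab N T hN hmono K g hg k h hkh x y hx hy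
    · rw [inner_pi, ← inner_conj_symm,
        ortho_aux π 𝒩 hab N T hN hmono K g⁻¹ hg' h k hkh y x hy hx, map_zero]
  have s1 : (⨆ k, BS π N T K k) ≤ (⨆ k, BS π N T K k)ᗮ.comap
      ((π g).toLinearEquiv : V →ₗ[ℂ] V) := by
    refine iSup_le fun k x hx => ?_
    rw [Submodule.mem_comap, ← Submodule.iInf_orthogonal, Submodule.mem_iInf]
    intro h
    rw [Submodule.mem_orthogonal']
    exact fun y hy => key k h x hx y hy
  have s2 : π g⁻¹ y ∈ (⨆ k, BS π N T K k)ᗮ := by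
    rw [Submodule.mem_orthogonal]
    intro u hu
    rw [← inner_pi]
    exact (Submodule.mem_orthogonal _ _).1 hy _ (s1 hu)
  rw [inner_pi]
  exact (Submodule.mem_orthogonal' _ _).1 hx _ s2

theorem small_part [CompleteSpace V] (π : Γ →* (V ≃ₗᵢ[ℂ] V)) (𝒩 : Subgroup Γ) [𝒩.Normal]
    (hab : ∀ a ∈ 𝒩, ∀ b ∈ 𝒩, a * b = b * a)
    (N T : ℕ → Set Γ) (hN : ∀ k, N k ⊆ 𝒩) (hmono : Monotone N)
    (K : ℕ) (g : Fin 16 → Γ)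
    (hg : ∀ i j, i ≠ j → ∀ h, K ≤ h → ∀ x ∈ T (h + 1),
      x ∈ Subgroup.closure (N h ∪ (fun a => ((g i)⁻¹ * g j) * a * ((g i)⁻¹ * g j)⁻¹) '' N h))
    (v : V) (hv : ‖v‖ = 1) (hvg : ∀ i, ‖π (g i) v - v‖ ≤ 1 / 16) :
    ‖v - (⨆ k, BS π N T K k)ᗮ.starProjection v‖ ≤ 5 / 16 := by
  set B := (⨆ k, BS π N T K k) with hB
  set w := v - Bᗮ.starProjection v with hw
  have hwB : w ∈ Bᗮᗮ := Submodule.sub_starProjection_mem_orthogonal v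
  have hvw : ⟪v, w⟫_ℂ = ((‖w‖ ^ 2 : ℝ) : ℂ) := by
    have : v = w + Bᗮ.starProjection v := by rw [hw]; abel
    conv_lhs => rw [this]
    rw [inner_add_left, (Submodule.mem_orthogonal _ _).1 hwB _ (Submodule.starProjection_apply_mem _ _),
      add_zero, inner_self_eq_norm_sq_to_K]
    push_cast; rfl
  have horth : ∀ i j, i ≠ j → ⟪π (g i) w, π (g j) w⟫_ℂ = 0 := by
    intro i j hij
    have e : ⟪π (g i) w, π (g j) w⟫_ℂ = ⟪π ((g j)⁻¹ * g i) w, w⟫_ℂ := by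
      rw [pi_mul_apply, inner_pi π (g j)⁻¹, inv_inv]
    rw [e]
    refine ortho_main π 𝒩 hab N T hN hmono K _ (hg j i hij.symm) ?_ w w hwB hwB
    have := hg i j hij
    simpa only [mul_inv_rev, inv_inv] using this
  have hsum : ‖∑ i, π (g i) w‖ ^ 2 = 16 * ‖w‖ ^ 2 := by
    have : ⟪∑ i, π (g i) w, ∑ i, π (g i) w⟫_ℂ = ((16 * ‖w‖ ^ 2 : ℝ) : ℂ) := by
      rw [sum_inner]
      have : ∀ i ∈ Finset.univ, ⟪π (g i) w, ∑ j, π (g j) w⟫_ℂ = ((‖w‖ ^ 2 : ℝ) : ℂ) := by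
        intro i _
        rw [inner_sum, Finset.sum_eq_single i]
        · rw [LinearIsometryEquiv.inner_map_map, inner_self_eq_norm_sq_to_K]; push_cast; rfl
        · intro j _ hj; exact horth i j hj.symm
        · simp
      rw [Finset.sum_congr rfl this]
      simp
    rw [inner_self_eq_norm_sq_to_K] at this
    have h2 := congrArg Complex.re this
    norm_cast at h2
  have hsum' : ‖∑ i, π (g i) w‖ = 4 * ‖w‖ := by
    have h1 : ‖∑ i, π (g i) w‖ ^ 2 = (4 * ‖w‖) ^ 2 := by rw [hsum]; ring
    exact (pow_left_inj₀ (norm_nonneg _) (by positivity) two_ne_zero).1 h1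
  have hlow : ∀ i, ‖w‖ ^ 2 - 1 / 16 * ‖w‖ ≤ (⟪v, π (g i) w⟫_ℂ).re := by
    intro i
    have e : ⟪v, π (g i) w⟫_ℂ = ⟪v, w⟫_ℂ - ⟪π (g i) v - v, π (g i) w⟫_ℂ := by
      rw [inner_sub_left, LinearIsometryEquiv.inner_map_map]; ring
    rw [e, hvw, Complex.sub_re, Complex.ofReal_re]
    have : (⟪π (g i) v - v, π (g i) w⟫_ℂ).re ≤ 1 / 16 * ‖w‖ := by
      refine (Complex.re_le_norm _).trans ((norm_inner_le_norm _ _).trans ?_)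
      rw [LinearIsometryEquiv.norm_map]
      exact mul_le_mul_of_nonneg_right (hvg i) (norm_nonneg _)
    linarith
  have hup : (⟪v, ∑ i, π (g i) w⟫_ℂ).re ≤ 4 * ‖w‖ := by
    refine (Complex.re_le_norm _).trans ((norm_inner_le_norm _ _).trans ?_)
    rw [hv, hsum', one_mul]
  have hlow' : 16 * (‖w‖ ^ 2 - 1 / 16 * ‖w‖) ≤ (⟪v, ∑ i, π (g i) w⟫_ℂ).re := by
    rw [inner_sum, Complex.re_sum]
    calc _ = ∑ i : Fin 16, (‖w‖ ^ 2 - 1 / 16 * ‖w‖) := by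
          rw [Finset.sum_const]; simp
      _ ≤ _ := Finset.sum_le_sum fun i _ => hlow i
  by_contra hcon
  push Not at hcon
  nlinarith

theorem iSup_pres [CompleteSpace V] (U : Submodule ℂ V) [U.HasOrthogonalProjection]
    (B : ℕ → Submodule ℂ V) (h : ∀ k, ∀ x ∈ B k, U.starProjection x ∈ B k) :
    ∀ x ∈ (⨆ k, B k), U.starProjection x ∈ (⨆ k, B k) := by
  have : (⨆ k, B k) ≤ (⨆ k, B k).comap (U.starProjection : V →ₗ[ℂ] V) :=
    iSup_le fun k x hx => (le_iSup B k) (h k x hx)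
  exact fun x hx => this hx

/-- The abstract ping-pong lemma. -/
theorem hilbert_main [CompleteSpace V] (π : Γ →* (V ≃ₗᵢ[ℂ] V)) (𝒩 : Subgroup Γ) [𝒩.Normal]
    (hab : ∀ a ∈ 𝒩, ∀ b ∈ 𝒩, a * b = b * a)
    (N T T' : ℕ → Set Γ) (hN : ∀ k, N k ⊆ 𝒩) (hT : ∀ k, T k ⊆ 𝒩) (hT' : ∀ k, T' k ⊆ 𝒩)
    (hmono : Monotone N) (hNT : ∀ k, N k ⊆ T k ∪ T' k)
    (K : ℕ) (g g' : Fin 16 → Γ)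
    (hg : ∀ i j, i ≠ j → ∀ h, K ≤ h → ∀ x ∈ T (h + 1),
      x ∈ Subgroup.closure (N h ∪ (fun a => ((g i)⁻¹ * g j) * a * ((g i)⁻¹ * g j)⁻¹) '' N h))
    (hg' : ∀ i j, i ≠ j → ∀ h, K ≤ h → ∀ x ∈ T' (h + 1),
      x ∈ Subgroup.closure (N h ∪ (fun a => ((g' i)⁻¹ * g' j) * a * ((g' i)⁻¹ * g' j)⁻¹) '' N h))
    (v : V) (hv : ‖v‖ = 1) (hvg : ∀ i, ‖π (g i) v - v‖ ≤ 1 / 16)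
    (hvg' : ∀ i, ‖π (g' i) v - v‖ ≤ 1 / 16)
    (hvK : ‖v - (FixS π (N K)).starProjection v‖ ≤ 1 / 8) :
    ∃ z : V, z ≠ 0 ∧ ∀ k, z ∈ FixS π (N k) := by
  set B := (⨆ k, BS π N T K k) with hB
  set C := (⨆ k, BS π N T' K k) with hC
  have b1 : ‖v - Bᗮ.starProjection v‖ ≤ 5 / 16 :=
    small_part π 𝒩 hab N T hN hmono K g hg v hv hvg
  have b2 : ‖v - Cᗮ.starProjection v‖ ≤ 5 / 16 :=
    small_part π 𝒩 hab N T' hN hmono K g' hg' v hv hvg'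
  have fixC : ∀ A : Set Γ, A ⊆ 𝒩 → ∀ x ∈ FixS π A, Cᗮ.starProjection x ∈ FixS π A := by
    intro A hA
    apply pres_symm
    apply pres_orth
    apply iSup_pres
    rintro k x ⟨hx1, hx2⟩
    refine ⟨FixS_pres π _ _ (fun a ha b hb => hab a (hA ha) b (hN _ hb)) x hx1, ?_⟩
    exact pres_orth _ _ (FixS_pres π _ _ (fun a ha b hb => hab a (hA ha) b (hT' _ hb))) x hx2
  have CB : ∀ x ∈ Bᗮ, Cᗮ.starProjection x ∈ Bᗮ := by
    apply pres_orth
    apply iSup_pres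
    rintro k x ⟨hx1, hx2⟩
    exact ⟨fixC _ (hN _) x hx1, pres_orth _ _ (fixC _ (hT _)) x hx2⟩
  set y := Cᗮ.starProjection (Bᗮ.starProjection v) with hy
  have yB : y ∈ Bᗮ := CB _ (Submodule.starProjection_apply_mem _ _)
  have yC : y ∈ Cᗮ := Submodule.starProjection_apply_mem _ _
  set F := FixS π (N K) with hF
  set z := F.starProjection y with hz
  have BF : B ≤ F := iSup_le fun k x hx => FixS_anti π (hmono (by omega)) hx.1
  have CF : C ≤ F := iSup_le fun k x hx => FixS_anti π (hmono (by omega)) hx.1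
  have zorth : ∀ D : Submodule ℂ V, D ≤ F → y ∈ Dᗮ → z ∈ Dᗮ := by
    intro D hD hyD
    rw [Submodule.mem_orthogonal] at hyD ⊢
    intro u hu
    rw [hz, ← Submodule.inner_starProjection_left_eq_right,
      Submodule.starProjection_eq_self_iff.2 (hD hu)]
    exact hyD u hu
  have zB := zorth B BF yB
  have zC := zorth C CF yC
  have step : ∀ (S : ℕ → Set Γ) (k : ℕ), (∀ k, S k ⊆ 𝒩) → z ∈ (⨆ k, BS π N S K k)ᗮ →
      z ∈ FixS π (N (K + k)) → z ∈ FixS π (S (K + k + 1)) := by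
    intro S k hS hzS hzk
    set P := FixS π (S (K + k + 1))
    have m1 : z - P.starProjection z ∈ BS π N S K k := by
      refine ⟨Submodule.sub_mem _ hzk ?_, Submodule.sub_starProjection_mem_orthogonal z⟩
      exact FixS_pres π _ _ (fun a ha b hb => hab a (hS _ ha) b (hN _ hb)) z hzk
    have m2 : ⟪z - P.starProjection z, z⟫_ℂ = 0 :=
      (Submodule.mem_orthogonal _ _).1 hzS _ (le_iSup (BS π N S K) k m1)
    have m3 : ⟪z - P.starProjection z, P.starProjection z⟫_ℂ = 0 :=
      Submodule.starProjection_inner_eq_zero z _ (Submodule.starProjection_apply_mem _ _)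
    have m4 : ⟪z - P.starProjection z, z - P.starProjection z⟫_ℂ = 0 := by
      rw [inner_sub_right, m2, m3, sub_zero]
    rw [inner_self_eq_zero, sub_eq_zero] at m4
    exact Submodule.starProjection_eq_self_iff.1 m4.symm
  have zfix : ∀ k, z ∈ FixS π (N (K + k)) := by
    intro k
    induction k with
    | zero => exact Submodule.starProjection_apply_mem _ _
    | succ k ih =>
      intro a ha
      rcases hNT _ ha with h | h
      · exact step T k hT zB ih a h
      · exact step T' k hT' zC ih a h
  refine ⟨z, ?_, fun k => FixS_anti π (hmono (by omega)) (zfix k)⟩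
  intro hz0
  have c1 : ‖v - y‖ ≤ 5 / 8 := by
    have : v - y = (v - Cᗮ.starProjection v) + Cᗮ.starProjection (v - Bᗮ.starProjection v) := by
      rw [map_sub]; abel
    rw [this]
    refine (norm_add_le _ _).trans ?_
    have := Cᗮ.norm_starProjection_apply_le (v - Bᗮ.starProjection v)
    linarith
  have c2 : ‖v - z‖ ≤ 3 / 4 := by
    have : v - z = (v - F.starProjection v) + F.starProjection (v - y) := by
      rw [map_sub]; abel
    rw [this]
    refine (norm_add_le _ _).trans ?_
    have := F.norm_starProjection_apply_le (v - y)
    linarith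
  rw [hz0, sub_zero, hv] at c2
  norm_num at c2

end Hilb

section Restr
variable {Γ V : Type} [Group Γ] [NormedAddCommGroup V] [InnerProductSpace ℂ V]

/-- Restriction of a unitary representation to an invariant subspace. -/
def restrRep (π : Γ →* (V ≃ₗᵢ[ℂ] V)) (W : Submodule ℂ V)
    (hW : ∀ g, ∀ x ∈ W, π g x ∈ W) : Γ →* (W ≃ₗᵢ[ℂ] W) where
  toFun g :=
    { toFun := fun x => ⟨π g x, hW g x x.2⟩
      invFun := fun x => ⟨π g⁻¹ x, hW g⁻¹ x x.2⟩
      map_add' := fun x y => by ext; simp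
      map_smul' := fun c x => by ext; simp
      left_inv := fun x => by ext; exact pi_inv_apply π g x
      right_inv := fun x => by ext; exact pi_apply_inv π g x
      norm_map' := fun x => (π g).norm_map x }
  map_one' := by ext x; simp
  map_mul' g h := by
    ext x
    exact pi_mul_apply π g h x

theorem restrRep_apply (π : Γ →* (V ≃ₗᵢ[ℂ] V)) (W : Submodule ℂ V)
    (hW : ∀ g, ∀ x ∈ W, π g x ∈ W) (g : Γ) (x : W) :
    ((restrRep π W hW g x : W) : V) = π g x := rfl

theorem FixS_normal (π : Γ →* (V ≃ₗᵢ[ℂ] V)) (𝒩 : Subgroup Γ) [h𝒩 : 𝒩.Normal] (g : Γ) :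
    ∀ x ∈ FixS π (𝒩 : Set Γ), π g x ∈ FixS π (𝒩 : Set Γ) := by
  intro x hx a ha
  have h1 : g⁻¹ * a * g ∈ 𝒩 := by
    simpa using h𝒩.conj_mem a ha g⁻¹
  have h2 := hx _ h1
  rw [pi_mul_apply, pi_mul_apply] at h2
  conv_rhs => rw [← h2]
  rw [pi_apply_inv]

theorem proj_sub_le (W : Submodule ℂ V) [W.HasOrthogonalProjection] (v u : V) (hu : u ∈ W) :
    ‖v - W.starProjection v‖ ≤ ‖v - u‖ := by
  have : v - W.starProjection v = Wᗮ.starProjection (v - u) := by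
    rw [Submodule.starProjection_orthogonal_val, map_sub, Submodule.starProjection_eq_self_iff.2 hu]
    abel
  rw [this]
  exact Submodule.norm_starProjection_apply_le _ _

theorem near_union [CompleteSpace V] (π : Γ →* (V ≃ₗᵢ[ℂ] V)) (A A' A'' : Set Γ)
    (hc : ∀ a ∈ A, ∀ b ∈ A', a * b = b * a) (hs : ∀ x ∈ A'', x ∈ Subgroup.closure (A ∪ A'))
    (v : V) (c d : ℝ) (h1 : ‖v - (FixS π A).starProjection v‖ ≤ c)
    (h2 : ‖v - (FixS π A').starProjection v‖ ≤ d) :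
    ‖v - (FixS π A'').starProjection v‖ ≤ c + d := by
  set P := FixS π A
  set Q := FixS π A'
  have m1 : P.starProjection (Q.starProjection v) ∈ FixS π A :=
    Submodule.starProjection_apply_mem _ _
  have m2 : P.starProjection (Q.starProjection v) ∈ FixS π A' :=
    FixS_pres π A A' hc _ (Submodule.starProjection_apply_mem _ _)
  have m3 : P.starProjection (Q.starProjection v) ∈ FixS π A'' := by
    intro x hx
    refine FixS_closure π _ _ ?_ x (hs x hx)
    rintro b (hb | hb)
    · exact m1 b hb
    · exact m2 b hb
  refine (proj_sub_le _ v _ m3).trans ?_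
  have : v - P.starProjection (Q.starProjection v)
      = (v - P.starProjection v) + P.starProjection (v - Q.starProjection v) := by
    rw [map_sub]; abel
  rw [this]
  refine (norm_add_le _ _).trans ?_
  have := P.norm_starProjection_apply_le (v - Q.starProjection v)
  linarith

end Restr

theorem relT_quant {H N : Type} [Group H] [Group N] (φ : H →* MulAut N)
    (S : Finset (N ⋊[φ] H)) (ε : ℝ)
    (hS : ∀ (V : Type) [NormedAddCommGroup V] [InnerProductSpace ℂ V] [CompleteSpace V],
      ∀ (π : (N ⋊[φ] H) →* (V ≃ₗᵢ[ℂ] V)),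
        (∃ v : V, ‖v‖ = 1 ∧ ∀ s ∈ S, ‖π s v - v‖ < ε) →
        ∃ v : V, v ≠ 0 ∧ ∀ x : N, π (SemidirectProduct.inl x) v = v)
    {V : Type} [NormedAddCommGroup V] [InnerProductSpace ℂ V] [CompleteSpace V]
    (π : (N ⋊[φ] H) →* (V ≃ₗᵢ[ℂ] V)) (v : V) (δ : ℝ) (hδ : 0 < δ)
    (hv : ∀ s ∈ S, ‖π s v - v‖ < ε * δ) :
    ‖v - (FixS π (Set.range (SemidirectProduct.inl : N →* N ⋊[φ] H))).starProjection v‖ ≤ δ := by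
  by_contra hcon
  push Not at hcon
  have hnorm : ((SemidirectProduct.inl : N →* N ⋊[φ] H).range).Normal := by
    rw [SemidirectProduct.range_inl_eq_ker_rightHom]; infer_instance
  have hinv : ∀ g, ∀ x ∈ FixS π (Set.range (SemidirectProduct.inl : N →* N ⋊[φ] H)),
      π g x ∈ FixS π (Set.range (SemidirectProduct.inl : N →* N ⋊[φ] H)) := by
    intro g
    have := FixS_normal π (SemidirectProduct.inl : N →* N ⋊[φ] H).range g
    simpa using this
  set F := FixS π (Set.range (SemidirectProduct.inl : N →* N ⋊[φ] H)) with hF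
  have hinv' : ∀ g, ∀ x ∈ Fᗮ, π g x ∈ Fᗮ := fun g => pi_orth π F g (hinv g⁻¹)
  set w := v - F.starProjection v with hw
  have hwF : w ∈ Fᗮ := Submodule.sub_starProjection_mem_orthogonal v
  have hw0 : 0 < ‖w‖ := hδ.trans hcon
  obtain ⟨z, hz0, hz⟩ := hS Fᗮ (restrRep π Fᗮ hinv') ⟨((‖w‖⁻¹ : ℝ) : ℂ) • ⟨w, hwF⟩, by
    rw [norm_smul]
    simp only [Complex.norm_real, norm_inv, norm_norm, Submodule.coe_norm]
    exact inv_mul_cancel₀ hw0.ne', by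
    intro s hs
    rw [map_smul, ← smul_sub, norm_smul]
    simp only [Complex.norm_real, norm_inv, norm_norm, Submodule.coe_norm, Submodule.coe_sub,
      restrRep_apply]
    have e : π s w - w = Fᗮ.starProjection (π s v - v) := by
      have e1 : F.starProjection (π s v) = π s (F.starProjection v) :=
        proj_FixS_pi π _ s (hinv s) (hinv s⁻¹) v
      rw [Submodule.starProjection_orthogonal_val, map_sub F.starProjection, e1, hw, map_sub]
      abel
    have h1 : ‖π s w - w‖ < ε * δ := by
      rw [e]; exact (Submodule.norm_starProjection_apply_le _ _).trans_lt (hv s hs)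
    have hε : 0 < ε := by
      have := (norm_nonneg _).trans_lt h1
      exact (pos_iff_pos_of_mul_pos this).2 hδ
    rw [inv_mul_lt_iff₀ hw0, mul_comm]
    exact h1.trans (mul_lt_mul_of_pos_left hcon hε)⟩
  have hzF : (z : V) ∈ F := by
    rintro _ ⟨x, rfl⟩
    have := congrArg (Subtype.val) (hz x)
    exact this
  have : ((z : V)) = 0 := by
    have := F.orthogonal_disjoint.le_bot (show (z : V) ∈ F ⊓ Fᗮ from ⟨hzF, z.2⟩)
    simpa using this
  exact hz0 (Subtype.ext this)

section Alg
open MvPolynomial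

variable {R : Type} [CommRing R]

/-- The element `f X_a X_j^2` of `V4`. -/
noncomputable def mon (a j : Fin 2) (f : R) : V4 R :=
  ⟨C f * X a * X j ^ 2, by
    have h1 := ((isHomogeneous_C (Fin 2) f).mul (isHomogeneous_X R a)).mul
      ((isHomogeneous_X R j).pow 2)
    simpa using h1⟩

theorem mon_coe (a j : Fin 2) (f : R) :
    ((mon a j f : V4 R) : MvPolynomial (Fin 2) R) = C f * X a * X j ^ 2 := rfl

theorem mon_add (a j : Fin 2) (f g : R) : mon a j (f + g) = mon a j f + mon a j g := by
  apply Subtype.ext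
  simp only [mon_coe, Submodule.coe_add, C_add]
  ring

theorem mon_zero (a j : Fin 2) : mon a j (0 : R) = 0 := by
  apply Subtype.ext
  simp [mon_coe]

theorem mon_all (P : V4 R) (L : AddSubgroup (V4 R)) (hL : ∀ a j f, mon a j f ∈ L) : P ∈ L := by
  have key : ∀ (s : Finset (Fin 2 →₀ ℕ)), s ⊆ P.1.support →
      (∑ m ∈ s, monomial m (coeff m P.1)) ∈ L.map (V4 R).subtype.toAddMonoidHom := by
    intro s hs
    refine AddSubgroup.sum_mem _ fun m hm => ?_
    have hdeg : m 0 + m 1 = 3 := by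
      have h1 := P.2 (mem_support_iff.1 (hs hm))
      rw [Finsupp.weight_apply] at h1
      simpa [Finsupp.sum_fintype] using h1
    have hmon : monomial m (coeff m P.1) = C (coeff m P.1) * (X 0 ^ m 0 * X 1 ^ m 1) := by
      rw [monomial_eq, Finsupp.prod_fintype _ _ (by simp)]
      simp
    have hc : m 0 = 0 ∨ m 0 = 1 ∨ m 0 = 2 ∨ m 0 = 3 := by omega
    rcases hc with h | h | h | h
    · refine ⟨mon 1 1 (coeff m P.1), hL _ _ _, ?_⟩
      have h' : m 1 = 3 := by omega
      change C _ * _ * _ = _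
      rw [hmon, h, h']; ring
    · refine ⟨mon 0 1 (coeff m P.1), hL _ _ _, ?_⟩
      have h' : m 1 = 2 := by omega
      change C _ * _ * _ = _
      rw [hmon, h, h']; ring
    · refine ⟨mon 1 0 (coeff m P.1), hL _ _ _, ?_⟩
      have h' : m 1 = 1 := by omega
      change C _ * _ * _ = _
      rw [hmon, h, h']; ring
    · refine ⟨mon 0 0 (coeff m P.1), hL _ _ _, ?_⟩
      have h' : m 1 = 0 := by omega
      change C _ * _ * _ = _
      rw [hmon, h, h']; ring
  obtain ⟨Q, hQ, hQP⟩ := key _ le_rfl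
  rw [← as_sum] at hQP
  have : Q = P := Subtype.ext hQP
  rwa [← this]

theorem elem12_mem (s : R) : elem12 R s ∈ EL2 R :=
  Subgroup.subset_closure (Or.inl ⟨s, rfl⟩)

theorem elem21_mem (s : R) : elem21 R s ∈ EL2 R :=
  Subgroup.subset_closure (Or.inr ⟨s, rfl⟩)

theorem elem12_add (s t : R) : elem12 R s * elem12 R t = elem12 R (s + t) := by
  apply Subtype.ext
  change !![1, s; 0, 1] * !![1, t; 0, 1] = !![1, s + t; 0, 1]
  rw [Matrix.mul_fin_two]; simp [add_comm]

theorem elem21_add (s t : R) : elem21 R s * elem21 R t = elem21 R (s + t) := by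
  apply Subtype.ext
  change !![1, 0; s, 1] * !![1, 0; t, 1] = !![1, 0; s + t, 1]
  rw [Matrix.mul_fin_two]; simp

theorem elem12_sub (s t : R) : (elem12 R s)⁻¹ * elem12 R t = elem12 R (t - s) := by
  rw [inv_mul_eq_iff_eq_mul, elem12_add]; congr 1; ring

theorem elem21_sub (s t : R) : (elem21 R s)⁻¹ * elem21 R t = elem21 R (t - s) := by
  rw [inv_mul_eq_iff_eq_mul, elem21_add]; congr 1; ring

/-- The generic elementary move: `X_i ↦ X_i + s X_j`. -/
theorem move_aux {A : Type} [CommRing A] (i j : Fin 2) (s : Polynomial A)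
    (p u : Polynomial A) (hp : p.Monic) (hu : u.natDegree = 0) (huu : u * u = 1) (hs : s = u * p)
    (act : V4 (Polynomial A) → V4 (Polynomial A))
    (hact : ∀ a b f, ((act (mon a b f) : V4 (Polynomial A)) :
        MvPolynomial (Fin 2) (Polynomial A)) =
      C f * (X a + if a = i then C s * X j else 0) * (X b + if b = i then C s * X j else 0) ^ 2)
    (hij : i ≠ j) (h : ℕ) (hm : 1 ≤ p.natDegree) (hh : 2 * p.natDegree ≤ h)
    (L : AddSubgroup (V4 (Polynomial A)))
    (hL : ∀ a b (f : Polynomial A), f.natDegree < h → mon a b f ∈ L)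
    (hL' : ∀ a b (f : Polynomial A), f.natDegree < h → act (mon a b f) ∈ L)
    (a : Fin 2) (f : Polynomial A) (hf : f.natDegree < h + 1) : mon a j f ∈ L := by
  have hp1 : p ≠ 1 := by rintro rfl; simp at hm
  have hp2 : (p ^ 2).Monic := hp.pow 2
  have hd2 : (p ^ 2).natDegree = 2 * p.natDegree := hp.natDegree_pow 2
  have hp21 : p ^ 2 ≠ 1 := by intro hc; rw [hc] at hd2; simp at hd2; omega
  have ha : a = i ∨ a = j := by omega
  rcases ha with rfl | rfl
  · set q := f /ₘ p ^ 2 with hq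
    set r := f %ₘ p ^ 2 with hr
    have hfe : f = r + p ^ 2 * q := (Polynomial.modByMonic_add_div f (p ^ 2)).symm
    have hrd : r.natDegree < h :=
      (Polynomial.natDegree_modByMonic_lt f hp2 hp21).trans_le (by omega)
    have hqd : q.natDegree + 2 * p.natDegree ≤ h ∨ q.natDegree = 0 := by
      have := Polynomial.natDegree_divByMonic f hp2
      rw [← hq, hd2] at this
      omega
    have hqd' : q.natDegree < h := by omega
    have hqs : (q * s).natDegree < h := by
      have h1 : (q * s).natDegree ≤ q.natDegree + s.natDegree := Polynomial.natDegree_mul_le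
      have h2 : s.natDegree ≤ u.natDegree + p.natDegree := hs ▸ Polynomial.natDegree_mul_le
      omega
    have hid : mon a j f = mon a j r + (act (mon a a q) - mon a a q
        - mon j a (q * s) - mon j a (q * s) - act (mon j a (q * s))) := by
      have hpp : p ^ 2 = s ^ 2 := by rw [hs]; linear_combination (-p ^ 2) * huu
      apply Subtype.ext
      rw [hfe, hpp]
      simp only [Submodule.coe_add, AddSubgroupClass.coe_sub, hact, mon_coe, if_true,
        if_neg hij.symm, C_add, C_mul, C_pow]
      ring
    rw [hid]
    exact L.add_mem (hL _ _ _ hrd) (L.sub_mem (L.sub_mem (L.sub_mem (L.sub_mem (hL' _ _ _ hqd')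
      (hL _ _ _ hqd')) (hL _ _ _ hqs)) (hL _ _ _ hqs)) (hL' _ _ _ hqs))
  · set q := f /ₘ p with hq
    set r := f %ₘ p with hr
    have hfe : f = r + p * q := (Polynomial.modByMonic_add_div f p).symm
    have hrd : r.natDegree < h :=
      (Polynomial.natDegree_modByMonic_lt f hp hp1).trans_le (by omega)
    have hqd : (q * u).natDegree < h := by
      have := Polynomial.natDegree_divByMonic f hp
      have h1 : (q * u).natDegree ≤ q.natDegree + u.natDegree := Polynomial.natDegree_mul_le
      rw [← hq] at this
      omega
    have hid : mon a a f = mon a a r + (act (mon i a (q * u)) - mon i a (q * u)) := by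
      have hpp : p = u * s := by rw [hs]; linear_combination (-p) * huu
      apply Subtype.ext
      rw [hfe, hpp]
      simp only [Submodule.coe_add, AddSubgroupClass.coe_sub, hact, mon_coe, if_true,
        if_neg hij.symm, C_add, C_mul]
      ring
    rw [hid]
    exact L.add_mem (hL _ _ _ hrd) (L.sub_mem (hL' _ _ _ hqd) (hL _ _ _ hqd))

theorem subst_elem12 (s f : R) (a b : Fin 2) :
    substAction R (elem12 R s : Matrix (Fin 2) (Fin 2) R) (C f * X a * X b ^ 2) =
      C f * (X a + if a = 1 then C s * X 0 else 0) * (X b + if b = 1 then C s * X 0 else 0) ^ 2 := by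
  have hx : ∀ a : Fin 2, (∑ j : Fin 2, C ((elem12 R s : Matrix (Fin 2) (Fin 2) R) j a) *
      (X j : MvPolynomial (Fin 2) R)) = X a + if a = 1 then C s * X 0 else 0 := by
    intro a
    fin_cases a <;> simp [elem12, Fin.sum_univ_two, add_comm]
  simp only [substAction, map_mul, map_pow, aeval_X, hx]
  congr 2
  exact aeval_C _ _

theorem subst_elem21 (s f : R) (a b : Fin 2) :
    substAction R (elem21 R s : Matrix (Fin 2) (Fin 2) R) (C f * X a * X b ^ 2) =
      C f * (X a + if a = 0 then C s * X 1 else 0) * (X b + if b = 0 then C s * X 1 else 0) ^ 2 := by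
  have hx : ∀ a : Fin 2, (∑ j : Fin 2, C ((elem21 R s : Matrix (Fin 2) (Fin 2) R) j a) *
      (X j : MvPolynomial (Fin 2) R)) = X a + if a = 0 then C s * X 1 else 0 := by
    intro a
    fin_cases a <;> simp [elem21, Fin.sum_univ_two]
  simp only [substAction, map_mul, map_pow, aeval_X, hx]
  congr 2
  exact aeval_C _ _

/-- The inclusion `EL2 R → EL2 R[t]`. -/
noncomputable def elIncl : EL2 R →* EL2 (Polynomial R) :=
  ((Matrix.SpecialLinearGroup.map (Polynomial.C : R →+* Polynomial R)).comp
    (EL2 R).subtype).codRestrict (EL2 (Polynomial R)) (by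
    rintro ⟨g, hg⟩
    change Matrix.SpecialLinearGroup.map (Polynomial.C : R →+* Polynomial R) g ∈ _
    rw [← Subgroup.mem_comap]
    refine (Subgroup.closure_le _).2 ?_ hg
    rintro _ (⟨s, rfl⟩ | ⟨s, rfl⟩)
    · have : Matrix.SpecialLinearGroup.map (Polynomial.C : R →+* Polynomial R) (elem12 R s) =
          elem12 _ (Polynomial.C s) := by
        apply Subtype.ext
        change (!![1, s; 0, 1]).map Polynomial.C = !![1, Polynomial.C s; 0, 1]
        refine Matrix.ext fun i j => ?_
        fin_cases i <;> fin_cases j <;> simp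
      change _ ∈ EL2 _
      rw [this]
      exact elem12_mem _
    · have : Matrix.SpecialLinearGroup.map (Polynomial.C : R →+* Polynomial R) (elem21 R s) =
          elem21 _ (Polynomial.C s) := by
        apply Subtype.ext
        change (!![1, 0; s, 1]).map Polynomial.C = !![1, 0; Polynomial.C s, 1]
        refine Matrix.ext fun i j => ?_
        fin_cases i <;> fin_cases j <;> simp
      change _ ∈ EL2 _
      rw [this]
      exact elem21_mem _)

theorem elIncl_apply (g : EL2 R) (i j : Fin 2) :
    ((elIncl g : Matrix.SpecialLinearGroup (Fin 2) (Polynomial R)) :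
      Matrix (Fin 2) (Fin 2) (Polynomial R)) i j =
    Polynomial.C (((g : Matrix.SpecialLinearGroup (Fin 2) R) : Matrix (Fin 2) (Fin 2) R) i j) := rfl

theorem map_mem (P : V4 R) : MvPolynomial.map Polynomial.C P.1 ∈ V4 (Polynomial R) := by
  have : (P.1).IsHomogeneous 3 := P.2
  exact this.map _

/-- The map `P ↦ t^k P` from `V4 R` to `V4 R[t]`. -/
noncomputable def vIncl (k : ℕ) : V4 R →+ V4 (Polynomial R) where
  toFun P := ((Polynomial.X : Polynomial R) ^ k) • ⟨MvPolynomial.map Polynomial.C P.1, map_mem P⟩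
  map_zero' := by
    apply Subtype.ext; simp
  map_add' P Q := by
    apply Subtype.ext; simp

theorem vIncl_coe (k : ℕ) (P : V4 R) : ((vIncl k P : V4 (Polynomial R)) :
    MvPolynomial (Fin 2) (Polynomial R)) =
      ((Polynomial.X : Polynomial R) ^ k) • MvPolynomial.map Polynomial.C P.1 := rfl

theorem vIncl_mon (k : ℕ) (a b : Fin 2) (r : R) :
    vIncl k (mon a b r) = mon a b (Polynomial.X ^ k * Polynomial.C r) := by
  apply Subtype.ext
  rw [vIncl_coe, mon_coe, mon_coe, MvPolynomial.smul_eq_C_mul]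
  simp only [map_mul, map_pow, MvPolynomial.map_C, MvPolynomial.map_X]
  ring

theorem subst_map (g : EL2 R) (k : ℕ) (P : MvPolynomial (Fin 2) R) :
    substAction (Polynomial R) ((elIncl g : Matrix.SpecialLinearGroup (Fin 2) (Polynomial R)) :
      Matrix (Fin 2) (Fin 2) (Polynomial R))
      (((Polynomial.X : Polynomial R) ^ k) • MvPolynomial.map Polynomial.C P) =
    ((Polynomial.X : Polynomial R) ^ k) • MvPolynomial.map Polynomial.C
      (substAction R ((g : Matrix.SpecialLinearGroup (Fin 2) R) : Matrix (Fin 2) (Fin 2) R) P) := by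
  rw [substAction, map_smul]
  congr 1
  rw [substAction]
  induction P using MvPolynomial.induction_on with
  | C r => rw [MvPolynomial.map_C, aeval_C, aeval_C]
           simp [MvPolynomial.algebraMap_eq]
  | add p q hp hq => simp only [map_add, hp, hq]
  | mul_X p i hp =>
    simp only [map_mul, hp, MvPolynomial.map_X, aeval_X]
    congr 1
    simp [elIncl_apply]

end Alg

section Final
open MvPolynomial

theorem diff_monic {R : Type} [CommRing R] [Nontrivial R] (i j : Fin 16) (hij : i ≠ j) :
    ∃ p u : Polynomial R, p.Monic ∧ u.natDegree = 0 ∧ u * u = 1 ∧ 1 ≤ p.natDegree ∧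
      2 * p.natDegree ≤ 32 ∧
      (Polynomial.X ^ (j.val + 1) - Polynomial.X ^ (i.val + 1) : Polynomial R) = u * p := by
  have key : ∀ a b : Fin 16, a < b →
      (Polynomial.X ^ (b.val + 1) - Polynomial.X ^ (a.val + 1) : Polynomial R).Monic ∧
      (Polynomial.X ^ (b.val + 1) - Polynomial.X ^ (a.val + 1) : Polynomial R).natDegree
        = b.val + 1 := by
    intro a b hab
    have hab' : a.val < b.val := hab
    constructor
    · apply Polynomial.monic_X_pow_sub
      rw [Polynomial.degree_X_pow]
      exact_mod_cast (by omega : a.val + 1 < b.val + 1)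
    · rw [Polynomial.natDegree_sub_eq_left_of_natDegree_lt]
      · simp
      · simp [hab']
  rcases lt_or_gt_of_ne hij with h | h
  · obtain ⟨h1, h2⟩ := key i j h
    refine ⟨_, 1, h1, by simp, by simp, ?_, ?_, by simp⟩ <;> rw [h2] <;> omega
  · obtain ⟨h1, h2⟩ := key j i h
    refine ⟨_, -1, h1, by simp, by simp, ?_, ?_, by ring⟩
    · rw [h2]; omega
    · rw [h2]; omega

variable {R : Type} [CommRing R]
  (ψ : EL2 (Polynomial R) →* MulAut (Multiplicative (V4 (Polynomial R))))

/-- Generators of one half of the filtration. -/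
def TS (j : Fin 2) (k : ℕ) : Set (Multiplicative (V4 (Polynomial R)) ⋊[ψ] EL2 (Polynomial R)) :=
  {x | ∃ (a : Fin 2) (f : Polynomial R), f.natDegree < k ∧
    x = SemidirectProduct.inl (Multiplicative.ofAdd (mon a j f))}

/-- Generators of the filtration. -/
def NS (k : ℕ) : Set (Multiplicative (V4 (Polynomial R)) ⋊[ψ] EL2 (Polynomial R)) :=
  TS ψ 0 k ∪ TS ψ 1 k

theorem mon_NS {k : ℕ} (a b : Fin 2) (f : Polynomial R) (hf : f.natDegree < k) :
    SemidirectProduct.inl (Multiplicative.ofAdd (mon a b f)) ∈ NS ψ k := by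
  fin_cases b
  · exact Or.inl ⟨a, f, hf, rfl⟩
  · exact Or.inr ⟨a, f, hf, rfl⟩

/-- Additive version of a subgroup generated by a set. -/
def LS (Z : Set (Multiplicative (V4 (Polynomial R)) ⋊[ψ] EL2 (Polynomial R))) :
    AddSubgroup (V4 (Polynomial R)) where
  carrier := {P | SemidirectProduct.inl (Multiplicative.ofAdd P) ∈ Subgroup.closure Z}
  add_mem' := by
    intro P Q hP hQ
    rw [Set.mem_setOf_eq, ofAdd_add, map_mul]
    exact mul_mem hP hQ
  zero_mem' := by
    rw [Set.mem_setOf_eq, ofAdd_zero, map_one]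
    exact one_mem _
  neg_mem' := by
    intro P hP
    rw [Set.mem_setOf_eq, ofAdd_neg, map_inv]
    exact inv_mem hP

theorem mem_LS (Z : Set (Multiplicative (V4 (Polynomial R)) ⋊[ψ] EL2 (Polynomial R)))
    (P : V4 (Polynomial R)) :
    P ∈ LS ψ Z ↔ SemidirectProduct.inl (Multiplicative.ofAdd P) ∈ Subgroup.closure Z := Iff.rfl

theorem move_closure (g : EL2 (Polynomial R)) (i j : Fin 2) (hij : i ≠ j) (s p u : Polynomial R)
    (hp : p.Monic) (hu : u.natDegree = 0) (huu : u * u = 1) (hs : s = u * p)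
    (hm : 1 ≤ p.natDegree) (hm' : 2 * p.natDegree ≤ 32)
    (hact : ∀ a b f, ((Multiplicative.toAdd (ψ g (Multiplicative.ofAdd (mon a b f))) :
        V4 (Polynomial R)) : MvPolynomial (Fin 2) (Polynomial R)) =
      C f * (X a + if a = i then C s * X j else 0) * (X b + if b = i then C s * X j else 0) ^ 2)
    (h : ℕ) (hh : 32 ≤ h) :
    ∀ x ∈ TS ψ j (h + 1), x ∈ Subgroup.closure (NS ψ h ∪
      (fun a => SemidirectProduct.inr g * a * (SemidirectProduct.inr g)⁻¹) '' NS ψ h) := by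
  rintro _ ⟨a, f, hf, rfl⟩
  rw [← mem_LS]
  refine move_aux i j s p u hp hu huu hs
    (fun P => Multiplicative.toAdd (ψ g (Multiplicative.ofAdd P))) hact hij h hm (by omega)
    _ ?_ ?_ a f hf
  · intro a b f hf
    exact Subgroup.subset_closure (Or.inl (mon_NS ψ a b f hf))
  · intro a b f hf
    refine Subgroup.subset_closure (Or.inr ⟨_, mon_NS ψ a b f hf, ?_⟩)
    simp only [ofAdd_toAdd]
    rw [SemidirectProduct.inl_aut, map_inv]

theorem relT_poly [Nontrivial R] (φ : EL2 R →* MulAut (Multiplicative (V4 R)))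
    (hφ : ∀ (g : EL2 R) (P : V4 R),
      ((Multiplicative.toAdd (φ g (Multiplicative.ofAdd P)) : V4 R) : MvPolynomial (Fin 2) R)
        = substAction R ((g : Matrix.SpecialLinearGroup (Fin 2) R) : Matrix (Fin 2) (Fin 2) R)
            (P : MvPolynomial (Fin 2) R))
    (hT : RelPropertyT φ)
    (hψ : ∀ (g : EL2 (Polynomial R)) (P : V4 (Polynomial R)),
      ((Multiplicative.toAdd (ψ g (Multiplicative.ofAdd P)) : V4 (Polynomial R))
          : MvPolynomial (Fin 2) (Polynomial R))
        = substAction (Polynomial R)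
            ((g : Matrix.SpecialLinearGroup (Fin 2) (Polynomial R)) :
              Matrix (Fin 2) (Fin 2) (Polynomial R))
            (P : MvPolynomial (Fin 2) (Polynomial R))) :
    RelPropertyT ψ := by
  classical
  obtain ⟨S, ε, hε, hS⟩ := hT
  let F : ℕ → (Multiplicative (V4 R) ⋊[φ] EL2 R →*
      Multiplicative (V4 (Polynomial R)) ⋊[ψ] EL2 (Polynomial R)) := fun k =>
    SemidirectProduct.map (AddMonoidHom.toMultiplicative (vIncl k)) elIncl (by
      intro g
      refine MonoidHom.ext fun P => ?_
      apply Multiplicative.toAdd.injective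
      apply Subtype.ext
      change ((vIncl k (Multiplicative.toAdd (φ g (Multiplicative.ofAdd (Multiplicative.toAdd P)))) :
        V4 (Polynomial R)) : MvPolynomial (Fin 2) (Polynomial R)) =
        ((Multiplicative.toAdd (ψ (elIncl g) (Multiplicative.ofAdd
          (vIncl k (Multiplicative.toAdd P)))) : V4 (Polynomial R)) :
            MvPolynomial (Fin 2) (Polynomial R))
      rw [hψ, vIncl_coe, hφ, vIncl_coe, subst_map])
  let g1 : Fin 16 → Multiplicative (V4 (Polynomial R)) ⋊[ψ] EL2 (Polynomial R) := fun i =>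
    SemidirectProduct.inr ⟨elem21 _ (Polynomial.X ^ (i.val + 1)), elem21_mem _⟩
  let g0 : Fin 16 → Multiplicative (V4 (Polynomial R)) ⋊[ψ] EL2 (Polynomial R) := fun i =>
    SemidirectProduct.inr ⟨elem12 _ (Polynomial.X ^ (i.val + 1)), elem12_mem _⟩
  refine ⟨((Finset.range 32).biUnion fun k => S.image (F k)) ∪ Finset.univ.image g0 ∪
    Finset.univ.image g1, min (1 / 16) (ε * (1 / 256)), by positivity, ?_⟩
  intro V _ _ _ π hv
  obtain ⟨v, hv1, hv⟩ := hv
  have hvF : ∀ k < 32, ∀ s ∈ S, ‖π (F k s) v - v‖ < ε * (1 / 256) := by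
    intro k hk s hs
    refine (hv (F k s) ?_).trans_le (min_le_right _ _)
    simp only [Finset.mem_union, Finset.mem_biUnion, Finset.mem_range, Finset.mem_image]
    exact Or.inl (Or.inl ⟨k, hk, s, hs, rfl⟩)
  have hv0 : ∀ i, ‖π (g0 i) v - v‖ ≤ 1 / 16 := by
    intro i
    refine ((hv (g0 i) ?_).trans_le (min_le_left _ _)).le
    simp
  have hv1' : ∀ i, ‖π (g1 i) v - v‖ ≤ 1 / 16 := by
    intro i
    refine ((hv (g1 i) ?_).trans_le (min_le_left _ _)).le
    simp
  clear hv
  set 𝒩 := (SemidirectProduct.inl : Multiplicative (V4 (Polynomial R)) →*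
    Multiplicative (V4 (Polynomial R)) ⋊[ψ] EL2 (Polynomial R)).range with h𝒩
  have hnorm : 𝒩.Normal := by
    rw [h𝒩, SemidirectProduct.range_inl_eq_ker_rightHom]; infer_instance
  have hab : ∀ a ∈ 𝒩, ∀ b ∈ 𝒩, a * b = b * a := by
    rintro _ ⟨a, rfl⟩ _ ⟨b, rfl⟩
    rw [← map_mul, ← map_mul, mul_comm]
  have hTS : ∀ j k, TS ψ j k ⊆ 𝒩 := by
    rintro j k _ ⟨a, f, _, rfl⟩
    exact ⟨_, rfl⟩
  have hNS : ∀ k, NS ψ k ⊆ 𝒩 := fun k => Set.union_subset (hTS 0 k) (hTS 1 k)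
  have hTmono : ∀ j, Monotone (TS ψ j) := by
    rintro j k l hkl _ ⟨a, f, hf, rfl⟩
    exact ⟨a, f, hf.trans_le hkl, rfl⟩
  have hmono : Monotone (NS ψ) := fun k l hkl =>
    Set.union_subset_union (hTmono 0 hkl) (hTmono 1 hkl)
  -- concentration
  have hconc1 : ∀ k < 32, ‖v - (FixS π (F k '' Set.range SemidirectProduct.inl)).starProjection v‖
      ≤ 1 / 256 := by
    intro k hk
    have := relT_quant φ S ε hS (π.comp (F k)) v (1 / 256) (by norm_num) (hvF k hk)
    refine (proj_sub_le _ v _ ?_).trans this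
    have h1 := (FixS (π.comp (F k)) (Set.range SemidirectProduct.inl)).starProjection_apply_mem v
    rintro _ ⟨b, hb, rfl⟩
    exact h1 b hb
  have hconc : ∀ k ≤ 32, ‖v - (FixS π (NS ψ k)).starProjection v‖ ≤ k * (1 / 256) := by
    intro k
    induction k with
    | zero =>
      intro _
      have : v ∈ FixS π (NS ψ 0) := by
        rintro a (⟨_, _, h, _⟩ | ⟨_, _, h, _⟩) <;> omega
      rw [Submodule.starProjection_eq_self_iff.2 this]
      simp
    | succ k ih =>
      intro hk
      have := near_union π (NS ψ k) (F k '' Set.range SemidirectProduct.inl) (NS ψ (k + 1))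
        ?_ ?_ v _ _ (ih (by omega)) (hconc1 k (by omega))
      · refine this.trans (le_of_eq ?_)
        push_cast; ring
      · rintro a ha _ ⟨_, ⟨b, rfl⟩, rfl⟩
        refine hab a (hNS _ ha) _ ⟨_, (SemidirectProduct.map_inl _ _ _ b).symm⟩
      · have key : ∀ (a j : Fin 2) (f : Polynomial R), f.natDegree < k + 1 →
            mon a j f ∈ LS ψ (NS ψ k ∪ F k '' Set.range SemidirectProduct.inl) := by
          intro a j f hf
          have hX : (Polynomial.X ^ k : Polynomial R).Monic := Polynomial.monic_X_pow k
          have hfe := (Polynomial.modByMonic_add_div f (Polynomial.X ^ k)).symm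
          have hq : (f /ₘ (Polynomial.X ^ k)).natDegree ≤ 0 := by
            rw [Polynomial.natDegree_divByMonic f hX, Polynomial.natDegree_X_pow]; omega
          rw [Polynomial.eq_C_of_natDegree_le_zero hq] at hfe
          rw [hfe, mon_add, ← vIncl_mon]
          refine AddSubgroup.add_mem _ ?_ ?_
          · rcases Nat.eq_zero_or_pos k with rfl | hk0
            · rw [pow_zero, Polynomial.modByMonic_one, mon_zero]
              exact AddSubgroup.zero_mem _
            · refine Subgroup.subset_closure (Or.inl (mon_NS ψ a j _ ?_))
              have := Polynomial.natDegree_modByMonic_lt f hX (by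
                intro hc
                have := congrArg Polynomial.natDegree hc
                rw [Polynomial.natDegree_X_pow, Polynomial.natDegree_one] at this
                omega)
              rwa [Polynomial.natDegree_X_pow] at this
          · exact Subgroup.subset_closure (Or.inr ⟨_, ⟨Multiplicative.ofAdd (mon a j _), rfl⟩,
              SemidirectProduct.map_inl _ _ _ _⟩)
        rintro _ (⟨a, f, hf, rfl⟩ | ⟨a, f, hf, rfl⟩)
        · exact key a 0 f hf
        · exact key a 1 f hf
  obtain ⟨z, hz0, hz⟩ := hilbert_main π 𝒩 hab (NS ψ) (TS ψ 0) (TS ψ 1) hNS (hTS 0) (hTS 1) hmono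
    (fun k => subset_rfl) 32 g0 g1
    (by
      intro i j hij h hh
      obtain ⟨p, u, h1, h2, h3, h4, h5, h6⟩ := diff_monic (R := R) i j hij
      have e : (g0 i)⁻¹ * g0 j = SemidirectProduct.inr ⟨elem12 _ (Polynomial.X ^ (j.val + 1) -
          Polynomial.X ^ (i.val + 1)), elem12_mem _⟩ := by
        simp only [g0]
        rw [← map_inv, ← map_mul]
        congr 1
        exact Subtype.ext (elem12_sub _ _)
      rw [e]
      refine move_closure ψ _ 1 0 (by decide) _ p u h1 h2 h3 h6 h4 h5 ?_ h hh
      intro a b f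
      rw [hψ, mon_coe]
      exact subst_elem12 _ _ _ _)
    (by
      intro i j hij h hh
      obtain ⟨p, u, h1, h2, h3, h4, h5, h6⟩ := diff_monic (R := R) i j hij
      have e : (g1 i)⁻¹ * g1 j = SemidirectProduct.inr ⟨elem21 _ (Polynomial.X ^ (j.val + 1) -
          Polynomial.X ^ (i.val + 1)), elem21_mem _⟩ := by
        simp only [g1]
        rw [← map_inv, ← map_mul]
        congr 1
        exact Subtype.ext (elem21_sub _ _)
      rw [e]
      refine move_closure ψ _ 0 1 (by decide) _ p u h1 h2 h3 h6 h4 h5 ?_ h hh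
      intro a b f
      rw [hψ, mon_coe]
      exact subst_elem21 _ _ _ _)
    v hv1 hv0 hv1' ((hconc 32 le_rfl).trans (by norm_num))
  refine ⟨z, hz0, fun x => ?_⟩
  have hz' : z ∈ FixS π (⋃ k, NS ψ k) := by
    intro a ha
    obtain ⟨k, hk⟩ := Set.mem_iUnion.1 ha
    exact hz k a hk
  refine FixS_closure π _ z hz' _ ?_
  have := mon_all (Multiplicative.toAdd x) (LS ψ (⋃ k, NS ψ k)) (fun a j f =>
    Subgroup.subset_closure (Set.mem_iUnion.2 ⟨f.natDegree + 1, mon_NS ψ a j f (by omega)⟩))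
  exact this

end Final

/-- Proposition A.5: relative property (T) passes from
(EL₂(R) ⋉ V₄(R), V₄(R)) to (EL₂(R[t]) ⋉ V₄(R[t]), V₄(R[t])) for
R = ℤ[x₁, …, x_l]. -/
theorem stmt_17 (l : ℕ)
    (φ : ↥(EL2 (MvPolynomial (Fin l) ℤ)) →*
      MulAut (Multiplicative ↥(V4 (MvPolynomial (Fin l) ℤ))))
    (hφ : ∀ (g : ↥(EL2 (MvPolynomial (Fin l) ℤ))) (P : ↥(V4 (MvPolynomial (Fin l) ℤ))),
      ((Multiplicative.toAdd (φ g (Multiplicative.ofAdd P))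
          : ↥(V4 (MvPolynomial (Fin l) ℤ))) : MvPolynomial (Fin 2) (MvPolynomial (Fin l) ℤ))
        = substAction (MvPolynomial (Fin l) ℤ)
            ((g : Matrix.SpecialLinearGroup (Fin 2) (MvPolynomial (Fin l) ℤ)) :
              Matrix (Fin 2) (Fin 2) (MvPolynomial (Fin l) ℤ))
            (P : MvPolynomial (Fin 2) (MvPolynomial (Fin l) ℤ)))
    (hT : RelPropertyT φ)
    (ψ : ↥(EL2 (Polynomial (MvPolynomial (Fin l) ℤ))) →*
      MulAut (Multiplicative ↥(V4 (Polynomial (MvPolynomial (Fin l) ℤ)))))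
    (hψ : ∀ (g : ↥(EL2 (Polynomial (MvPolynomial (Fin l) ℤ))))
        (P : ↥(V4 (Polynomial (MvPolynomial (Fin l) ℤ)))),
      ((Multiplicative.toAdd (ψ g (Multiplicative.ofAdd P))
          : ↥(V4 (Polynomial (MvPolynomial (Fin l) ℤ))))
          : MvPolynomial (Fin 2) (Polynomial (MvPolynomial (Fin l) ℤ)))
        = substAction (Polynomial (MvPolynomial (Fin l) ℤ))
            ((g : Matrix.SpecialLinearGroup (Fin 2) (Polynomial (MvPolynomial (Fin l) ℤ))) :
              Matrix (Fin 2) (Fin 2) (Polynomial (MvPolynomial (Fin l) ℤ)))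
            (P : MvPolynomial (Fin 2) (Polynomial (MvPolynomial (Fin l) ℤ)))) :
    RelPropertyT ψ := by
  exact relT_poly ψ φ hφ hT hψ
end
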